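/- arXiv:2604.14673 — 2 statements merged into one kernel-verified Lean document; each statement's English description precedes it below -/
import Mathlib

section
/- Let Γ be an unbalanced signed bipartite graph with partite sets of sizes r and s (3 ≤ r ≤ s) containing no negative 4-cycle. Then ρ(Γ) ≤ sqrt( ((r−1)(s−1)+2 + sqrt( ((r−1)(s−1)+2)² − 4(2s−3)(2r−3) )) / 2 ), with equality if and only if Γ is switching isomorphic to Γ_{r,s}. -/
open Matrix Finset

structure SignedGraph (V : Type*) where
  G : SimpleGraph V
  sign : V → V → ℝ
  sign_symm : ∀ u v, sign u v = sign v u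
  sign_edge : ∀ u v, G.Adj u v → sign u v = 1 ∨ sign u v = -1
  sign_nonedge : ∀ u v, ¬ G.Adj u v → sign u v = 0

def SignedGraph.adjMatrix {V : Type*} (Γ : SignedGraph V) : Matrix V V ℝ :=
  Matrix.of fun u v => Γ.sign u v

def SignedGraph.edgeSign {V : Type*} (Γ : SignedGraph V) : Sym2 V → ℝ :=
  Sym2.lift ⟨Γ.sign, Γ.sign_symm⟩

def SignedGraph.IsNegCycle {V : Type*} (Γ : SignedGraph V) {u : V}
    (w : Γ.G.Walk u u) : Prop :=
  w.IsCycle ∧ (w.edges.map Γ.edgeSign).prod = -1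

def SignedGraph.Unbalanced {V : Type*} (Γ : SignedGraph V) : Prop :=
  ∃ (u : V) (w : Γ.G.Walk u u), Γ.IsNegCycle w

/-- Sign of the edge between the `x`-th vertex of the `r`-side and the `y`-th vertex of the
`s`-side of `Γ_{r,s}`: index `r-1` on the left is `u₁`, index `0` on the left is `u`,
index `s-1` on the right is `v₁`, index `0` on the right is `v`. -/
def gammaSign (r s : ℕ) (x : Fin r) (y : Fin s) : ℝ :=
  if (x : ℕ) = r - 1 then (if (y : ℕ) = 0 then 1 else if (y : ℕ) = s - 1 then -1 else 0)
  else if (x : ℕ) = 0 then (if (y : ℕ) = 0 then 0 else 1)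
  else if (y : ℕ) = s - 1 then 0 else 1

/-- The adjacency matrix of the signed graph `Γ_{r,s}`. -/
def gammaMatrix (r s : ℕ) : Matrix (Fin r ⊕ Fin s) (Fin r ⊕ Fin s) ℝ :=
  Matrix.of fun a b =>
    match a, b with
    | Sum.inl x, Sum.inr y => gammaSign r s x y
    | Sum.inr y, Sum.inl x => gammaSign r s x y
    | _, _ => 0

/-- the quadratic polynomial data satisfied by `lam` -/
def LamOK (k n lam : ℝ) : Prop :=
  lam ^ 2 - ((k + 1) * (n + 1) + 2) * lam + (2 * k + 1) * (2 * n + 1) = 0 ∧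
  (n + 1) * (2 * k + 1) ≤ 2 * lam ∧ (k + 1) * (2 * n + 1) ≤ 2 * lam ∧
  ((k + 1) * (n + 1) + 2) - 4 < lam ∧ 0 < lam

lemma LamOK.symm {k n lam : ℝ} (h : LamOK k n lam) : LamOK n k lam := by
  obtain ⟨h1, h2, h3, h4, h5⟩ := h
  exact ⟨by linarith, by linarith, by linarith, by linarith, h5⟩

lemma lam_aux {m q t : ℝ} (h : t ^ 2 - m * t + q ≤ 0) :
    t ≤ (m + Real.sqrt (m ^ 2 - 4 * q)) / 2 ∧ 0 ≤ m ^ 2 - 4 * q := by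
  have h2 : (2 * t - m) ^ 2 ≤ m ^ 2 - 4 * q := by nlinarith
  constructor
  · have := Real.le_sqrt_of_sq_le h2
    linarith
  · nlinarith [sq_nonneg (2 * t - m)]

lemma lamOK_of (r s : ℝ) (hr : 3 ≤ r) (hs : 3 ≤ s) :
    LamOK (r - 2) (s - 2) ((((r - 1) * (s - 1) + 2) + Real.sqrt (((r - 1) * (s - 1) + 2) ^ 2
      - 4 * (2 * r - 3) * (2 * s - 3))) / 2) := by
  set m := (r - 1) * (s - 1) + 2 with hm
  rw [show 4 * (2 * r - 3) * (2 * s - 3) = 4 * ((2 * r - 3) * (2 * s - 3)) by ring]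
  have e1 : ((s - 1) * (2 * r - 3) / 2) ^ 2 - m * ((s - 1) * (2 * r - 3) / 2)
      + (2 * r - 3) * (2 * s - 3) ≤ 0 := by
    have : ((s - 1) * (2 * r - 3) / 2) ^ 2 - m * ((s - 1) * (2 * r - 3) / 2)
      + (2 * r - 3) * (2 * s - 3) = - ((2 * r - 3) * (s - 3) ^ 2 / 4) := by rw [hm]; ring
    rw [this]
    have : 0 ≤ (2 * r - 3) * (s - 3) ^ 2 := mul_nonneg (by linarith) (sq_nonneg _)
    linarith
  have e2 : ((r - 1) * (2 * s - 3) / 2) ^ 2 - m * ((r - 1) * (2 * s - 3) / 2)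
      + (2 * r - 3) * (2 * s - 3) ≤ 0 := by
    have : ((r - 1) * (2 * s - 3) / 2) ^ 2 - m * ((r - 1) * (2 * s - 3) / 2)
      + (2 * r - 3) * (2 * s - 3) = - ((2 * s - 3) * (r - 3) ^ 2 / 4) := by rw [hm]; ring
    rw [this]
    have : 0 ≤ (2 * s - 3) * (r - 3) ^ 2 := mul_nonneg (by linarith) (sq_nonneg _)
    linarith
  have e3 : (m - 4) ^ 2 - m * (m - 4) + (2 * r - 3) * (2 * s - 3) = 13 - 2 * r - 2 * s := by
    rw [hm]; ring
  obtain ⟨f1, hd⟩ := lam_aux e1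
  obtain ⟨f2, -⟩ := lam_aux e2
  set S := Real.sqrt (m ^ 2 - 4 * ((2 * r - 3) * (2 * s - 3))) with hS
  have hS0 : 0 ≤ S := Real.sqrt_nonneg _
  have hSS : S ^ 2 = m ^ 2 - 4 * ((2 * r - 3) * (2 * s - 3)) := Real.sq_sqrt hd
  have hlam : ((m + S) / 2) ^ 2 - m * ((m + S) / 2) + (2 * r - 3) * (2 * s - 3) = 0 := by
    nlinarith
  have hpos : 0 < (m + S) / 2 := by
    have : 0 < (r - 1) * (s - 1) := mul_pos (by linarith) (by linarith)
    linarith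
  refine ⟨?_, by linarith, by linarith, ?_, hpos⟩
  · linear_combination hlam + (m + S) / 2 * hm
  · rw [show (r - 2 + 1) * (s - 2 + 1) + 2 = m by rw [hm]; ring]
    by_contra hcon
    push Not at hcon
    have hS4 : 8 + S ≤ m := by linarith
    -- then `m - 4 ≥ lam`, but `p (m-4) > 0` can only happen when r+s<6.5
    have h6 : (m - 8) ^ 2 - S ^ 2 = 4 * (13 - 2 * r - 2 * s) := by rw [hSS]; linarith
    by_cases h7 : 13 < 2 * r + 2 * s
    · nlinarith
    · have hr' : r ≤ 7 / 2 := by linarith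
      have hs' : s ≤ 7 / 2 := by linarith
      nlinarith

/-- The quadratic form of `Γ_{r,s}`. -/
def GF {I J : Type*} [Fintype I] [Fintype J] (x : I → ℝ) (y : J → ℝ) (α α' : I) (β β' : J) : ℝ :=
  (∑ i, x i - x α) * (∑ j, y j - y β) - x α' * y β' + x α * y β' + x α' * y β - x α * y β

lemma GF_swap {I J : Type*} [Fintype I] [Fintype J] (x : I → ℝ) (y : J → ℝ) (α α' : I) (β β' : J) :
    GF x y α α' β β' = GF y x β β' α α' := by
  unfold GF; ring

lemma poly_bound {k n lam : ℝ} (hk : 1 ≤ k) (h : LamOK k n lam)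
    (p x' ξ : ℝ) :
    n * ((p + ξ) + (x' - ξ)) ^ 2 + (p + ξ) ^ 2 + (x' - ξ) ^ 2
      ≤ lam * (p ^ 2 / k + x' ^ 2 + ξ ^ 2) := by
  obtain ⟨h1, h2, h3, h4, h5⟩ := h
  set G := p + ξ with hG
  set H := x' - ξ with hH
  set D := 2 * k + 1 with hD
  have hDpos : 0 < D := by linarith
  have hk0 : 0 < k := by linarith
  set A := 2 * lam - (n + 1) * D with hA
  set B := lam - n * D with hB
  set C := (k + 1) * lam - (n + 1) * D with hC
  have hdet : A * C = B ^ 2 := by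
    rw [hA, hB, hC]; linear_combination D * h1
  have hA0 : 0 ≤ A := by linarith
  have hC0 : 0 ≤ C := by nlinarith
  have hq : 0 ≤ A * G ^ 2 + 2 * B * (G * H) + C * H ^ 2 := by
    rcases hA0.lt_or_eq with hA1 | hA1
    · have : 0 ≤ A * (A * G ^ 2 + 2 * B * (G * H) + C * H ^ 2) := by
        have : A * (A * G ^ 2 + 2 * B * (G * H) + C * H ^ 2) = (A * G + B * H) ^ 2 := by
          linear_combination H ^ 2 * hdet
        rw [this]; positivity
      exact nonneg_of_mul_nonneg_right this hA1
    · have hB0 : B = 0 := by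
        have : B ^ 2 = 0 := by rw [← hdet, ← hA1]; ring
        exact pow_eq_zero_iff (two_ne_zero) |>.1 this
      rw [← hA1, hB0]; nlinarith [mul_nonneg hC0 (sq_nonneg H)]
  have hid : lam * (p ^ 2 / k + x' ^ 2 + ξ ^ 2) - (n * (G + H) ^ 2 + G ^ 2 + H ^ 2)
      = (A * G ^ 2 + 2 * B * (G * H) + C * H ^ 2) / D
        + lam * (D / k) * (ξ - (G - k * H) / D) ^ 2 := by
    have hp : p = G - ξ := by rw [hG]; ring
    have hx : x' = H + ξ := by rw [hH]; ring
    rw [hp, hx, hA, hB, hC]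
    field_simp
    rw [hD]; ring
  have h6 : 0 ≤ (A * G ^ 2 + 2 * B * (G * H) + C * H ^ 2) / D := by positivity
  have h7 : 0 ≤ lam * (D / k) * (ξ - (G - k * H) / D) ^ 2 := by positivity
  linarith

lemma sum_split2 {I : Type*} [Fintype I] [DecidableEq I] (f : I → ℝ) {α α' : I} (h : α ≠ α') :
    ∑ i, f i = f α + f α' + ∑ i ∈ (univ.erase α).erase α', f i := by
  rw [← Finset.add_sum_erase univ f (mem_univ α),
    ← Finset.add_sum_erase (univ.erase α) f (a := α') (by simp [h.symm])]
  ring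

lemma card_split2 {I : Type*} [Fintype I] [DecidableEq I] {α α' : I} (h : α ≠ α') :
    ((((univ : Finset I).erase α).erase α').card : ℝ) = (Fintype.card I : ℝ) - 2 := by
  have := sum_split2 (fun _ : I => (1 : ℝ)) h
  simp only [sum_const, nsmul_eq_mul, mul_one, Finset.card_univ] at this
  linarith

lemma sq_split2 {I : Type*} [Fintype I] [DecidableEq I] (f : I → ℝ) {α α' : I} (h : α ≠ α')
    (hc : 3 ≤ Fintype.card I) :
    (∑ i, f i - f α - f α') ^ 2 / ((Fintype.card I : ℝ) - 2) + f α' ^ 2 + f α ^ 2 ≤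
      ∑ i, f i ^ 2 := by
  have hc' : (3 : ℝ) ≤ Fintype.card I := by exact_mod_cast hc
  rw [sum_split2 (fun i => f i ^ 2) h, sum_split2 f h]
  have := sq_sum_le_card_mul_sum_sq (s := ((univ : Finset I).erase α).erase α') (f := f)
  rw [card_split2 h] at this
  have h2 : (∑ i ∈ ((univ : Finset I).erase α).erase α', f i) ^ 2 / ((Fintype.card I : ℝ) - 2)
      ≤ ∑ i ∈ ((univ : Finset I).erase α).erase α', f i ^ 2 := by
    rw [div_le_iff₀ (by linarith)]; linarith
  rw [show f α + f α' + ∑ i ∈ ((univ : Finset I).erase α).erase α', f i - f α - f α'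
    = ∑ i ∈ ((univ : Finset I).erase α).erase α', f i by ring]
  linarith

lemma GF_le {I J : Type*} [Fintype I] [Fintype J] [DecidableEq I] [DecidableEq J]
    {σ : ℝ} (hσ : 0 < σ) (hI : 3 ≤ Fintype.card I) (hJ : 3 ≤ Fintype.card J)
    (h : LamOK ((Fintype.card I : ℝ) - 2) ((Fintype.card J : ℝ) - 2) (σ ^ 2))
    {α α' : I} {β β' : J} (hα : α ≠ α') (hβ : β ≠ β') (x : I → ℝ) (y : J → ℝ) :
    GF x y α α' β β' ≤ σ / 2 * (∑ i, x i ^ 2 + ∑ j, y j ^ 2) := by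
  have hI' : (3 : ℝ) ≤ Fintype.card I := by exact_mod_cast hI
  have hJ' : (3 : ℝ) ≤ Fintype.card J := by exact_mod_cast hJ
  have hx := sq_split2 x hα hI
  have hy := sq_split2 y hβ hJ
  set k := (Fintype.card I : ℝ) - 2
  set n := (Fintype.card J : ℝ) - 2
  have hk : 1 ≤ k := by simp only [k]; linarith
  have hn : 0 < n := by simp only [n]; linarith
  unfold GF
  set SX := ∑ i, x i
  set SY := ∑ j, y j
  set X2 := ∑ i, x i ^ 2
  set Y2 := ∑ j, y j ^ 2
  have hb := poly_bound hk h (SX - x α - x α') (x α') (x α)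
  set p := SX - x α - x α' with hp
  set q := SY - y β - y β' with hq
  set G := p + x α with hG
  set H := x α' - x α with hH
  have e : (SX - x α) * (SY - y β) - x α' * y β' + x α * y β' + x α' * y β - x α * y β
      = q * (G + H) + y β' * G + y β * H := by
    have h1 : SX = p + x α + x α' := by rw [hp]; ring
    have h2 : SY = q + y β + y β' := by rw [hq]; ring
    rw [h1, h2, hG, hH]; ring
  rw [e]
  have t1 : 0 ≤ (σ * q - n * (G + H)) ^ 2 / n + (σ * y β' - G) ^ 2 + (σ * y β - H) ^ 2 := by
    positivity
  have t2 : (σ * q - n * (G + H)) ^ 2 / n + (σ * y β' - G) ^ 2 + (σ * y β - H) ^ 2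
    = σ ^ 2 * (q ^ 2 / n + y β' ^ 2 + y β ^ 2) + (n * (G + H) ^ 2 + G ^ 2 + H ^ 2)
      - 2 * σ * (q * (G + H) + y β' * G + y β * H) := by
    field_simp; ring
  have hs2 : 0 < σ ^ 2 := by positivity
  have t3 := mul_le_mul_of_nonneg_left hy hs2.le
  have t4 := mul_le_mul_of_nonneg_left hx hs2.le
  have t5 : 2 * σ * (q * (G + H) + y β' * G + y β * H) ≤ σ ^ 2 * (X2 + Y2) := by linarith
  have t6 : σ * (q * (G + H) + y β' * G + y β * H) ≤ σ * (σ / 2 * (X2 + Y2)) := by linarith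
  exact le_of_mul_le_mul_left t6 hσ

lemma zero_of_forall_le {g K : ℝ} (h : ∀ t : ℝ, t * g ≤ K * t ^ 2) : g = 0 := by
  by_contra hg
  have hK : 0 < |K| + 1 := by positivity
  have h1 := h (g / (2 * (|K| + 1)))
  have h2 : g / (2 * (|K| + 1)) * g = g ^ 2 / (2 * (|K| + 1)) := by ring
  have h3 : K * (g / (2 * (|K| + 1))) ^ 2 ≤ (|K| + 1) * (g / (2 * (|K| + 1))) ^ 2 :=
    mul_le_mul_of_nonneg_right (by linarith [le_abs_self K]) (sq_nonneg _)
  have h4 : (|K| + 1) * (g / (2 * (|K| + 1))) ^ 2 = g ^ 2 / (2 * (|K| + 1)) / 2 := by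
    field_simp
  have h5 : 0 < g ^ 2 / (2 * (|K| + 1)) := by positivity
  linarith

lemma sum_update' {I : Type*} [Fintype I] [DecidableEq I] (x : I → ℝ) (i : I) (t : ℝ) :
    ∑ k, Function.update x i (x i + t) k = ∑ k, x k + t := by
  rw [Finset.sum_update_of_mem (mem_univ i), ← Finset.add_sum_erase univ x (mem_univ i),
    Finset.sdiff_singleton_eq_erase]
  ring

lemma sum_sq_update' {I : Type*} [Fintype I] [DecidableEq I] (x : I → ℝ) (i : I) (t : ℝ) :
    ∑ k, (Function.update x i (x i + t) k) ^ 2 = ∑ k, x k ^ 2 + 2 * t * x i + t ^ 2 := by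
  rw [← Finset.add_sum_erase univ (fun k => x k ^ 2) (mem_univ i),
    ← Finset.add_sum_erase univ (fun k => (Function.update x i (x i + t) k) ^ 2) (mem_univ i)]
  have : ∑ k ∈ univ.erase i, (Function.update x i (x i + t) k) ^ 2
      = ∑ k ∈ univ.erase i, x k ^ 2 := by
    apply Finset.sum_congr rfl
    intro k hk
    rw [Function.update_of_ne (Finset.ne_of_mem_erase hk)]
  rw [this]
  simp only [Function.update_self]
  ring

lemma grad {I J : Type*} [Fintype I] [Fintype J] [DecidableEq I]
    {σ : ℝ} {α α' : I} {β β' : J} (hα : α ≠ α')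
    (hf : ∀ x : I → ℝ, ∀ y : J → ℝ, GF x y α α' β β' ≤ σ / 2 * (∑ i, x i ^ 2 + ∑ j, y j ^ 2))
    (x : I → ℝ) (y : J → ℝ)
    (ht : GF x y α α' β β' = σ / 2 * (∑ i, x i ^ 2 + ∑ j, y j ^ 2)) :
    (∀ i, i ≠ α → i ≠ α' → σ * x i = ∑ j, y j - y β) ∧
    σ * x α' = ∑ j, y j - y β' ∧ σ * x α = y β' - y β := by
  refine ⟨?_, ?_, ?_⟩
  · intro i h1 h2
    have : (∑ j, y j - y β) - σ * x i = 0 := by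
      apply zero_of_forall_le (K := σ / 2)
      intro t
      have := hf (Function.update x i (x i + t)) y
      unfold GF at this ht
      rw [sum_update', sum_sq_update', Function.update_of_ne h1.symm,
        Function.update_of_ne h2.symm] at this
      linarith
    linarith
  · have : (∑ j, y j - y β') - σ * x α' = 0 := by
      apply zero_of_forall_le (K := σ / 2)
      intro t
      have := hf (Function.update x α' (x α' + t)) y
      unfold GF at this ht
      rw [sum_update', sum_sq_update', Function.update_of_ne hα,
        Function.update_self] at this
      linarith
    linarith
  · have : (y β' - y β) - σ * x α = 0 := by
      apply zero_of_forall_le (K := σ / 2)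
      intro t
      have := hf (Function.update x α (x α + t)) y
      unfold GF at this ht
      rw [sum_update', sum_sq_update', Function.update_of_ne hα.symm,
        Function.update_self] at this
      linarith
    linarith

lemma sum_of_const {I : Type*} [Fintype I] [DecidableEq I] (f : I → ℝ) {α α' : I} (h : α ≠ α')
    (a : ℝ) (hf : ∀ i, i ≠ α → i ≠ α' → f i = a) :
    ∑ i, f i = f α + f α' + ((Fintype.card I : ℝ) - 2) * a := by
  rw [sum_split2 f h, ← card_split2 h, ← nsmul_eq_mul, ← Finset.sum_const]
  congr 1
  apply Finset.sum_congr rfl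
  intro i hi
  simp only [mem_erase, mem_univ, and_true] at hi
  exact hf i hi.2 hi.1

lemma tight {I J : Type*} [Fintype I] [Fintype J] [DecidableEq I] [DecidableEq J]
    {σ : ℝ} (hσ : 0 < σ) {α α' : I} {β β' : J} (hα : α ≠ α') (hβ : β ≠ β')
    (hf : ∀ x : I → ℝ, ∀ y : J → ℝ, GF x y α α' β β' ≤ σ / 2 * (∑ i, x i ^ 2 + ∑ j, y j ^ 2))
    (x : I → ℝ) (y : J → ℝ) (hx : ∀ i, 0 ≤ x i) (hy : ∀ j, 0 ≤ y j)
    (hnz : (∃ i, x i ≠ 0) ∨ ∃ j, y j ≠ 0)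
    (ht : GF x y α α' β β' = σ / 2 * (∑ i, x i ^ 2 + ∑ j, y j ^ 2)) :
    (∀ i, i ≠ α → i ≠ α' → σ * x i = ∑ j, y j - y β) ∧
    (∀ j, j ≠ β → j ≠ β' → σ * y j = ∑ i, x i - x α) ∧
    (∀ i, i ≠ α → i ≠ α' → x i = σ * y β + 2 * x α) ∧
    (∀ j, j ≠ β → j ≠ β' → y j = σ * x α + 2 * y β) ∧
    x α' = σ * y β + x α ∧ y β' = σ * x α + y β ∧
    (0 < x α ∨ 0 < y β) ∧
    (3 < Fintype.card I → 0 < x α) ∧ (3 < Fintype.card J → 0 < y β) := by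
  obtain ⟨g1, g2, g3⟩ := grad hα hf x y ht
  have hf' : ∀ y : J → ℝ, ∀ x : I → ℝ,
      GF y x β β' α α' ≤ σ / 2 * (∑ j, y j ^ 2 + ∑ i, x i ^ 2) := by
    intro y x
    rw [← GF_swap, add_comm (∑ j, y j ^ 2)]
    exact hf x y
  obtain ⟨k1, k2, k3⟩ := grad hβ hf' y x (by
    rw [← GF_swap, add_comm (∑ j, y j ^ 2)]; exact ht)
  have c1 : ∀ i, i ≠ α → i ≠ α' → x i = σ * y β + 2 * x α := by
    intro i h1 h2
    have := g1 i h1 h2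
    have e : σ * x i = σ * (σ * y β + 2 * x α) := by
      rw [k3]
      linear_combination this - g2 - g3
    exact mul_left_cancel₀ hσ.ne' e
  have c2 : ∀ j, j ≠ β → j ≠ β' → y j = σ * x α + 2 * y β := by
    intro i h1 h2
    have := k1 i h1 h2
    have e : σ * y i = σ * (σ * x α + 2 * y β) := by
      rw [g3]
      linear_combination this - k2 - k3
    exact mul_left_cancel₀ hσ.ne' e
  have c3 : x α' = σ * y β + x α := by linarith
  have c4 : y β' = σ * x α + y β := by linarith
  have sX := sum_of_const x hα _ c1
  have sY := sum_of_const y hβ _ c2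
  -- nonvanishing
  have hnz' : ¬ (x α = 0 ∧ y β = 0) := by
    rintro ⟨h1, h2⟩
    rcases hnz with ⟨i, hi⟩ | ⟨j, hj⟩
    · apply hi
      by_cases e1 : i = α
      · rw [e1, h1]
      by_cases e2 : i = α'
      · rw [e2, c3, h1, h2]; ring
      rw [c1 i e1 e2, h1, h2]; ring
    · apply hj
      by_cases e1 : j = β
      · rw [e1, h2]
      by_cases e2 : j = β'
      · rw [e2, c4, h1, h2]; ring
      rw [c2 j e1 e2, h1, h2]; ring
  have rel1 : (σ ^ 2 - 2 * ((Fintype.card J : ℝ) - 2) - 1) * y β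
      = ((Fintype.card J : ℝ) - 3) * σ * x α := by
    rw [c3, sY, c4] at g2
    linear_combination g2
  have rel2 : (σ ^ 2 - 2 * ((Fintype.card I : ℝ) - 2) - 1) * x α
      = ((Fintype.card I : ℝ) - 3) * σ * y β := by
    rw [c4, sX, c3] at k2
    linear_combination k2
  refine ⟨g1, k1, c1, c2, c3, c4, ?_, ?_, ?_⟩
  · by_contra hcon
    push Not at hcon
    exact hnz' ⟨le_antisymm hcon.1 (hx _), le_antisymm hcon.2 (hy _)⟩
  · intro hI
    rcases (hx α).lt_or_eq with h | h
    · exact h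
    · exfalso
      rw [← h] at rel2
      have h3 : (3 : ℝ) < Fintype.card I := by exact_mod_cast hI
      have : ((Fintype.card I : ℝ) - 3) * σ ≠ 0 := mul_ne_zero (by linarith) hσ.ne'
      have : y β = 0 := by
        rcases mul_eq_zero.1 (show ((Fintype.card I : ℝ) - 3) * σ * y β = 0 by linarith) with h | h
        · exact absurd h this
        · exact h
      exact hnz' ⟨h.symm, this⟩
  · intro hJ
    rcases (hy β).lt_or_eq with h | h
    · exact h
    · exfalso
      rw [← h] at rel1
      have h3 : (3 : ℝ) < Fintype.card J := by exact_mod_cast hJ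
      have : ((Fintype.card J : ℝ) - 3) * σ ≠ 0 := mul_ne_zero (by linarith) hσ.ne'
      have : x α = 0 := by
        rcases mul_eq_zero.1 (show ((Fintype.card J : ℝ) - 3) * σ * x α = 0 by linarith) with h | h
        · exact absurd h this
        · exact h
      exact hnz' ⟨this, h.symm⟩

structure HexIJ {I J : Type*} (N : I → J → ℝ) (a0 a1 a2 : I) (b0 b1 b2 : J) : Prop where
  n01 : N a0 b1 ≠ 0
  n02 : N a0 b2 ≠ 0
  n10 : N a1 b0 ≠ 0
  n12 : N a1 b2 ≠ 0
  n20 : N a2 b0 ≠ 0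
  n21 : N a2 b1 ≠ 0
  prod : N a0 b1 * N a0 b2 * N a1 b0 * N a1 b2 * N a2 b0 * N a2 b1 = -1
  hJ : ∀ j, N a0 j = 0 ∨ N a1 j = 0 ∨ N a2 j = 0
  hI : ∀ i, N i b0 = 0 ∨ N i b1 = 0 ∨ N i b2 = 0

namespace HexIJ
variable {I J : Type*} {N : I → J → ℝ} {a0 a1 a2 : I} {b0 b1 b2 : J}

lemma transp (h : HexIJ N a0 a1 a2 b0 b1 b2) :
    HexIJ (fun j i => N i j) b0 b1 b2 a0 a1 a2 :=
  ⟨h.n10, h.n20, h.n01, h.n21, h.n02, h.n12, by have := h.prod; linarith, h.hI, h.hJ⟩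

lemma swap01 (h : HexIJ N a0 a1 a2 b0 b1 b2) : HexIJ N a1 a0 a2 b1 b0 b2 :=
  ⟨h.n10, h.n12, h.n01, h.n02, h.n21, h.n20, by have := h.prod; linarith,
   fun j => by have := h.hJ j; tauto, fun i => by have := h.hI i; tauto⟩

lemma swap12 (h : HexIJ N a0 a1 a2 b0 b1 b2) : HexIJ N a0 a2 a1 b0 b2 b1 :=
  ⟨h.n02, h.n01, h.n20, h.n21, h.n10, h.n12, by have := h.prod; linarith,
   fun j => by have := h.hJ j; tauto, fun i => by have := h.hI i; tauto⟩

lemma n00 (h : HexIJ N a0 a1 a2 b0 b1 b2) : N a0 b0 = 0 := by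
  have := h.hI a0
  have h1 := h.n01
  have h2 := h.n02
  tauto

lemma n11 (h : HexIJ N a0 a1 a2 b0 b1 b2) : N a1 b1 = 0 := h.swap01.n00
lemma n22 (h : HexIJ N a0 a1 a2 b0 b1 b2) : N a2 b2 = 0 := h.swap12.n11

lemma a01 (h : HexIJ N a0 a1 a2 b0 b1 b2) : a0 ≠ a1 := by
  rintro rfl
  exact h.n10 h.n00
lemma a02 (h : HexIJ N a0 a1 a2 b0 b1 b2) : a0 ≠ a2 := h.swap12.a01
lemma a12 (h : HexIJ N a0 a1 a2 b0 b1 b2) : a1 ≠ a2 := h.swap01.a02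
lemma b01 (h : HexIJ N a0 a1 a2 b0 b1 b2) : b0 ≠ b1 := h.transp.a01
lemma b02 (h : HexIJ N a0 a1 a2 b0 b1 b2) : b0 ≠ b2 := h.transp.a02
lemma b12 (h : HexIJ N a0 a1 a2 b0 b1 b2) : b1 ≠ b2 := h.transp.a12
end HexIJ

lemma sum_split3 {I : Type*} [Fintype I] [DecidableEq I] (f : I → ℝ) {a0 a1 a2 : I}
    (h01 : a0 ≠ a1) (h02 : a0 ≠ a2) (h12 : a1 ≠ a2) :
    ∑ i, f i = f a0 + f a1 + f a2 + ∑ i ∈ ((univ.erase a0).erase a1).erase a2, f i := by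
  rw [sum_split2 f h01, ← Finset.add_sum_erase ((univ.erase a0).erase a1) f (a := a2)
    (by simp [h02.symm, h12.symm])]
  ring

lemma six_signs {n1 n2 n3 n4 n5 n6 t1 t2 t3 t4 t5 t6 c : ℝ}
    (h1 : n1 = 1 ∨ n1 = -1) (h2 : n2 = 1 ∨ n2 = -1) (h3 : n3 = 1 ∨ n3 = -1)
    (h4 : n4 = 1 ∨ n4 = -1) (h5 : n5 = 1 ∨ n5 = -1) (h6 : n6 = 1 ∨ n6 = -1)
    (hp : n1 * n2 * n3 * n4 * n5 * n6 = -1) (hc : 0 ≤ c)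
    (k1 : c ≤ t1) (k2 : c ≤ t2) (k3 : c ≤ t3) (k4 : c ≤ t4) (k5 : c ≤ t5) (k6 : c ≤ t6) :
    n1 * t1 + n2 * t2 + n3 * t3 + n4 * t4 + n5 * t5 + n6 * t6
      ≤ t1 + t2 + t3 + t4 + t5 + t6 - 2 * c := by
  rcases h1 with rfl | rfl <;> rcases h2 with rfl | rfl <;> rcases h3 with rfl | rfl <;>
  rcases h4 with rfl | rfl <;> rcases h5 with rfl | rfl <;> rcases h6 with rfl | rfl <;>
  first
    | linarith
    | (exfalso; norm_num at hp)

lemma row_bound {J : Type*} [Fintype J] (f y : J → ℝ) (hf : ∀ j, f j ≤ 1) (hy : ∀ j, 0 ≤ y j)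
    {b : J} (hb : f b = 0) : ∑ j, f j * y j ≤ ∑ j, y j - y b := by
  have h1 : (1 - f b) * y b ≤ ∑ j, (1 - f j) * y j :=
    Finset.single_le_sum (f := fun j => (1 - f j) * y j)
      (fun j _ => mul_nonneg (by linarith [hf j]) (hy j)) (mem_univ b)
  rw [hb] at h1
  have h2 : ∑ j, (1 - f j) * y j = ∑ j, y j - ∑ j, f j * y j := by
    rw [← Finset.sum_sub_distrib]
    exact Finset.sum_congr rfl (fun j _ => by ring)
  linarith

/-- general bound of the bilinear form through a hexagon -/
lemma hex_bound {I J : Type*} [Fintype I] [Fintype J] [DecidableEq I] [DecidableEq J]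
    {N : I → J → ℝ} (hN : ∀ i j, N i j = 0 ∨ N i j = 1 ∨ N i j = -1)
    {a0 a1 a2 : I} {b0 b1 b2 : J} (h : HexIJ N a0 a1 a2 b0 b1 b2)
    (x : I → ℝ) (y : J → ℝ) (hx : ∀ i, 0 ≤ x i) (hy : ∀ j, 0 ≤ y j)
    (ξ η : ℝ) (hξ0 : 0 ≤ ξ) (hη0 : 0 ≤ η)
    (hξ : ξ ≤ x a0 ∧ ξ ≤ x a1 ∧ ξ ≤ x a2) (hη : η ≤ y b0 ∧ η ≤ y b1 ∧ η ≤ y b2) :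
    ∑ i, x i * ∑ j, N i j * y j ≤
      x a0 * y b1 + x a0 * y b2 + x a1 * y b0 + x a1 * y b2 + x a2 * y b0 + x a2 * y b1 - 2 * (ξ * η)
      + (∑ i, x i - x a0 - x a1 - x a2) * (∑ j, y j - η)
      + (x a0 + x a1 + x a2 - ξ) * (∑ j, y j - y b0 - y b1 - y b2) := by
  have hle : ∀ i j, N i j ≤ 1 := by
    intro i j; rcases hN i j with e | e | e <;> rw [e] <;> norm_num
  have hpm : ∀ i j, N i j ≠ 0 → N i j = 1 ∨ N i j = -1 := by
    intro i j h0; have := hN i j; tauto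
  have hrow : ∀ i, ∑ j, N i j * y j ≤ ∑ j, y j - η := by
    intro i
    rcases h.hI i with e | e | e
    · have := row_bound (N i) y (hle i) hy e; linarith [hη.1]
    · have := row_bound (N i) y (hle i) hy e; linarith [hη.2.1]
    · have := row_bound (N i) y (hle i) hy e; linarith [hη.2.2]
  have hcol : ∀ j, N a0 j * x a0 + N a1 j * x a1 + N a2 j * x a2 ≤ x a0 + x a1 + x a2 - ξ := by
    intro j
    have k0 := mul_le_mul_of_nonneg_right (hle a0 j) (hx a0)
    have k1 := mul_le_mul_of_nonneg_right (hle a1 j) (hx a1)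
    have k2 := mul_le_mul_of_nonneg_right (hle a2 j) (hx a2)
    rcases h.hJ j with e | e | e <;> rw [e] at * <;> linarith [hξ.1, hξ.2.1, hξ.2.2]
  -- split the rows
  have s1 := sum_split3 (fun i => x i * ∑ j, N i j * y j) h.a01 h.a02 h.a12
  have s2 : ∑ i ∈ ((univ.erase a0).erase a1).erase a2, x i * ∑ j, N i j * y j
      ≤ (∑ i, x i - x a0 - x a1 - x a2) * (∑ j, y j - η) := by
    have := sum_split3 x h.a01 h.a02 h.a12
    rw [show ∑ i, x i - x a0 - x a1 - x a2 = ∑ i ∈ ((univ.erase a0).erase a1).erase a2, x i by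
      linarith, Finset.sum_mul]
    exact Finset.sum_le_sum fun i _ => mul_le_mul_of_nonneg_left (hrow i) (hx i)
  have s3 : x a0 * ∑ j, N a0 j * y j + x a1 * ∑ j, N a1 j * y j + x a2 * ∑ j, N a2 j * y j
      = ∑ j, (N a0 j * x a0 + N a1 j * x a1 + N a2 j * x a2) * y j := by
    rw [Finset.mul_sum, Finset.mul_sum, Finset.mul_sum, ← Finset.sum_add_distrib,
      ← Finset.sum_add_distrib]
    exact Finset.sum_congr rfl fun j _ => by ring
  have s4 := sum_split3 (fun j => (N a0 j * x a0 + N a1 j * x a1 + N a2 j * x a2) * y j)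
    h.b01 h.b02 h.b12
  have s5 : ∑ j ∈ ((univ.erase b0).erase b1).erase b2,
      (N a0 j * x a0 + N a1 j * x a1 + N a2 j * x a2) * y j
      ≤ (x a0 + x a1 + x a2 - ξ) * (∑ j, y j - y b0 - y b1 - y b2) := by
    have := sum_split3 y h.b01 h.b02 h.b12
    rw [show ∑ i, y i - y b0 - y b1 - y b2 = ∑ i ∈ ((univ.erase b0).erase b1).erase b2, y i by
      linarith, Finset.mul_sum]
    exact Finset.sum_le_sum fun j _ => mul_le_mul_of_nonneg_right (hcol j) (hy j)
  have s6 := six_signs (hpm _ _ h.n01) (hpm _ _ h.n02) (hpm _ _ h.n10) (hpm _ _ h.n12)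
    (hpm _ _ h.n20) (hpm _ _ h.n21) h.prod (mul_nonneg hξ0 hη0)
    (mul_le_mul hξ.1 hη.2.1 hη0 (hx _)) (mul_le_mul hξ.1 hη.2.2 hη0 (hx _))
    (mul_le_mul hξ.2.1 hη.1 hη0 (hx _)) (mul_le_mul hξ.2.1 hη.2.2 hη0 (hx _))
    (mul_le_mul hξ.2.2 hη.1 hη0 (hx _)) (mul_le_mul hξ.2.2 hη.2.1 hη0 (hx _))
  simp only [h.n00, h.n11, h.n22] at s4
  linarith

/-- adjacent case -/
lemma hex_adj {I J : Type*} [Fintype I] [Fintype J] [DecidableEq I] [DecidableEq J]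
    {N : I → J → ℝ} (hN : ∀ i j, N i j = 0 ∨ N i j = 1 ∨ N i j = -1)
    {a0 a1 a2 : I} {b0 b1 b2 : J} (h : HexIJ N a0 a1 a2 b0 b1 b2)
    (x : I → ℝ) (y : J → ℝ) (hx : ∀ i, 0 ≤ x i) (hy : ∀ j, 0 ≤ y j)
    (h1 : x a0 ≤ x a1) (h2 : x a0 ≤ x a2) (h3 : y b1 ≤ y b0) (h4 : y b1 ≤ y b2) :
    ∑ i, x i * ∑ j, N i j * y j ≤ GF x y a0 a2 b1 b2 := by
  have := hex_bound hN h x y hx hy (x a0) (y b1) (hx _) (hy _) ⟨le_rfl, h1, h2⟩ ⟨h3, le_rfl, h4⟩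
  unfold GF
  linarith

/-- antipodal case -/
lemma hex_anti {I J : Type*} [Fintype I] [Fintype J] [DecidableEq I] [DecidableEq J]
    {N : I → J → ℝ} (hN : ∀ i j, N i j = 0 ∨ N i j = 1 ∨ N i j = -1)
    {a0 a1 a2 : I} {b0 b1 b2 : J} (h : HexIJ N a0 a1 a2 b0 b1 b2)
    (x : I → ℝ) (y : J → ℝ) (hx : ∀ i, 0 ≤ x i) (hy : ∀ j, 0 ≤ y j)
    (h1 : x a0 ≤ x a1) (h2 : x a0 ≤ x a2) (h3 : y b0 ≤ y b1) (h4 : y b0 ≤ y b2) :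
    ∑ i, x i * ∑ j, N i j * y j + (x a2 - x a0) * (y b2 - y b0) ≤ GF x y a0 a1 b0 b1 := by
  have := hex_bound hN h x y hx hy (x a0) (y b0) (hx _) (hy _) ⟨le_rfl, h1, h2⟩ ⟨le_rfl, h3, h4⟩
  unfold GF
  linarith

/-- the sign pattern of `Γ_{r,s}` -/
def gm {I J : Type*} [DecidableEq I] [DecidableEq J] (α α' : I) (β β' : J) (i : I) (j : J) : ℝ :=
  if i = α then (if j = β' then 1 else if j = β then -1 else 0)
  else if i = α' then (if j = β' then 0 else 1)
  else if j = β then 0 else 1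

def IsGamma {I J : Type*} [DecidableEq I] [DecidableEq J] (N : I → J → ℝ) : Prop :=
  ∃ (α α' : I) (β β' : J) (ε : I → ℝ) (δ : J → ℝ), α ≠ α' ∧ β ≠ β' ∧
    (∀ i, ε i = 1 ∨ ε i = -1) ∧ (∀ j, δ j = 1 ∨ δ j = -1) ∧
    ∀ i j, N i j = ε i * gm α α' β β' i j * δ j

lemma row_tight {J : Type*} [Fintype J] [DecidableEq J] (f y : J → ℝ)
    (hf : ∀ j, f j ≤ 1) (hy : ∀ j, 0 ≤ y j) {b0 β b2 : J}
    (hz : f b0 = 0 ∨ f β = 0 ∨ f b2 = 0) (hpos : ∀ j, j ≠ β → 0 < y j)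
    (h0 : y β < y b0) (h2 : y β < y b2) (hs : ∑ j, f j * y j = ∑ j, y j - y β) :
    (∀ j, j ≠ β → f j = 1) ∧ f β = 0 := by
  have hβ : f β = 0 := by
    rcases hz with e | e | e
    · have := row_bound f y hf hy e; linarith
    · exact e
    · have := row_bound f y hf hy e; linarith
  refine ⟨?_, hβ⟩
  have h1 : ∑ j, (1 - f j) * y j = y β := by
    have h2 : ∑ j, (1 - f j) * y j = ∑ j, y j - ∑ j, f j * y j := by
      rw [← Finset.sum_sub_distrib]
      exact Finset.sum_congr rfl (fun j _ => by ring)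
    linarith
  rw [← Finset.add_sum_erase univ _ (mem_univ β), hβ] at h1
  have h3 : ∑ j ∈ univ.erase β, (1 - f j) * y j = 0 := by linarith
  rw [Finset.sum_eq_zero_iff_of_nonneg
    (fun j _ => mul_nonneg (by linarith [hf j]) (hy j))] at h3
  intro j hj
  have := h3 j (by simp [hj])
  rcases mul_eq_zero.1 this with e | e
  · linarith
  · exact absurd e (hpos j hj).ne'

lemma pm_mul {a b : ℝ} (ha : a = 1 ∨ a = -1) (hb : b = 1 ∨ b = -1) : a * b = 1 ∨ a * b = -1 := by
  rcases ha with rfl | rfl <;> rcases hb with rfl | rfl <;> norm_num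

/-- the underlying graph determines the signed graph up to switching -/
lemma sign_struct {I J : Type*} [DecidableEq I] [DecidableEq J]
    {N : I → J → ℝ} (hN : ∀ i j, N i j = 0 ∨ N i j = 1 ∨ N i j = -1)
    (h4 : ∀ i i' j j', N i j * N i' j * N i' j' * N i j' ≠ -1)
    {a0 a1 a2 : I} {b0 b1 b2 : J} (h : HexIJ N a0 a1 a2 b0 b1 b2)
    (hr : ∀ i, i ≠ a0 → i ≠ a1 → i ≠ a2 → (∀ j, j ≠ b1 → N i j = 1) ∧ N i b1 = 0)
    (hc : ∀ j, j ≠ b0 → j ≠ b1 → j ≠ b2 → (∀ i, i ≠ a0 → N i j = 1) ∧ N a0 j = 0) :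
    IsGamma N := by
  have hpm : ∀ i j, N i j ≠ 0 → N i j = 1 ∨ N i j = -1 := by
    intro i j h0; have := hN i j; tauto
  have a01 := h.a01
  have a02 := h.a02
  have a12 := h.a12
  have b01 := h.b01
  have b02 := h.b02
  have b12 := h.b12
  have n00 := h.n00
  have n11 := h.n11
  have n22 := h.n22
  have nz : ∀ i j, i ≠ a0 → j ≠ b1 → ¬ (i = a2 ∧ j = b2) → N i j ≠ 0 := by
    intro i j hi hj hij
    by_cases i1 : i = a1
    · by_cases j0 : j = b0
      · rw [i1, j0]; exact h.n10
      by_cases j2 : j = b2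
      · rw [i1, j2]; exact h.n12
      rw [(hc j j0 hj j2).1 i hi]; norm_num
    by_cases i2 : i = a2
    · by_cases j0 : j = b0
      · rw [i2, j0]; exact h.n20
      by_cases j2 : j = b2
      · exact absurd ⟨i2, j2⟩ hij
      rw [(hc j j0 hj j2).1 i hi]; norm_num
    rw [(hr i hi i1 i2).1 j hj]; norm_num
  have za : ∀ j, j ≠ b1 → j ≠ b2 → N a0 j = 0 := by
    intro j h1 h2
    by_cases h0 : j = b0
    · rw [h0, n00]
    exact (hc j h0 h1 h2).2
  have zb : ∀ i, i ≠ a0 → i ≠ a2 → N i b1 = 0 := by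
    intro i h1 h2
    by_cases h0 : i = a1
    · rw [h0, n11]
    exact (hr i h1 h0 h2).2
  have p12 := hpm _ _ h.n12
  have p10 := hpm _ _ h.n10
  have p01 := hpm _ _ h.n01
  have p02 := hpm _ _ h.n02
  have p20 := hpm _ _ h.n20
  have p21 := hpm _ _ h.n21
  have hprod := h.prod
  set ε : I → ℝ := fun i => if i = a0 then N a0 b2 * N a1 b2 else N i b0 * N a1 b0 with hε
  set δ : J → ℝ := fun j => if j = b1 then N a2 b1 * (N a2 b0 * N a1 b0) else N a1 j with hδ
  refine ⟨a0, a2, b1, b2, ε, δ, a02, b12, ?_, ?_, ?_⟩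
  · intro i
    by_cases hi : i = a0
    · simp only [hε, hi, if_true]; exact pm_mul p02 p12
    · simp only [hε, hi, if_false]
      exact pm_mul (hpm _ _ (nz i b0 hi b01 (fun e => b02 e.2))) p10
  · intro j
    by_cases hj : j = b1
    · simp only [hδ, hj, if_true]; exact pm_mul p21 (pm_mul p20 p10)
    · simp only [hδ, hj, if_false]
      exact hpm _ _ (nz a1 j a01.symm hj (fun e => a12 e.1))
  · intro i j
    by_cases hi : i = a0
    · subst hi
      by_cases hj2 : j = b2
      · subst hj2
        simp only [hε, hδ, gm, if_true, if_neg b12.symm]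
        rcases p12 with e | e <;> rw [e] <;> ring
      by_cases hj1 : j = b1
      · subst hj1
        simp only [hε, hδ, gm, if_true, if_neg b12]
        rcases p12 with e12 | e12 <;> rcases p10 with e10 | e10 <;> rcases p02 with e02 | e02 <;>
        rcases p20 with e20 | e20 <;> rcases p21 with e21 | e21 <;>
        rw [e12, e10, e02, e20, e21] at hprod <;> rw [e12, e10, e02, e20, e21] <;> linarith
      simp only [gm, if_true, if_neg hj2, if_neg hj1, za j hj1 hj2]
      ring
    · by_cases hj1 : j = b1
      · subst hj1
        by_cases hi2 : i = a2
        · subst hi2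
          simp only [hε, hδ, gm, if_true, if_neg hi, if_neg b12]
          rcases p10 with e10 | e10 <;> rcases p20 with e20 | e20 <;> rw [e10, e20] <;> ring
        · simp only [gm, if_true, if_neg hi, if_neg hi2, zb i hi hi2]
          ring
      · by_cases hij : i = a2 ∧ j = b2
        · obtain ⟨rfl, rfl⟩ := hij
          simp only [gm, if_true, if_neg hi, n22]
          ring
        · have hg : gm a0 a2 b1 b2 i j = 1 := by
            simp only [gm, if_neg hi, if_neg hj1]
            by_cases hi2 : i = a2
            · have : j ≠ b2 := fun e => hij ⟨hi2, e⟩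
              simp [hi2, this]
            · simp [hi2]
          rw [hg]
          simp only [hε, hδ, if_neg hi, if_neg hj1]
          have q1 := hpm _ _ (nz i j hi hj1 hij)
          have q2 := hpm _ _ (nz a1 j a01.symm hj1 (fun e => a12 e.1))
          have q3 := hpm _ _ (nz i b0 hi b01 (fun e => b02 e.2))
          have := h4 i a1 j b0
          rcases q1 with e1 | e1 <;> rcases q2 with e2 | e2 <;> rcases q3 with e3 | e3 <;>
          rcases p10 with e4 | e4 <;> rw [e1, e2, e3, e4] at this <;> rw [e1, e2, e3, e4] <;>
          first
            | (norm_num; done)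
            | (exfalso; apply this; norm_num; done)

lemma hex_wlog {I J : Type*} {N : I → J → ℝ}
    {a0 a1 a2 : I} {b0 b1 b2 : J} (h : HexIJ N a0 a1 a2 b0 b1 b2) (x : I → ℝ) (y : J → ℝ) :
    ∃ (a0 a1 a2 : I) (b0 b1 b2 : J), HexIJ N a0 a1 a2 b0 b1 b2 ∧ x a0 ≤ x a1 ∧ x a0 ≤ x a2 ∧
      ((y b1 ≤ y b0 ∧ y b1 ≤ y b2) ∨ (y b0 ≤ y b1 ∧ y b0 ≤ y b2)) := by
  have key : ∀ (a0 a1 a2 : I) (b0 b1 b2 : J), HexIJ N a0 a1 a2 b0 b1 b2 → x a0 ≤ x a1 →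
      x a0 ≤ x a2 → ∃ (a0 a1 a2 : I) (b0 b1 b2 : J), HexIJ N a0 a1 a2 b0 b1 b2 ∧ x a0 ≤ x a1 ∧
      x a0 ≤ x a2 ∧ ((y b1 ≤ y b0 ∧ y b1 ≤ y b2) ∨ (y b0 ≤ y b1 ∧ y b0 ≤ y b2)) := by
    intro a0 a1 a2 b0 b1 b2 h h1 h2
    by_cases c1 : y b1 ≤ y b0 ∧ y b1 ≤ y b2
    · exact ⟨a0, a1, a2, b0, b1, b2, h, h1, h2, Or.inl c1⟩
    by_cases c2 : y b0 ≤ y b1 ∧ y b0 ≤ y b2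
    · exact ⟨a0, a1, a2, b0, b1, b2, h, h1, h2, Or.inr c2⟩
    refine ⟨a0, a2, a1, b0, b2, b1, h.swap12, h2, h1, Or.inl ?_⟩
    grind
  by_cases c1 : x a0 ≤ x a1 ∧ x a0 ≤ x a2
  · exact key _ _ _ _ _ _ h c1.1 c1.2
  by_cases c2 : x a1 ≤ x a0 ∧ x a1 ≤ x a2
  · exact key _ _ _ _ _ _ h.swap01 c2.1 c2.2
  · have : x a2 ≤ x a0 ∧ x a2 ≤ x a1 := by grind
    exact key _ _ _ _ _ _ h.swap12.swap01 this.1 this.2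

lemma form_eq {I J : Type*} [Fintype I] [Fintype J] {N : I → J → ℝ} {x : I → ℝ} {y : J → ℝ} {μ : ℝ}
    (e1 : ∀ i, ∑ j, N i j * y j = μ * x i) (e2 : ∀ j, ∑ i, N i j * x i = μ * y j) :
    ∑ i, x i * ∑ j, N i j * y j = μ / 2 * (∑ i, x i ^ 2 + ∑ j, y j ^ 2) := by
  have h1 : ∑ i, x i * ∑ j, N i j * y j = μ * ∑ i, x i ^ 2 := by
    rw [Finset.mul_sum]
    exact Finset.sum_congr rfl fun i _ => by rw [e1]; ring
  have h2 : ∑ i, x i * ∑ j, N i j * y j = μ * ∑ j, y j ^ 2 := by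
    have : ∑ i, x i * ∑ j, N i j * y j = ∑ j, y j * ∑ i, N i j * x i := by
      simp_rw [Finset.mul_sum]
      rw [Finset.sum_comm]
      exact Finset.sum_congr rfl fun i _ => Finset.sum_congr rfl fun j _ => by ring
    rw [this, Finset.mul_sum]
    exact Finset.sum_congr rfl fun i _ => by rw [e2]; ring
  linarith

lemma norm_pos' {I J : Type*} [Fintype I] [Fintype J] {x : I → ℝ} {y : J → ℝ}
    (hnz : (∃ i, x i ≠ 0) ∨ ∃ j, y j ≠ 0) : 0 < ∑ i, x i ^ 2 + ∑ j, y j ^ 2 := by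
  have n1 : 0 ≤ ∑ i, x i ^ 2 := Finset.sum_nonneg fun i _ => sq_nonneg _
  have n2 : 0 ≤ ∑ j, y j ^ 2 := Finset.sum_nonneg fun i _ => sq_nonneg _
  rcases hnz with ⟨i, hi⟩ | ⟨j, hj⟩
  · have : 0 < ∑ i, x i ^ 2 :=
      Finset.sum_pos' (fun i _ => sq_nonneg _) ⟨i, mem_univ i, by positivity⟩
    linarith
  · have : 0 < ∑ i, y i ^ 2 :=
      Finset.sum_pos' (fun i _ => sq_nonneg _) ⟨j, mem_univ j, by positivity⟩
    linarith

lemma card_gt3 {I : Type*} [Fintype I] [DecidableEq I] {a0 a1 a2 i : I}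
    (h01 : a0 ≠ a1) (h02 : a0 ≠ a2) (h12 : a1 ≠ a2) (h0 : i ≠ a0) (h1 : i ≠ a1) (h2 : i ≠ a2) :
    3 < Fintype.card I := by
  have : ({i, a0, a1, a2} : Finset I).card = 4 := by
    rw [card_insert_of_notMem (by simp [h0, h1, h2]), card_insert_of_notMem (by simp [h01, h02]),
      card_insert_of_notMem (by simp [h12]), card_singleton]
  have h5 := Finset.card_le_univ ({i, a0, a1, a2} : Finset I)
  omega

lemma hex_case {I J : Type*} [Fintype I] [Fintype J] [DecidableEq I] [DecidableEq J]
    {N : I → J → ℝ} (hN : ∀ i j, N i j = 0 ∨ N i j = 1 ∨ N i j = -1)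
    (h4 : ∀ i i' j j', N i j * N i' j * N i' j' * N i j' ≠ -1)
    (h : ∃ (a0 a1 a2 : I) (b0 b1 b2 : J), HexIJ N a0 a1 a2 b0 b1 b2)
    {σ μ : ℝ} (hσ : 0 < σ) (hI : 3 ≤ Fintype.card I) (hJ : 3 ≤ Fintype.card J)
    (hlam : LamOK ((Fintype.card I : ℝ) - 2) ((Fintype.card J : ℝ) - 2) (σ ^ 2))
    (x : I → ℝ) (y : J → ℝ) (hx : ∀ i, 0 ≤ x i) (hy : ∀ j, 0 ≤ y j)
    (hnz : (∃ i, x i ≠ 0) ∨ ∃ j, y j ≠ 0)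
    (e1 : ∀ i, ∑ j, N i j * y j = μ * x i) (e2 : ∀ j, ∑ i, N i j * x i = μ * y j) :
    μ ≤ σ ∧ (μ = σ → IsGamma N) := by
  have hle : ∀ i j, N i j ≤ 1 := by
    intro i j; rcases hN i j with e | e | e <;> rw [e] <;> norm_num
  obtain ⟨_, _, _, _, _, _, h⟩ := h
  obtain ⟨a0, a1, a2, b0, b1, b2, h, hx1, hx2, hh⟩ := hex_wlog h x y
  have hQ := form_eq e1 e2
  have hpos := norm_pos' hnz
  rcases hh with ⟨hy1, hy2⟩ | ⟨hy1, hy2⟩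
  · have hb := hex_adj hN h x y hx hy hx1 hx2 hy1 hy2
    have hf := fun x y => GF_le hσ hI hJ hlam h.a02 h.b12 x y
    have hg := hf x y
    refine ⟨?_, ?_⟩
    · have : μ / 2 * (∑ i, x i ^ 2 + ∑ j, y j ^ 2) ≤ σ / 2 * (∑ i, x i ^ 2 + ∑ j, y j ^ 2) := by
        linarith
      have := le_of_mul_le_mul_right this hpos
      linarith
    · intro hμ
      subst hμ
      obtain ⟨g1, k1, c1, c2, c3, c4, hp, hpI, hpJ⟩ := tight hσ h.a02 h.b12 hf x y hx hy hnz
        (le_antisymm hg (by linarith))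
      apply sign_struct hN h4 h
      · intro i i0 i1 i2
        have hξ := hpI (card_gt3 h.a01 h.a02 h.a12 i0 i1 i2)
        have hσξ : 0 < μ * x a0 := mul_pos hσ hξ
        apply row_tight (N i) y (hle i) hy (h.hI i)
        · intro j hj
          by_cases hj2 : j = b2
          · rw [hj2, c4]; linarith [hy b1]
          · rw [c2 j hj hj2]; linarith [hy b1]
        · rw [c2 b0 h.b01 h.b02]; linarith [hy b1]
        · rw [c4]; linarith
        · rw [e1, g1 i i0 i2]
      · intro j j0 j1 j2
        have hη := hpJ (card_gt3 h.b01 h.b02 h.b12 j0 j1 j2)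
        have hση : 0 < μ * y b1 := mul_pos hσ hη
        apply row_tight (fun i => N i j) x (fun i => hle i j) hx (b0 := a1) (b2 := a2)
        · have := h.hJ j; tauto
        · intro i hi
          by_cases hi2 : i = a2
          · rw [hi2, c3]; linarith [hx a0]
          · rw [c1 i hi hi2]; linarith [hx a0]
        · rw [c1 a1 h.a01.symm h.a12]; linarith [hx a0]
        · rw [c3]; linarith
        · rw [e2, k1 j j1 j2]
  · have hb := hex_anti hN h x y hx hy hx1 hx2 hy1 hy2
    have hf := fun x y => GF_le hσ hI hJ hlam h.a01 h.b01 x y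
    have hg := hf x y
    have hm : 0 ≤ (x a2 - x a0) * (y b2 - y b0) := mul_nonneg (by linarith) (by linarith)
    refine ⟨?_, ?_⟩
    · have : μ / 2 * (∑ i, x i ^ 2 + ∑ j, y j ^ 2) ≤ σ / 2 * (∑ i, x i ^ 2 + ∑ j, y j ^ 2) := by
        linarith
      have := le_of_mul_le_mul_right this hpos
      linarith
    · intro hμ
      exfalso
      subst hμ
      obtain ⟨g1, k1, c1, c2, c3, c4, hp, hpI, hpJ⟩ := tight hσ h.a01 h.b01 hf x y hx hy hnz
        (le_antisymm hg (by linarith))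
      have d1 := c1 a2 h.a02.symm h.a12.symm
      have d2 := c2 b2 h.b02.symm h.b12.symm
      have m1 := mul_nonneg hσ.le (hx a0)
      have m2 := mul_nonneg hσ.le (hy b0)
      have : 0 < (x a2 - x a0) * (y b2 - y b0) := by
        apply mul_pos
        · rcases hp with hp | hp
          · linarith
          · have := mul_pos hσ hp; linarith [hx a0]
        · rcases hp with hp | hp
          · have := mul_pos hσ hp; linarith [hy b0]
          · linarith
      linarith

structure LongIJ {I J : Type*} (N : I → J → ℝ) (a0 a1 a2 a3 : I) (b0 b1 b2 b3 : J) : Prop where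
  a01 : a0 ≠ a1
  a02 : a0 ≠ a2
  a03 : a0 ≠ a3
  a12 : a1 ≠ a2
  a13 : a1 ≠ a3
  a23 : a2 ≠ a3
  b01 : b0 ≠ b1
  b02 : b0 ≠ b2
  b03 : b0 ≠ b3
  b12 : b1 ≠ b2
  b13 : b1 ≠ b3
  b23 : b2 ≠ b3
  i02 : ∀ i, N i b0 = 0 ∨ N i b2 = 0
  i13 : ∀ i, N i b1 = 0 ∨ N i b3 = 0
  j02 : ∀ j, N a0 j = 0 ∨ N a2 j = 0
  j13 : ∀ j, N a1 j = 0 ∨ N a3 j = 0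

lemma sum_four {I : Type*} [DecidableEq I] {a0 a1 a2 a3 : I} (a01 : a0 ≠ a1) (a02 : a0 ≠ a2)
    (a03 : a0 ≠ a3) (a12 : a1 ≠ a2) (a13 : a1 ≠ a3) (a23 : a2 ≠ a3) (f : I → ℝ) :
    ∑ i ∈ ({a0, a1, a2, a3} : Finset I), f i = f a0 + f a1 + f a2 + f a3 := by
  rw [sum_insert (by simp [a01, a02, a03]), sum_insert (by simp [a12, a13]),
    sum_insert (by simp [a23]), sum_singleton]
  ring

lemma long_count {I J : Type*} [Fintype I] [Fintype J] [DecidableEq I] [DecidableEq J]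
    {N : I → J → ℝ} (hN : ∀ i j, N i j = 0 ∨ N i j = 1 ∨ N i j = -1)
    {a0 a1 a2 a3 : I} {b0 b1 b2 b3 : J} (h : LongIJ N a0 a1 a2 a3 b0 b1 b2 b3)
    (hneg : ∃ i j, N i j = -1) :
    ∑ i, ∑ j, (if N i j = 1 then (1 : ℝ) else 0) ≤
      (((Fintype.card I : ℝ) - 2 + 1) * ((Fintype.card J : ℝ) - 2 + 1) + 2) - 4 := by
  set T : I → J → ℝ := fun i j => if N i j = 0 then 1 else 0 with hT
  set M : I → J → ℝ := fun i j => if N i j = -1 then 1 else 0 with hM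
  have T0 : ∀ i j, 0 ≤ T i j := by intro i j; simp only [hT]; split_ifs <;> norm_num
  have M0 : ∀ i j, 0 ≤ M i j := by intro i j; simp only [hM]; split_ifs <;> norm_num
  have T1 : ∀ i j, N i j = 0 → T i j = 1 := by intro i j e; simp [hT, e]
  have hsum : ∀ i j, (if N i j = 1 then (1 : ℝ) else 0) = 1 - T i j - M i j := by
    intro i j
    simp only [hT, hM]
    rcases hN i j with e | e | e <;> rw [e] <;> norm_num
  have hMs : 1 ≤ ∑ i, ∑ j, M i j := by
    obtain ⟨i, j, e⟩ := hneg
    have e1 : M i j ≤ ∑ j, M i j := single_le_sum (f := fun j => M i j) (fun j _ => M0 i j) (mem_univ j)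
    have e2 : ∑ j, M i j ≤ ∑ i, ∑ j, M i j :=
      single_le_sum (f := fun i => ∑ j, M i j) (fun i _ => sum_nonneg fun j _ => M0 i j) (mem_univ i)
    have e3 : M i j = 1 := by simp [hM, e]
    linarith
  have rowT : ∀ i, 2 ≤ T i b0 + T i b1 + T i b2 + T i b3 := by
    intro i
    rcases h.i02 i with e | e <;> rcases h.i13 i with e' | e' <;>
      linarith [T1 _ _ e, T1 _ _ e', T0 i b0, T0 i b1, T0 i b2, T0 i b3]
  have colT : ∀ j, 2 ≤ ∑ i, T i j := by
    intro j
    have e1 : T a0 j + T a1 j + T a2 j + T a3 j ≤ ∑ i, T i j := by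
      rw [← sum_four h.a01 h.a02 h.a03 h.a12 h.a13 h.a23 (fun i => T i j)]
      exact sum_le_sum_of_subset_of_nonneg (subset_univ _) (fun i _ _ => T0 i j)
    rcases h.j02 j with e | e <;> rcases h.j13 j with e' | e' <;>
      linarith [T1 _ _ e, T1 _ _ e', T0 a0 j, T0 a1 j, T0 a2 j, T0 a3 j]
  set B : Finset J := {b0, b1, b2, b3} with hB
  have hBc : ((Bᶜ).card : ℝ) = (Fintype.card J : ℝ) - 4 ∧ (4 : ℝ) ≤ Fintype.card J := by
    have c4 : B.card = 4 := by
      rw [hB, card_insert_of_notMem (by simp [h.b01, h.b02, h.b03]),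
        card_insert_of_notMem (by simp [h.b12, h.b13]),
        card_insert_of_notMem (by simp [h.b23]), card_singleton]
    have := Finset.card_add_card_compl B
    rw [c4] at this
    constructor
    · rw [← this]; push_cast; ring
    · rw [← this]; push_cast; linarith [(Nat.cast_nonneg (α := ℝ) (Bᶜ).card)]
  have hI4 : (4 : ℝ) ≤ Fintype.card I := by
    have c4 : ({a0, a1, a2, a3} : Finset I).card = 4 := by
      rw [card_insert_of_notMem (by simp [h.a01, h.a02, h.a03]),
        card_insert_of_notMem (by simp [h.a12, h.a13]),
        card_insert_of_notMem (by simp [h.a23]), card_singleton]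
    have := Finset.card_le_univ ({a0, a1, a2, a3} : Finset I)
    rw [c4] at this
    exact_mod_cast this
  have hTs : 2 * (Fintype.card I : ℝ) + 2 * ((Fintype.card J : ℝ) - 4) ≤ ∑ i, ∑ j, T i j := by
    rw [Finset.sum_comm, ← Finset.sum_add_sum_compl B]
    apply add_le_add
    · rw [Finset.sum_comm]
      have : ∑ _i : I, (2 : ℝ) ≤ ∑ i, ∑ j ∈ B, T i j := by
        apply sum_le_sum
        intro i _
        rw [hB, sum_four h.b01 h.b02 h.b03 h.b12 h.b13 h.b23]
        exact rowT i
      simp only [sum_const, card_univ, nsmul_eq_mul] at this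
      linarith
    · have : ∑ _j ∈ Bᶜ, (2 : ℝ) ≤ ∑ j ∈ Bᶜ, ∑ i, T i j := sum_le_sum fun j _ => colT j
      simp only [sum_const, nsmul_eq_mul] at this
      rw [hBc.1] at this
      linarith
  have : ∑ i, ∑ j, (if N i j = 1 then (1 : ℝ) else 0)
      = (Fintype.card I : ℝ) * (Fintype.card J : ℝ) - ∑ i, ∑ j, T i j - ∑ i, ∑ j, M i j := by
    simp_rw [hsum, sum_sub_distrib]
    simp
  rw [this]
  linarith [hBc.2]

lemma long_case {I J : Type*} [Fintype I] [Fintype J] [DecidableEq I] [DecidableEq J]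
    {N : I → J → ℝ} (hN : ∀ i j, N i j = 0 ∨ N i j = 1 ∨ N i j = -1)
    {a0 a1 a2 a3 : I} {b0 b1 b2 b3 : J} (h : LongIJ N a0 a1 a2 a3 b0 b1 b2 b3)
    (hneg : ∃ i j, N i j = -1)
    {σ μ : ℝ} (hσ : 0 < σ)
    (hlam : LamOK ((Fintype.card I : ℝ) - 2) ((Fintype.card J : ℝ) - 2) (σ ^ 2))
    (x : I → ℝ) (y : J → ℝ) (hx : ∀ i, 0 ≤ x i) (hy : ∀ j, 0 ≤ y j)
    (hnz : (∃ i, x i ≠ 0) ∨ ∃ j, y j ≠ 0)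
    (e1 : ∀ i, ∑ j, N i j * y j = μ * x i) (e2 : ∀ j, ∑ i, N i j * x i = μ * y j) :
    μ < σ := by
  by_contra hcon
  push Not at hcon
  have hQ := form_eq e1 e2
  have hpos := norm_pos' hnz
  have hcount := long_count hN h hneg
  set P : I → J → ℝ := fun i j => if N i j = 1 then (1 : ℝ) else 0 with hP
  have hNP : ∀ i j, N i j ≤ P i j := by
    intro i j; simp only [hP]
    rcases hN i j with e | e | e <;> rw [e] <;> norm_num
  have q1 : ∑ i, x i * ∑ j, N i j * y j ≤ ∑ p : I × J, P p.1 p.2 * (x p.1 * y p.2) := by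
    rw [Fintype.sum_prod_type]
    apply sum_le_sum
    intro i _
    rw [mul_sum]
    apply sum_le_sum
    intro j _
    have := mul_le_mul_of_nonneg_right (hNP i j) (mul_nonneg (hx i) (hy j))
    linarith
  have q2 := Finset.sum_mul_sq_le_sq_mul_sq univ (fun p : I × J => P p.1 p.2)
    (fun p : I × J => x p.1 * y p.2)
  have q3 : ∑ p : I × J, P p.1 p.2 ^ 2 = ∑ i, ∑ j, P i j := by
    rw [Fintype.sum_prod_type]
    refine sum_congr rfl fun i _ => sum_congr rfl fun j _ => ?_
    simp only [hP]; split_ifs <;> norm_num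
  have q4 : ∑ p : I × J, (x p.1 * y p.2) ^ 2 = (∑ i, x i ^ 2) * ∑ j, y j ^ 2 := by
    rw [Fintype.sum_prod_type, sum_mul_sum]
    refine sum_congr rfl fun i _ => sum_congr rfl fun j _ => by ring
  simp only [q3, q4] at q2
  set X2 := ∑ i, x i ^ 2
  set Y2 := ∑ j, y j ^ 2
  set K := ∑ i, ∑ j, P i j
  have K0 : 0 ≤ K := sum_nonneg fun i _ => sum_nonneg fun j _ => by
    simp only [hP]; split_ifs <;> norm_num
  have hlt : K < σ ^ 2 := lt_of_le_of_lt hcount hlam.2.2.2.1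
  have hμ0 : 0 < μ := by linarith
  have q5 : (μ / 2 * (X2 + Y2)) ^ 2 ≤ K * (X2 * Y2) := by
    refine le_trans ?_ q2
    apply pow_le_pow_left₀ (by positivity)
    linarith
  have q6 : K * (X2 * Y2) ≤ K * ((X2 + Y2) ^ 2 / 4) :=
    mul_le_mul_of_nonneg_left (by nlinarith [sq_nonneg (X2 - Y2)]) K0
  have q7 : μ ^ 2 * (X2 + Y2) ^ 2 ≤ K * (X2 + Y2) ^ 2 := by nlinarith
  have q8 : μ ^ 2 ≤ K := le_of_mul_le_mul_right q7 (by positivity)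
  nlinarith

noncomputable def sg (t : ℝ) : ℝ := if 0 ≤ t then 1 else -1

lemma sg_pm (t : ℝ) : sg t = 1 ∨ sg t = -1 := by unfold sg; split_ifs <;> simp

lemma sg_sq (t : ℝ) : sg t * sg t = 1 := by rcases sg_pm t with e | e <;> rw [e] <;> norm_num

lemma sg_ne (t : ℝ) : sg t ≠ 0 := by rcases sg_pm t with e | e <;> rw [e] <;> norm_num

lemma sg_mul (t : ℝ) : sg t * t = |t| := by
  unfold sg; split_ifs with h
  · rw [abs_of_nonneg h]; ring
  · rw [abs_of_neg (by linarith)]; ring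

/-- Core: the bound for an eigenpair of the bipartite matrix, nonnegative eigenvalue. -/
lemma core_pos {I J : Type*} [Fintype I] [Fintype J] [DecidableEq I] [DecidableEq J]
    {N : I → J → ℝ} (hN : ∀ i j, N i j = 0 ∨ N i j = 1 ∨ N i j = -1)
    (h4 : ∀ i i' j j', N i j * N i' j * N i' j' * N i j' ≠ -1)
    (hcase : (∃ (a0 a1 a2 : I) (b0 b1 b2 : J), HexIJ N a0 a1 a2 b0 b1 b2) ∨
      ∃ (a0 a1 a2 a3 : I) (b0 b1 b2 b3 : J), LongIJ N a0 a1 a2 a3 b0 b1 b2 b3)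
    (hneg : ∀ (ε : I → ℝ) (δ : J → ℝ), (∀ i, ε i = 1 ∨ ε i = -1) → (∀ j, δ j = 1 ∨ δ j = -1) →
      ∃ i j, ε i * N i j * δ j = -1)
    {σ μ : ℝ} (hσ : 0 < σ) (hI : 3 ≤ Fintype.card I) (hJ : 3 ≤ Fintype.card J)
    (hlam : LamOK ((Fintype.card I : ℝ) - 2) ((Fintype.card J : ℝ) - 2) (σ ^ 2))
    (x : I → ℝ) (y : J → ℝ)
    (hnz : (∃ i, x i ≠ 0) ∨ ∃ j, y j ≠ 0)
    (e1 : ∀ i, ∑ j, N i j * y j = μ * x i) (e2 : ∀ j, ∑ i, N i j * x i = μ * y j) :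
    μ ≤ σ ∧ (μ = σ → IsGamma N) := by
  set N' : I → J → ℝ := fun i j => sg (x i) * N i j * sg (y j) with hN'
  have hN1 : ∀ i j, N' i j = 0 ∨ N' i j = 1 ∨ N' i j = -1 := by
    intro i j
    simp only [hN']
    rcases hN i j with e | e | e <;> rcases sg_pm (x i) with f | f <;>
      rcases sg_pm (y j) with g | g <;> rw [e, f, g] <;> norm_num
  have hz : ∀ i j, N' i j = 0 ↔ N i j = 0 := by
    intro i j; simp [hN', sg_ne]
  have h41 : ∀ i i' j j', N' i j * N' i' j * N' i' j' * N' i j' ≠ -1 := by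
    intro i i' j j'
    have : N' i j * N' i' j * N' i' j' * N' i j' = N i j * N i' j * N i' j' * N i j' := by
      simp only [hN']
      calc _ = (N i j * N i' j * N i' j' * N i j') * (sg (x i) * sg (x i)) * (sg (x i') * sg (x i'))
            * (sg (y j) * sg (y j)) * (sg (y j') * sg (y j')) := by ring
        _ = _ := by simp only [sg_sq]; ring
    rw [this]; exact h4 _ _ _ _
  have f1 : ∀ i, ∑ j, N' i j * |y j| = μ * |x i| := by
    intro i
    calc ∑ j, N' i j * |y j| = sg (x i) * ∑ j, N i j * y j := by
          rw [mul_sum]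
          refine sum_congr rfl fun j _ => ?_
          simp only [hN']
          rw [← sg_mul]
          linear_combination (sg (x i) * N i j * y j) * sg_sq (y j)
      _ = μ * |x i| := by rw [e1, ← sg_mul]; ring
  have f2 : ∀ j, ∑ i, N' i j * |x i| = μ * |y j| := by
    intro j
    calc ∑ i, N' i j * |x i| = sg (y j) * ∑ i, N i j * x i := by
          rw [mul_sum]
          refine sum_congr rfl fun i _ => ?_
          simp only [hN']
          rw [← sg_mul]
          linear_combination (sg (y j) * N i j * x i) * sg_sq (x i)
      _ = μ * |y j| := by rw [e2, ← sg_mul]; ring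
  have hnz' : (∃ i, |x i| ≠ 0) ∨ ∃ j, |y j| ≠ 0 := by simpa using hnz
  rcases hcase with ⟨a0, a1, a2, b0, b1, b2, h⟩ | ⟨a0, a1, a2, a3, b0, b1, b2, b3, h⟩
  · have h' : HexIJ N' a0 a1 a2 b0 b1 b2 := by
      refine ⟨?_, ?_, ?_, ?_, ?_, ?_, ?_, ?_, ?_⟩
      · rw [Ne, hz]; exact h.n01
      · rw [Ne, hz]; exact h.n02
      · rw [Ne, hz]; exact h.n10
      · rw [Ne, hz]; exact h.n12
      · rw [Ne, hz]; exact h.n20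
      · rw [Ne, hz]; exact h.n21
      · rw [← h.prod]
        simp only [hN']
        calc _ = (N a0 b1 * N a0 b2 * N a1 b0 * N a1 b2 * N a2 b0 * N a2 b1)
                * (sg (x a0) * sg (x a0)) * (sg (x a1) * sg (x a1)) * (sg (x a2) * sg (x a2))
                * (sg (y b0) * sg (y b0)) * (sg (y b1) * sg (y b1)) * (sg (y b2) * sg (y b2)) := by
              ring
          _ = _ := by simp only [sg_sq]; ring
      · intro j; simp only [hz]; exact h.hJ j
      · intro j; simp only [hz]; exact h.hI j
    obtain ⟨c1, c2⟩ := hex_case hN1 h41 ⟨_, _, _, _, _, _, h'⟩ hσ hI hJ hlam (fun i => |x i|)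
      (fun j => |y j|) (fun _ => abs_nonneg _) (fun _ => abs_nonneg _) hnz' f1 f2
    refine ⟨c1, fun hμ => ?_⟩
    obtain ⟨α, α', β, β', ε, δ, hα, hβ, hε, hδ, hh⟩ := c2 hμ
    refine ⟨α, α', β, β', fun i => sg (x i) * ε i, fun j => δ j * sg (y j), hα, hβ,
      fun i => pm_mul (sg_pm _) (hε i), fun j => pm_mul (hδ j) (sg_pm _), ?_⟩
    intro i j
    have := hh i j
    simp only [hN'] at this
    calc N i j = (sg (x i) * sg (x i)) * N i j * (sg (y j) * sg (y j)) := by simp only [sg_sq]; ring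
      _ = sg (x i) * (sg (x i) * N i j * sg (y j)) * sg (y j) := by ring
      _ = _ := by rw [this]; ring
  · have h' : LongIJ N' a0 a1 a2 a3 b0 b1 b2 b3 := by
      refine { h with i02 := ?_, i13 := ?_, j02 := ?_, j13 := ?_ } <;> intro i <;> simp only [hz]
      · exact h.i02 i
      · exact h.i13 i
      · exact h.j02 i
      · exact h.j13 i
    have := long_case hN1 h' (hneg (fun i => sg (x i)) (fun j => sg (y j)) (fun _ => sg_pm _)
      (fun _ => sg_pm _)) hσ hlam (fun i => |x i|)
      (fun j => |y j|) (fun _ => abs_nonneg _) (fun _ => abs_nonneg _) hnz' f1 f2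
    exact ⟨this.le, fun e => absurd e this.ne⟩

lemma core {I J : Type*} [Fintype I] [Fintype J] [DecidableEq I] [DecidableEq J]
    {N : I → J → ℝ} (hN : ∀ i j, N i j = 0 ∨ N i j = 1 ∨ N i j = -1)
    (h4 : ∀ i i' j j', N i j * N i' j * N i' j' * N i j' ≠ -1)
    (hcase : (∃ (a0 a1 a2 : I) (b0 b1 b2 : J), HexIJ N a0 a1 a2 b0 b1 b2) ∨
      ∃ (a0 a1 a2 a3 : I) (b0 b1 b2 b3 : J), LongIJ N a0 a1 a2 a3 b0 b1 b2 b3)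
    (hneg : ∀ (ε : I → ℝ) (δ : J → ℝ), (∀ i, ε i = 1 ∨ ε i = -1) → (∀ j, δ j = 1 ∨ δ j = -1) →
      ∃ i j, ε i * N i j * δ j = -1)
    {σ μ : ℝ} (hσ : 0 < σ) (hI : 3 ≤ Fintype.card I) (hJ : 3 ≤ Fintype.card J)
    (hlam : LamOK ((Fintype.card I : ℝ) - 2) ((Fintype.card J : ℝ) - 2) (σ ^ 2))
    (x : I → ℝ) (y : J → ℝ)
    (hnz : (∃ i, x i ≠ 0) ∨ ∃ j, y j ≠ 0)
    (e1 : ∀ i, ∑ j, N i j * y j = μ * x i) (e2 : ∀ j, ∑ i, N i j * x i = μ * y j) :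
    |μ| ≤ σ ∧ (|μ| = σ → IsGamma N) := by
  rcases abs_cases μ with ⟨h, -⟩ | ⟨h, -⟩
  · rw [h]; exact core_pos hN h4 hcase hneg hσ hI hJ hlam x y hnz e1 e2
  · rw [h]
    refine core_pos hN h4 hcase hneg hσ hI hJ hlam (fun i => - x i) y ?_ ?_ ?_
    · simpa using hnz
    · intro i; rw [e1]; ring
    · intro j
      simp only [mul_neg, sum_neg_distrib]
      rw [e2]; ring

def NegW {V : Type*} (S : V → V → ℝ) (n : ℕ) : Prop :=
  ∃ p : ℕ → V, (∀ i, p (i + n) = p i) ∧ ∏ i ∈ range n, S (p i) (p (i + 1)) = -1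

lemma NegW.of_closed {V : Type*} {S : V → V → ℝ} {n : ℕ} (q : ℕ → V)
    (h0 : q n = q 0) (hq : ∏ i ∈ range n, S (q i) (q (i + 1)) = -1) : NegW S n := by
  refine ⟨fun i => q (i % n), fun i => by simp, ?_⟩
  rw [← hq]
  apply prod_congr rfl
  intro i hi
  have hi' : i < n := mem_range.1 hi
  simp only [Nat.mod_eq_of_lt hi']
  rcases Nat.lt_or_ge (i + 1) n with h | h
  · rw [Nat.mod_eq_of_lt h]
  · have : i + 1 = n := by omega
    rw [this, Nat.mod_self, h0]

lemma prod_rot {f : ℕ → ℝ} {n : ℕ} (hf : ∀ i, f (i + n) = f i) (k : ℕ) :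
    ∏ i ∈ range n, f (i + k) = ∏ i ∈ range n, f i := by
  induction k with
  | zero => rfl
  | succ k ih =>
    rw [← ih]
    have h1 := prod_range_succ (fun i => f (i + k)) n
    have h2 := prod_range_succ' (fun i => f (i + k)) n
    rw [h1] at h2
    have h3 : f (n + k) = f (0 + k) := by rw [add_comm n k, hf, zero_add]
    rw [h3] at h2
    cases n with
    | zero => simp
    | succ n =>
      rw [prod_range_succ (fun i => f (i + (k + 1))), prod_range_succ' (fun i => f (i + k))]
      rw [show ∏ x ∈ range n, f (x + (k + 1)) = ∏ x ∈ range n, f (x + 1 + k) from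
        prod_congr rfl fun x _ => by congr 1; ring]
      congr 1
      rw [zero_add, ← hf k]; congr 1; ring

lemma hex_mk {I J : Type*} {N : I → J → ℝ} (hN : ∀ i j, N i j = 0 ∨ N i j = 1 ∨ N i j = -1)
    (h4 : ∀ i i' j j', N i j * N i' j * N i' j' * N i j' ≠ -1)
    {a0 a1 a2 : I} {b0 b1 b2 : J}
    (prod : N a0 b1 * N a0 b2 * N a1 b0 * N a1 b2 * N a2 b0 * N a2 b1 = -1) :
    HexIJ N a0 a1 a2 b0 b1 b2 := by
  have n01 : N a0 b1 ≠ 0 := by intro e; rw [e] at prod; norm_num at prod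
  have n02 : N a0 b2 ≠ 0 := by intro e; rw [e] at prod; norm_num at prod
  have n10 : N a1 b0 ≠ 0 := by intro e; rw [e] at prod; norm_num at prod
  have n12 : N a1 b2 ≠ 0 := by intro e; rw [e] at prod; norm_num at prod
  have n20 : N a2 b0 ≠ 0 := by intro e; rw [e] at prod; norm_num at prod
  have n21 : N a2 b1 ≠ 0 := by intro e; rw [e] at prod; norm_num at prod
  have hpm : ∀ i j, N i j ≠ 0 → N i j = 1 ∨ N i j = -1 := by
    intro i j h0; have := hN i j; tauto
  have sq : ∀ i j, N i j ≠ 0 → N i j ^ 2 = 1 := by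
    intro i j h0; rcases hpm i j h0 with e | e <;> rw [e] <;> norm_num
  have one : ∀ i i' j j', N i j ≠ 0 → N i' j ≠ 0 → N i' j' ≠ 0 → N i j' ≠ 0 →
      N i j * N i' j * N i' j' * N i j' = 1 := by
    intro i i' j j' h1 h2 h3 h5
    have := pm_mul (pm_mul (pm_mul (hpm _ _ h1) (hpm _ _ h2)) (hpm _ _ h3)) (hpm _ _ h5)
    have h6 := h4 i i' j j'
    tauto
  refine ⟨n01, n02, n10, n12, n20, n21, prod, ?_, ?_⟩
  · intro j
    by_contra hcon
    push Not at hcon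
    obtain ⟨h0, h1, h2⟩ := hcon
    have e1 := one a0 a1 b2 j n02 n12 h1 h0
    have e2 := one a1 a2 b0 j n10 n20 h2 h1
    have e3 := one a2 a0 b1 j n21 n01 h0 h2
    have : (1 : ℝ) = -1 := by
      calc (1 : ℝ) = (N a0 b2 * N a1 b2 * N a1 j * N a0 j) * (N a1 b0 * N a2 b0 * N a2 j * N a1 j)
            * (N a2 b1 * N a0 b1 * N a0 j * N a2 j) := by rw [e1, e2, e3]; norm_num
        _ = (N a0 b1 * N a0 b2 * N a1 b0 * N a1 b2 * N a2 b0 * N a2 b1)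
            * N a0 j ^ 2 * N a1 j ^ 2 * N a2 j ^ 2 := by ring
        _ = -1 := by rw [prod, sq _ _ h0, sq _ _ h1, sq _ _ h2]; norm_num
    norm_num at this
  · intro i
    by_contra hcon
    push Not at hcon
    obtain ⟨h0, h1, h2⟩ := hcon
    have e1 := one a0 i b1 b2 n01 h1 h2 n02
    have e2 := one a1 i b0 b2 n10 h0 h2 n12
    have e3 := one a2 i b0 b1 n20 h0 h1 n21
    have : (1 : ℝ) = -1 := by
      calc (1 : ℝ) = (N a0 b1 * N i b1 * N i b2 * N a0 b2) * (N a1 b0 * N i b0 * N i b2 * N a1 b2)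
            * (N a2 b0 * N i b0 * N i b1 * N a2 b1) := by rw [e1, e2, e3]; norm_num
        _ = (N a0 b1 * N a0 b2 * N a1 b0 * N a1 b2 * N a2 b0 * N a2 b1)
            * N i b0 ^ 2 * N i b1 ^ 2 * N i b2 ^ 2 := by ring
        _ = -1 := by rw [prod, sq _ _ h0, sq _ _ h1, sq _ _ h2]; norm_num
    norm_num at this

/-- shortcut through a common neighbour of `p 0` and `p 4` -/
lemma shortcut {V : Type*} {S : V → V → ℝ} 
    (hS : ∀ u v, S u v = 0 ∨ S u v = 1 ∨ S u v = -1) {n : ℕ} (p : ℕ → V)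
    (hp : ∀ i, p (i + (n + 4)) = p i)
    (hprod : ∏ i ∈ range (n + 4), S (p i) (p (i + 1)) = -1) (w : V)
    (h0 : S (p 0) w ≠ 0) (h4 : S (p 4) w ≠ 0) (hsym : ∀ u v, S u v = S v u) :
    NegW S 6 ∨ NegW S (n + 2) := by
  have hpm : ∀ i j, S i j ≠ 0 → S i j = 1 ∨ S i j = -1 := by
    intro i j h0; have := hS i j; tauto
  rw [add_comm n 4, prod_range_add] at hprod
  set g := ∏ x ∈ range n, S (p (4 + x)) (p (4 + x + 1)) with hg
  simp only [prod_range_succ, prod_range_zero, one_mul, zero_add, Nat.reduceAdd] at hprod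
  set f := S (p 0) (p 1) * S (p 1) (p 2) * S (p 2) (p 3) * S (p 3) (p 4) with hf
  have hfn : f ≠ 0 := by intro e; rw [e] at hprod; norm_num at hprod
  have hfpm : f = 1 ∨ f = -1 := by
    have h1 : S (p 0) (p 1) ≠ 0 := by intro e; apply hfn; rw [hf, e]; ring
    have h2 : S (p 1) (p 2) ≠ 0 := by intro e; apply hfn; rw [hf, e]; ring
    have h3 : S (p 2) (p 3) ≠ 0 := by intro e; apply hfn; rw [hf, e]; ring
    have h4 : S (p 3) (p 4) ≠ 0 := by intro e; apply hfn; rw [hf, e]; ring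
    exact pm_mul (pm_mul (pm_mul (hpm _ _ h1) (hpm _ _ h2)) (hpm _ _ h3)) (hpm _ _ h4)
  have e0 := hpm _ _ h0
  have e4 := hpm _ _ h4
  by_cases hcase : f * S (p 4) w * S (p 0) w = -1
  · left
    apply NegW.of_closed (fun i => if i ≤ 4 then p i else if i = 5 then w else p 0)
    · simp
    · simp only [prod_range_succ, prod_range_zero]
      norm_num
      rw [← hf, hsym w (p 0)]
      exact hcase
  · right
    have h1 : f * S (p 4) w * S (p 0) w = 1 := by
      have := pm_mul (pm_mul hfpm e4) e0
      tauto
    apply NegW.of_closed (fun i => match i with | 0 => p 0 | 1 => w | (k+2) => p (k + 4))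
    · simpa using hp 0
    · rw [prod_range_succ', prod_range_succ']
      simp only [zero_add]
      have : ∏ k ∈ range n, S (p (k + 4)) (p (k + 1 + 4)) = g := by
        rw [hg]
        exact prod_congr rfl fun x _ => by
          rw [add_comm 4 x, show x + 1 + 4 = x + 4 + 1 by ring]
      rw [this, hsym w (p 4)]
      rcases hfpm with ef | ef <;> rcases e0 with g0 | g0 <;> rcases e4 with g4 | g4 <;>
        rw [ef, g0, g4] at h1 <;> rw [ef] at hprod <;> rw [g0, g4] <;> linarith

lemma dichotomy {V : Type*} {S : V → V → ℝ} (c : V → Bool)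
    (hS : ∀ u v, S u v = 0 ∨ S u v = 1 ∨ S u v = -1) (hsym : ∀ u v, S u v = S v u)
    (hbip : ∀ u v, S u v ≠ 0 → c u ≠ c v)
    (h4 : ∀ u v w t, S u v * S v w * S w t * S t u ≠ -1) (hneg : ∃ n, NegW S n) :
    (∃ (a0 a1 a2 : {v // c v = true}) (b0 b1 b2 : {v // ¬ c v = true}),
      HexIJ (fun i j => S i.1 j.1) a0 a1 a2 b0 b1 b2) ∨
    ∃ (a0 a1 a2 a3 : {v // c v = true}) (b0 b1 b2 b3 : {v // ¬ c v = true}),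
      LongIJ (fun i j => S i.1 j.1) a0 a1 a2 a3 b0 b1 b2 b3 := by
  classical
  set n := Nat.find hneg with hn
  have hmin : ∀ m, NegW S m → n ≤ m := fun m hm => Nat.find_min' hneg hm
  obtain ⟨p0, hp0, hprod0⟩ := Nat.find_spec hneg
  rw [← hn] at hp0 hprod0
  have shift : ∀ k, (∀ i, p0 (i + n + k) = p0 (i + k)) ∧
      ∏ i ∈ range n, S (p0 (i + k)) (p0 (i + 1 + k)) = -1 := by
    intro k
    refine ⟨fun i => by rw [show i + n + k = i + k + n by ring, hp0], ?_⟩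
    rw [← hprod0, ← prod_rot (f := fun i => S (p0 i) (p0 (i + 1))) (n := n) _ k]
    · exact prod_congr rfl fun i _ => by rw [show i + 1 + k = i + k + 1 by ring]
    · intro i
      rw [show i + n + 1 = i + 1 + n by ring, hp0, hp0]
  have npos : 0 < n := by
    rcases Nat.eq_zero_or_pos n with h | h
    · rw [h] at hprod0; norm_num at hprod0
    · exact h
  have adj0 : ∀ i, S (p0 i) (p0 (i + 1)) ≠ 0 := by
    intro i e
    have := (shift i).2
    rw [prod_eq_zero (i := 0) (by simpa using npos) (by
      rw [zero_add, zero_add, add_comm 1 i, e])] at this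
    norm_num at this
  -- choose the start on the left
  obtain ⟨p, hp, hprod, hcp⟩ : ∃ p : ℕ → V, (∀ i, p (i + n) = p i) ∧
      ∏ i ∈ range n, S (p i) (p (i + 1)) = -1 ∧ c (p 0) = true := by
    by_cases hc0 : c (p0 0) = true
    · exact ⟨p0, hp0, hprod0, hc0⟩
    · refine ⟨fun i => p0 (i + 1), (shift 1).1, (shift 1).2, ?_⟩
      have := hbip _ _ (adj0 0)
      simp only [zero_add] at this ⊢
      revert this hc0
      cases c (p0 0) <;> cases c (p0 1) <;> simp
  clear shift adj0 hprod0 hp0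
  have rot : ∀ k, ∏ i ∈ range n, S (p (i + k)) (p (i + 1 + k)) = -1 := by
    intro k
    rw [← hprod, ← prod_rot (f := fun i => S (p i) (p (i + 1))) (n := n) _ k]
    · exact prod_congr rfl fun i _ => by rw [show i + 1 + k = i + k + 1 by ring]
    · intro i
      rw [show i + n + 1 = i + 1 + n by ring, hp, hp]
  have adj : ∀ i, S (p i) (p (i + 1)) ≠ 0 := by
    intro i e
    have := rot i
    rw [prod_eq_zero (i := 0) (by simpa using npos) (by
      rw [zero_add, zero_add, add_comm 1 i, e])] at this
    norm_num at this
  have col : ∀ i, c (p (2 * i)) = true ∧ c (p (2 * i + 1)) = false := by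
    have step : ∀ i, c (p i) ≠ c (p (i + 1)) := fun i => hbip _ _ (adj i)
    intro i
    induction i with
    | zero =>
      refine ⟨hcp, ?_⟩
      have := step 0
      rw [hcp] at this
      simpa using this.symm
    | succ i ih =>
      have s1 := step (2 * i + 1)
      have s2 := step (2 * i + 2)
      rw [show 2 * (i + 1) = 2 * i + 2 by ring]
      rw [ih.2] at s1
      have s3 : c (p (2 * i + 2)) = true := by simpa using s1.symm
      rw [s3] at s2
      exact ⟨s3, by simpa using s2.symm⟩
  have heven : Even n := by
    rcases Nat.even_or_odd n with h | ⟨m, h⟩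
    · exact h
    · have h1 := (col m).2
      rw [← h] at h1
      have h2 := hp 0
      rw [zero_add] at h2
      rw [h2, hcp] at h1
      cases h1
  have hn6 : 6 ≤ n := by
    obtain ⟨m, hm⟩ := heven
    by_contra hlt
    have : m = 1 ∨ m = 2 := by omega
    rcases this with h | h
    · have hn2 : n = 2 := by omega
      rw [hn2] at hprod hp
      have := hp 0
      simp only [prod_range_succ, prod_range_zero, one_mul, zero_add, Nat.reduceAdd] at hprod this
      rw [this, hsym (p 1) (p 0)] at hprod
      nlinarith [sq_nonneg (S (p 0) (p 1))]
    · have hn2 : n = 4 := by omega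
      rw [hn2] at hprod hp
      have := hp 0
      simp only [prod_range_succ, prod_range_zero, one_mul, zero_add, Nat.reduceAdd] at hprod this
      rw [this] at hprod
      exact h4 _ _ _ _ hprod
  have ct : ∀ i, c (p (2 * i)) = true := fun i => (col i).1
  have cf : ∀ i, ¬ c (p (2 * i + 1)) = true := fun i => by rw [(col i).2]; simp
  by_cases h6 : n = 6
  · left
    rw [h6] at hprod hp
    have h06 := hp 0
    simp only [prod_range_succ, prod_range_zero, one_mul, zero_add, Nat.reduceAdd] at hprod h06
    rw [h06] at hprod
    refine ⟨⟨p 0, ct 0⟩, ⟨p 2, ct 1⟩, ⟨p 4, ct 2⟩, ⟨p 3, cf 1⟩, ⟨p 5, cf 2⟩, ⟨p 1, cf 0⟩, ?_⟩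
    apply hex_mk
    · intro i j; exact hS _ _
    · intro i i' j j'
      have := h4 i.1 j.1 i'.1 j'.1
      rw [hsym j.1 i'.1, hsym j'.1 i.1] at this
      exact this
    · simp only
      rw [hsym (p 1) (p 2), hsym (p 3) (p 4), hsym (p 5) (p 0)] at hprod
      linarith
  · right
    have hn8 : 8 ≤ n := by
      obtain ⟨m, hm⟩ := heven; omega
    have nc : ∀ k w, S (p k) w = 0 ∨ S (p (k + 4)) w = 0 := by
      intro k w
      by_contra hcon
      push Not at hcon
      obtain ⟨m, hm⟩ : ∃ m, n = m + 4 := ⟨n - 4, by omega⟩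
      have := shortcut hS (n := m) (fun i => p (i + k))
        (fun i => by rw [← hm, show i + n + k = i + k + n by ring, hp])
        (by rw [← hm]; exact rot k) w (by simpa using hcon.1) (by
          rw [show 4 + k = k + 4 by ring]; exact hcon.2) hsym
      rcases this with h | h
      · have := hmin _ h; omega
      · have := hmin _ h; omega
    have adj' : ∀ i, S (p (i + 1)) (p i) ≠ 0 := fun i => by rw [hsym]; exact adj i
    -- p k and p (k+2), p (k+4), p (k+6) are distinct
    have d2 : ∀ k, p k ≠ p (k + 2) := by
      intro k e
      have := nc k (p (k + 3))
      rcases this with h | h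
      · rw [e] at h; exact adj _ h
      · exact adj' (k + 3) h
    have d4 : ∀ k, p k ≠ p (k + 4) := by
      intro k e
      have := nc k (p (k + 1))
      rw [← e] at this
      rcases this with h | h <;> exact adj _ h
    have d6 : ∀ k, p k ≠ p (k + 6) := by
      intro k e
      have := nc k (p (k + 5))
      rcases this with h | h
      · rw [e] at h; exact adj' (k + 5) h
      · exact adj (k + 4) h
    have sub : ∀ {P : V → Prop} {u v : V} (hu : P u) (hv : P v), u ≠ v →
        (⟨u, hu⟩ : {v // P v}) ≠ ⟨v, hv⟩ := by
      intro P u v hu hv huv e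
      exact huv (congrArg Subtype.val e)
    refine ⟨⟨p 0, ct 0⟩, ⟨p 2, ct 1⟩, ⟨p 4, ct 2⟩, ⟨p 6, ct 3⟩,
      ⟨p 1, cf 0⟩, ⟨p 3, cf 1⟩, ⟨p 5, cf 2⟩, ⟨p 7, cf 3⟩, ?_⟩
    refine ⟨sub _ _ (d2 0), sub _ _ (d4 0), sub _ _ (d6 0), sub _ _ (d2 2), sub _ _ (d4 2),
      sub _ _ (d2 4), sub _ _ (d2 1), sub _ _ (d4 1), sub _ _ (d6 1), sub _ _ (d2 3),
      sub _ _ (d4 3), sub _ _ (d2 5), ?_, ?_, ?_, ?_⟩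
    · intro i
      have := nc 1 i.1
      simp only
      rw [hsym i.1, hsym i.1]; exact this
    · intro i
      have := nc 3 i.1
      simp only
      rw [hsym i.1, hsym i.1]; exact this
    · intro i
      exact nc 0 i.1
    · intro i
      exact nc 2 i.1

lemma exists_neg {V : Type*} {S : V → V → ℝ} 
    (hS : ∀ u v, S u v = 0 ∨ S u v = 1 ∨ S u v = -1) 
    (hneg : ∃ n, NegW S n) (ε : V → ℝ) (hε : ∀ v, ε v = 1 ∨ ε v = -1) :
    ∃ u v, ε u * S u v * ε v = -1 := by
  by_contra hcon
  push Not at hcon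
  obtain ⟨n, p, hp, hprod⟩ := hneg
  have h0 : ∀ u v, 0 ≤ ε u * S u v * ε v := by
    intro u v
    have := hcon u v
    rcases hS u v with e | e | e <;> rcases hε u with f | f <;> rcases hε v with g | g <;>
      rw [e, f, g] at this ⊢ <;> first | (norm_num; done) | (exfalso; apply this; norm_num; done)
  have h1 : 0 ≤ ∏ i ∈ range n, (ε (p i) * S (p i) (p (i + 1)) * ε (p (i + 1))) :=
    prod_nonneg fun i _ => h0 _ _
  rw [prod_mul_distrib, prod_mul_distrib, hprod,
    prod_rot (f := fun i => ε (p i)) (fun i => by rw [hp]) 1] at h1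
  have h2 : 0 < (∏ i ∈ range n, ε (p i)) ^ 2 := by
    have : ∏ i ∈ range n, ε (p i) ≠ 0 := prod_ne_zero_iff.2 fun i _ => by
      rcases hε (p i) with e | e <;> rw [e] <;> norm_num
    positivity
  nlinarith

lemma SignedGraph.sign_trip {V : Type*} (Γ : SignedGraph V) (u v : V) :
    Γ.sign u v = 0 ∨ Γ.sign u v = 1 ∨ Γ.sign u v = -1 := by
  by_cases h : Γ.G.Adj u v
  · exact Or.inr (Γ.sign_edge u v h)
  · exact Or.inl (Γ.sign_nonedge u v h)

lemma SignedGraph.adj_of {V : Type*} (Γ : SignedGraph V) {u v : V} (h : Γ.sign u v ≠ 0) :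
    Γ.G.Adj u v := by
  by_contra hh
  exact h (Γ.sign_nonedge u v hh)

lemma SignedGraph.walk_prod {V : Type*} (Γ : SignedGraph V) {u v : V} (w : Γ.G.Walk u v) :
    (w.edges.map Γ.edgeSign).prod =
      ∏ i ∈ range w.length, Γ.sign (w.getVert i) (w.getVert (i + 1)) := by
  induction w with
  | nil => simp
  | cons h p ih =>
    rw [SimpleGraph.Walk.length_cons, prod_range_succ']
    simp only [SimpleGraph.Walk.edges_cons, List.map_cons, List.prod_cons, ih,
      SimpleGraph.Walk.getVert_cons_succ, SimpleGraph.Walk.getVert_zero]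
    rw [mul_comm]
    congr 1

lemma SignedGraph.negW_of {V : Type*} (Γ : SignedGraph V) (hU : Γ.Unbalanced) :
    ∃ n, NegW Γ.sign n := by
  obtain ⟨u, w, -, hw⟩ := hU
  rw [Γ.walk_prod] at hw
  exact ⟨w.length, NegW.of_closed w.getVert (by simp) hw⟩

lemma SignedGraph.no_neg4 {V : Type*} (Γ : SignedGraph V)
    (hC4 : ∀ (u : V) (w : Γ.G.Walk u u), Γ.IsNegCycle w → w.length ≠ 4) (u v w t : V) :
    Γ.sign u v * Γ.sign v w * Γ.sign w t * Γ.sign t u ≠ -1 := by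
  intro h
  have a1 : Γ.G.Adj u v := Γ.adj_of (by intro e; rw [e] at h; norm_num at h)
  have a2 : Γ.G.Adj v w := Γ.adj_of (by intro e; rw [e] at h; norm_num at h)
  have a3 : Γ.G.Adj w t := Γ.adj_of (by intro e; rw [e] at h; norm_num at h)
  have a4 : Γ.G.Adj t u := Γ.adj_of (by intro e; rw [e] at h; norm_num at h)
  have uw : u ≠ w := by
    rintro rfl
    rw [Γ.sign_symm v u, Γ.sign_symm t u] at h
    nlinarith [sq_nonneg (Γ.sign u v * Γ.sign u t)]
  have vt : v ≠ t := by
    rintro rfl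
    rw [Γ.sign_symm w v, Γ.sign_symm v u] at h
    nlinarith [sq_nonneg (Γ.sign u v * Γ.sign v w)]
  refine hC4 u (.cons a1 (.cons a2 (.cons a3 (.cons a4 .nil)))) ⟨?_, ?_⟩ (by simp)
  · have := a1.ne; have := a2.ne; have := a3.ne; have := a4.ne
    have := a1.ne'; have := a2.ne'; have := a3.ne'; have := a4.ne'
    rw [SimpleGraph.Walk.cons_isCycle_iff]
    constructor
    · simp [SimpleGraph.Walk.cons_isPath_iff, *, uw.symm, vt.symm]
    · simp [*, uw.symm, vt.symm]
  · simp only [SimpleGraph.Walk.edges_cons, SimpleGraph.Walk.edges_nil, List.map_cons,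
      List.map_nil, List.prod_cons, List.prod_nil, SignedGraph.edgeSign, Sym2.lift_mk]
    rw [← h]; ring

lemma exists_vec {r s σ : ℝ} (hr : 3 ≤ r) (hrs : r ≤ s) (hσ : 0 < σ)
    (hlam : LamOK (r - 2) (s - 2) (σ ^ 2)) :
    ∃ ξ η : ℝ, (ξ ≠ 0 ∨ η ≠ 0) ∧ (σ ^ 2 - 2 * s + 3) * η = (s - 3) * σ * ξ ∧
      (σ ^ 2 - 2 * r + 3) * ξ = (r - 3) * σ * η := by
  have hp := hlam.1
  rcases hrs.trans' hr |>.eq_or_lt with h | h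
  · have hr3 : r = 3 := by linarith
    subst hr3
    subst h
    have : (σ ^ 2 - 3) ^ 2 = 0 := by nlinarith
    have : σ ^ 2 - 3 = 0 := by simpa using this
    exact ⟨1, 1, Or.inl one_ne_zero, by linarith, by linarith⟩
  · refine ⟨σ ^ 2 - 2 * s + 3, (s - 3) * σ, Or.inr ?_, by ring, ?_⟩
    · have : 0 < s - 3 := by linarith
      positivity
    · linear_combination hp

lemma gm_eigen {I J : Type*} [Fintype I] [Fintype J] [DecidableEq I] [DecidableEq J]
    {α α' : I} {β β' : J} (hα : α ≠ α') (hβ : β ≠ β') {σ : ℝ} (hσ : 0 < σ)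
    (hI : 3 ≤ Fintype.card I) (hIJ : Fintype.card I ≤ Fintype.card J)
    (hlam : LamOK ((Fintype.card I : ℝ) - 2) ((Fintype.card J : ℝ) - 2) (σ ^ 2)) :
    ∃ (x : I → ℝ) (y : J → ℝ), ((∃ i, x i ≠ 0) ∨ ∃ j, y j ≠ 0) ∧
      (∀ i, ∑ j, gm α α' β β' i j * y j = σ * x i) ∧
      (∀ j, ∑ i, gm α α' β β' i j * x i = σ * y j) := by
  obtain ⟨ξ, η, hne, h1, h2⟩ := exists_vec (r := Fintype.card I) (s := Fintype.card J)
    (by exact_mod_cast hI) (by exact_mod_cast hIJ) hσ hlam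
  refine ⟨fun i => if i = α then ξ else if i = α' then σ * η + ξ else σ * η + 2 * ξ,
    fun j => if j = β then η else if j = β' then σ * ξ + η else σ * ξ + 2 * η, ?_, ?_, ?_⟩
  · rcases hne with h | h
    · exact Or.inl ⟨α, by simpa using h⟩
    · exact Or.inr ⟨β, by simpa using h⟩
  · intro i
    by_cases i1 : i = α
    · rw [sum_of_const _ hβ 0 (fun j j1 j2 => by simp [gm, i1, j1, j2])]
      simp [gm, i1, hβ, hβ.symm]
    by_cases i2 : i = α'
    · rw [sum_of_const _ hβ (σ * ξ + 2 * η) (fun j j1 j2 => by simp [gm, i1, i2, j1, j2, hα.symm])]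
      simp [gm, i2, hβ, hβ.symm, hα.symm]
      linear_combination -h1
    · rw [sum_of_const _ hβ (σ * ξ + 2 * η) (fun j j1 j2 => by simp [gm, i1, i2, j1, j2])]
      simp [gm, i1, i2, hβ.symm]
      linear_combination -h1
  · intro j
    by_cases j1 : j = β
    · rw [sum_of_const _ hα 0 (fun i i1 i2 => by simp [gm, j1, i1, i2])]
      simp [gm, j1, hβ, hα.symm]
    by_cases j2 : j = β'
    · rw [sum_of_const _ hα (σ * η + 2 * ξ) (fun i i1 i2 => by
        simp [gm, i1, i2, j2, hβ.symm])]
      simp [gm, j2, hβ.symm, hα.symm]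
      linear_combination -h2
    · rw [sum_of_const _ hα (σ * η + 2 * ξ) (fun i i1 i2 => by simp [gm, i1, i2, j1])]
      simp [gm, j1, j2, hα.symm]
      linear_combination -h2

lemma gammaSign_eq {r s : ℕ} (hr : 3 ≤ r) (hs : 3 ≤ s) (x : Fin r) (y : Fin s) :
    gammaSign r s x y = gm (⟨r - 1, by omega⟩ : Fin r) ⟨0, by omega⟩
      (⟨s - 1, by omega⟩ : Fin s) ⟨0, by omega⟩ x y := by
  simp [gammaSign, gm, Fin.ext_iff]

lemma gammaMatrix_eigen {r s : ℕ} (hr : 3 ≤ r) (hrs : r ≤ s) {σ : ℝ} (hσ : 0 < σ)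
    (hlam : LamOK ((r : ℝ) - 2) ((s : ℝ) - 2) (σ ^ 2)) :
    ∃ w : Fin r ⊕ Fin s → ℝ, w ≠ 0 ∧ ∀ a, ∑ b, gammaMatrix r s a b * w b = σ * w a := by
  obtain ⟨x, y, hne, h1, h2⟩ := gm_eigen (α := (⟨r - 1, by omega⟩ : Fin r))
    (α' := ⟨0, by omega⟩) (β := (⟨s - 1, by omega⟩ : Fin s)) (β' := ⟨0, by omega⟩)
    (by simp [Fin.ext_iff]; omega) (by simp [Fin.ext_iff]; omega) hσ (by simpa using hr)
    (by simpa using hrs) (by simpa using hlam)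
  refine ⟨Sum.elim x y, ?_, ?_⟩
  · intro h
    rcases hne with ⟨i, hi⟩ | ⟨j, hj⟩
    · exact hi (congrFun h (Sum.inl i))
    · exact hj (congrFun h (Sum.inr j))
  · intro a
    rw [Fintype.sum_sum_type]
    rcases a with i | j
    · simp [gammaMatrix, gammaSign_eq hr (hr.trans hrs), h1]
    · simp [gammaMatrix, gammaSign_eq hr (hr.trans hrs), h2]

lemma exists_eigenvalue {V : Type*} [Fintype V] [DecidableEq V] {A : Matrix V V ℝ}
    (hA : A.IsHermitian) {σ : ℝ} {z : V → ℝ} (hz : z ≠ 0) (h : A *ᵥ z = σ • z) :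
    ∃ i, hA.eigenvalues i = σ := by
  have h1 : Module.End.HasEigenvalue (Matrix.toLin' A) σ :=
    Module.End.hasEigenvalue_of_hasEigenvector (x := z)
      ⟨Module.End.mem_eigenspace_iff.2 (by rw [Matrix.toLin'_apply, h]), hz⟩
  have h2 := h1.mem_spectrum
  rw [Matrix.spectrum_toLin', hA.spectrum_real_eq_range_eigenvalues] at h2
  exact h2

lemma equiv_two {I : Type*} [Fintype I] [DecidableEq I] {n : ℕ} (h : Fintype.card I = n)
    {a b : I} (hab : a ≠ b) {p q : Fin n} (hpq : p ≠ q) :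
    ∃ f : I ≃ Fin n, f a = p ∧ f b = q := by
  obtain ⟨f0⟩ : Nonempty (I ≃ Fin n) := ⟨Fintype.equivFinOfCardEq h⟩
  set f1 := f0.trans (Equiv.swap (f0 a) p) with hf1
  have h1 : f1 a = p := by simp [hf1]
  refine ⟨f1.trans (Equiv.swap (f1 b) q), ?_, by simp⟩
  rw [Equiv.trans_apply, h1]
  apply Equiv.swap_apply_of_ne_of_ne _ hpq
  rw [← h1]
  exact fun e => hab (f1.injective e)

lemma gm_map {I J I' J' : Type*} [DecidableEq I] [DecidableEq J] [DecidableEq I'] [DecidableEq J']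
    (f : I ≃ I') (g : J ≃ J') (α α' : I) (β β' : J) (i : I) (j : J) :
    gm (f α) (f α') (g β) (g β') (f i) (g j) = gm α α' β β' i j := by
  simp [gm]

lemma iso_of_isGamma {V : Type*} [Fintype V] [DecidableEq V] (Γ : SignedGraph V)
    {r s : ℕ} (hr : 3 ≤ r) (hs : 3 ≤ s)
    (c : V → Bool) (hbip : ∀ u v, Γ.sign u v ≠ 0 → c u ≠ c v)
    (hI : Fintype.card {v // c v = true} = r) (hJ : Fintype.card {v // ¬ c v = true} = s)
    (hG : IsGamma (fun (i : {v // c v = true}) (j : {v // ¬ c v = true}) => Γ.sign i.1 j.1)) :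
    ∃ (e : V ≃ (Fin r ⊕ Fin s)) (ε : V → ℝ), (∀ v, ε v = 1 ∨ ε v = -1) ∧
        ∀ a b, Γ.sign a b = ε a * gammaMatrix r s (e a) (e b) * ε b := by
  obtain ⟨α, α', β, β', ε, δ, hα, hβ, hε, hδ, hN⟩ := hG
  obtain ⟨f, f1, f2⟩ := equiv_two hI hα (p := (⟨r - 1, by omega⟩ : Fin r))
    (q := ⟨0, by omega⟩) (by simp [Fin.ext_iff]; omega)
  obtain ⟨g, g1, g2⟩ := equiv_two hJ hβ (p := (⟨s - 1, by omega⟩ : Fin s))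
    (q := ⟨0, by omega⟩) (by simp [Fin.ext_iff]; omega)
  set e : V ≃ (Fin r ⊕ Fin s) :=
    (Equiv.sumCompl (fun v => c v = true)).symm.trans (Equiv.sumCongr f g) with he
  have e1 : ∀ v (h : c v = true), e v = Sum.inl (f ⟨v, h⟩) := by
    intro v h
    simp [he, Equiv.sumCompl_symm_apply_of_pos (p := fun v => c v = true) h]
  have e2 : ∀ v (h : ¬ c v = true), e v = Sum.inr (g ⟨v, h⟩) := by
    intro v h
    simp [he, Equiv.sumCompl_symm_apply_of_neg (p := fun v => c v = true) h]
  set E : V → ℝ := fun v => if h : c v = true then ε ⟨v, h⟩ else δ ⟨v, h⟩ with hE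
  have E1 : ∀ v (h : c v = true), E v = ε ⟨v, h⟩ := fun v h => by simp only [hE]; rw [dif_pos h]
  have E2 : ∀ v (h : ¬ c v = true), E v = δ ⟨v, h⟩ := fun v h => by simp only [hE]; rw [dif_neg h]
  have hz : ∀ u v, c u = c v → Γ.sign u v = 0 := by
    intro u v h
    by_contra hh
    exact hbip u v hh h
  have key : ∀ u v (hu : c u = true) (hv : ¬ c v = true),
      Γ.sign u v = ε ⟨u, hu⟩ * gammaSign r s (f ⟨u, hu⟩) (g ⟨v, hv⟩) * δ ⟨v, hv⟩ := by
    intro u v hu hv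
    rw [gammaSign_eq hr hs, ← f1, ← f2, ← g1, ← g2, gm_map]
    exact hN ⟨u, hu⟩ ⟨v, hv⟩
  refine ⟨e, E, ?_, ?_⟩
  · intro v
    by_cases h : c v = true
    · rw [E1 v h]; exact hε _
    · rw [E2 v h]; exact hδ _
  · intro a b
    by_cases ha : c a = true <;> by_cases hb : c b = true
    · rw [e1 a ha, e1 b hb, hz a b (by rw [ha, hb])]
      simp [gammaMatrix]
    · rw [e1 a ha, e2 b hb, E1 a ha, E2 b hb, key a b ha hb]
      simp [gammaMatrix]
    · rw [e2 a ha, e1 b hb, E2 a ha, E1 b hb, Γ.sign_symm, key b a hb ha]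
      simp [gammaMatrix]; ring
    · rw [e2 a ha, e2 b hb, hz a b (by simp at ha hb; rw [ha, hb])]
      simp [gammaMatrix]

lemma main_core {V : Type*} [Fintype V] [DecidableEq V] (Γ : SignedGraph V)
    {r s : ℕ} (hr : 3 ≤ r) (hs : 3 ≤ s)
    (c : V → Bool) (hbip : ∀ u v, Γ.sign u v ≠ 0 → c u ≠ c v)
    (hI : Fintype.card {v // c v = true} = r) (hJ : Fintype.card {v // ¬ c v = true} = s)
    (h4 : ∀ u v w t, Γ.sign u v * Γ.sign v w * Γ.sign w t * Γ.sign t u ≠ -1)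
    (hneg : ∃ n, NegW Γ.sign n) {σ μ : ℝ} (hσ : 0 < σ)
    (hlam : LamOK ((r : ℝ) - 2) ((s : ℝ) - 2) (σ ^ 2))
    (z : V → ℝ) (hz : z ≠ 0) (he : ∀ u, ∑ v, Γ.sign u v * z v = μ * z u) :
    |μ| ≤ σ ∧ (|μ| = σ →
      IsGamma (fun (i : {v // c v = true}) (j : {v // ¬ c v = true}) => Γ.sign i.1 j.1)) := by
  have hz0 : ∀ u v, c u = c v → Γ.sign u v = 0 := by
    intro u v h
    by_contra hh
    exact hbip u v hh h
  refine core (N := fun (i : {v // c v = true}) (j : {v // ¬ c v = true}) => Γ.sign i.1 j.1)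
    (fun i j => Γ.sign_trip _ _) ?_ (dichotomy c Γ.sign_trip Γ.sign_symm hbip h4 hneg) ?_ hσ
    (by omega) (by omega) (by rw [hI, hJ]; exact hlam) (fun i => z i.1) (fun j => z j.1) ?_ ?_ ?_
  · intro i i' j j'
    have := h4 i j i' j'
    rwa [Γ.sign_symm j.1 i'.1, Γ.sign_symm j'.1 i.1] at this
  · intro ε δ hε hδ
    set E : V → ℝ := fun v => if h : c v = true then ε ⟨v, h⟩ else δ ⟨v, h⟩ with hE
    have E1 : ∀ v (h : c v = true), E v = ε ⟨v, h⟩ := fun v h => by simp only [hE]; rw [dif_pos h]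
    have E2 : ∀ v (h : ¬ c v = true), E v = δ ⟨v, h⟩ :=
      fun v h => by simp only [hE]; rw [dif_neg h]
    obtain ⟨u, v, huv⟩ := exists_neg Γ.sign_trip hneg E (by
      intro v
      by_cases h : c v = true
      · rw [E1 v h]; exact hε _
      · rw [E2 v h]; exact hδ _)
    have hne : c u ≠ c v := by
      intro h
      rw [hz0 u v h] at huv
      norm_num at huv
    by_cases hu : c u = true
    · have hv : ¬ c v = true := fun h => hne (by rw [hu, h])
      refine ⟨⟨u, hu⟩, ⟨v, hv⟩, ?_⟩
      rwa [E1 u hu, E2 v hv] at huv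
    · have hv : c v = true := by
        by_contra h
        apply hne
        simp at hu h
        rw [hu, h]
      refine ⟨⟨v, hv⟩, ⟨u, hu⟩, ?_⟩
      rw [E2 u hu, E1 v hv, Γ.sign_symm u v] at huv
      rw [← huv]; ring
  · obtain ⟨v, hv⟩ := Function.ne_iff.1 hz
    by_cases h : c v = true
    · exact Or.inl ⟨⟨v, h⟩, hv⟩
    · exact Or.inr ⟨⟨v, h⟩, hv⟩
  · intro i
    have := he i.1
    rw [← Fintype.sum_subtype_add_sum_subtype (fun v => c v = true)] at this
    rw [← this, Finset.sum_eq_zero (s := (univ : Finset {v // c v = true})), zero_add]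
    intro v _
    rw [hz0 _ _ (by rw [i.2, v.2]), zero_mul]
  · intro j
    have := he j.1
    rw [← Fintype.sum_subtype_add_sum_subtype (fun v => c v = true)] at this
    rw [← this, Finset.sum_eq_zero (s := (univ : Finset {v // ¬ c v = true})), add_zero]
    · exact Finset.sum_congr rfl fun v _ => by rw [Γ.sign_symm]
    intro v _
    have h1 := j.2
    have h2 := v.2
    rw [hz0 _ _ (by simp at h1 h2; rw [h1, h2]), zero_mul]

/-- Spectral Turán theorem: an unbalanced signed `r` by `s` bipartite graph (`3 ≤ r ≤ s`)
with no negative 4-cycle has spectral radius at most `f(r,s)`, with equality iff it is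
switching isomorphic to `Γ_{r,s}`. -/
theorem spectral_turan_bipartite {V : Type*} [Fintype V] [DecidableEq V] [Nonempty V]
    (Γ : SignedGraph V) (r s : ℕ) (hr : 3 ≤ r) (hrs : r ≤ s)
    (c : V → Bool) (hc : ∀ u v, Γ.G.Adj u v → c u ≠ c v)
    (hcr : (Finset.univ.filter fun v => c v = true).card = r)
    (hcs : (Finset.univ.filter fun v => c v = false).card = s)
    (hU : Γ.Unbalanced)
    (hC4 : ∀ (u : V) (w : Γ.G.Walk u u), Γ.IsNegCycle w → w.length ≠ 4)
    (hA : Γ.adjMatrix.IsHermitian) :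
    Finset.univ.sup' Finset.univ_nonempty (fun i => |hA.eigenvalues i|) ≤
      Real.sqrt (((((r : ℝ) - 1) * ((s : ℝ) - 1) + 2) + Real.sqrt ((((r : ℝ) - 1) * ((s : ℝ) - 1) + 2) ^ 2 - 4 * (2 * (r : ℝ) - 3) * (2 * (s : ℝ) - 3))) / 2) ∧
    (Finset.univ.sup' Finset.univ_nonempty (fun i => |hA.eigenvalues i|) =
      Real.sqrt (((((r : ℝ) - 1) * ((s : ℝ) - 1) + 2) + Real.sqrt ((((r : ℝ) - 1) * ((s : ℝ) - 1) + 2) ^ 2 - 4 * (2 * (r : ℝ) - 3) * (2 * (s : ℝ) - 3))) / 2) ↔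
      ∃ (e : V ≃ (Fin r ⊕ Fin s)) (ε : V → ℝ), (∀ v, ε v = 1 ∨ ε v = -1) ∧
        ∀ a b, Γ.sign a b = ε a * gammaMatrix r s (e a) (e b) * ε b) := by
  have hs : 3 ≤ s := hr.trans hrs
  have hlam0 := lamOK_of (r : ℝ) (s : ℝ) (by exact_mod_cast hr) (by exact_mod_cast hs)
  set lam : ℝ := ((((r : ℝ) - 1) * ((s : ℝ) - 1) + 2) + Real.sqrt ((((r : ℝ) - 1) * ((s : ℝ) - 1) + 2) ^ 2 - 4 * (2 * (r : ℝ) - 3) * (2 * (s : ℝ) - 3))) / 2 with hlamdef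
  have lpos : 0 < lam := hlam0.2.2.2.2
  set σ := Real.sqrt lam with hσdef
  have hσ : 0 < σ := Real.sqrt_pos.2 lpos
  have hlam : LamOK ((r : ℝ) - 2) ((s : ℝ) - 2) (σ ^ 2) := by
    rw [hσdef, Real.sq_sqrt lpos.le]; exact hlam0
  have hbip : ∀ u v, Γ.sign u v ≠ 0 → c u ≠ c v := fun u v h => hc u v (Γ.adj_of h)
  have hI : Fintype.card {v // c v = true} = r := by rw [Fintype.card_subtype]; exact hcr
  have hJ : Fintype.card {v // ¬ c v = true} = s := by
    rw [Fintype.card_subtype, ← hcs]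
    congr 1
    ext v
    simp
  have hmain : ∀ i, |hA.eigenvalues i| ≤ σ ∧ (|hA.eigenvalues i| = σ →
      IsGamma (fun (i : {v // c v = true}) (j : {v // ¬ c v = true}) => Γ.sign i.1 j.1)) := by
    intro i
    refine main_core Γ hr hs c hbip hI hJ (Γ.no_neg4 hC4) (Γ.negW_of hU) hσ hlam
      (hA.eigenvectorBasis i) ?_ ?_
    · intro h
      have h1 := hA.eigenvectorBasis.orthonormal.ne_zero i
      apply h1
      ext v
      exact congrFun h v
    · intro u
      exact congrFun (hA.mulVec_eigenvectorBasis i) u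
  have hle : Finset.univ.sup' Finset.univ_nonempty (fun i => |hA.eigenvalues i|) ≤ σ :=
    Finset.sup'_le _ _ fun i _ => (hmain i).1
  refine ⟨hle, ?_, ?_⟩
  · intro h
    obtain ⟨i, -, hi⟩ := Finset.exists_mem_eq_sup' (Finset.univ_nonempty (α := V))
      (fun i => |hA.eigenvalues i|)
    exact iso_of_isGamma Γ hr hs c hbip hI hJ ((hmain i).2 (hi.symm.trans h))
  · rintro ⟨e, ε, hε, hsgn⟩
    apply le_antisymm hle
    obtain ⟨w, hw, hwe⟩ := gammaMatrix_eigen hr hrs hσ hlam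
    have hε2 : ∀ v, ε v * ε v = 1 := fun v => by
      rcases hε v with h | h <;> rw [h] <;> norm_num
    obtain ⟨i, hi⟩ := exists_eigenvalue hA (σ := σ) (z := fun v => ε v * w (e v)) (by
      intro h
      apply hw
      ext a
      have := congrFun h (e.symm a)
      simp only [Equiv.apply_symm_apply, Pi.zero_apply] at this
      rcases mul_eq_zero.1 this with h0 | h0
      · have := hε2 (e.symm a)
        rw [h0] at this
        norm_num at this
      · exact h0) (by
      ext u
      have h1 := hwe (e u)
      rw [← e.sum_comp] at h1
      show ∑ v, Γ.sign u v * (ε v * w (e v)) = σ * (ε u * w (e u))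
      rw [show σ * (ε u * w (e u)) = ε u * (σ * w (e u)) by ring, ← h1, Finset.mul_sum]
      apply Finset.sum_congr rfl
      intro v _
      rw [hsgn u v]
      linear_combination ε u * gammaMatrix r s (e u) (e v) * w (e v) * hε2 v)
    have := Finset.le_sup' (fun i => |hA.eigenvalues i|) (Finset.mem_univ i)
    simp only [hi] at this
    exact (le_abs_self σ).trans this
end

section
/- Let Γ be an unbalanced signed bipartite graph of order n ≥ 6 containing no negative 4-cycle. Then ρ(Γ) ≤ (n−6+sqrt((n−2)(n+6)))/4 if n is even, and ρ(Γ) ≤ sqrt( (n²−4n+11 + sqrt((n²−4n+11)² − 64(n−2)(n−4)))/8 ) if n is odd, with equality if and only if Γ is switching isomorphic to Γ_{⌊n/2⌋,⌈n/2⌉}. -/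
open Matrix Finset

section StarMatrix

set_option linter.unusedSectionVars false

variable {V : Type*} [Fintype V] [DecidableEq V]

/-- Entries of the extremal matrix between the two sides. -/
def starEnt (u1 u0 v1 v0 : V) (a b : V) : ℝ :=
  if a = u1 then (if b = v0 then 1 else if b = v1 then -1 else 0)
  else if a = u0 then (if b = v0 then 0 else 1)
  else if b = v1 then 0 else 1

/-- The extremal matrix on a vertex set with bipartition `c`. -/
def starMat (c : V → Bool) (u1 u0 v1 v0 : V) (a b : V) : ℝ :=
  if c a = c b then 0 else if c a = c u1 then starEnt u1 u0 v1 v0 a b else starEnt u1 u0 v1 v0 b a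

structure Cfg (c : V → Bool) (u1 u0 v1 v0 : V) : Prop where
  cu : c u0 = c u1
  cv : c v0 = c v1
  cuv : c u1 ≠ c v1
  hu : u0 ≠ u1
  hv : v0 ≠ v1

lemma Cfg.swap {c : V → Bool} {u1 u0 v1 v0 : V} (h : Cfg c u1 u0 v1 v0) :
    Cfg c v1 v0 u1 u0 := ⟨h.cv, h.cu, h.cuv.symm, h.hv, h.hu⟩

lemma starMat_symm (c : V → Bool) (u1 u0 v1 v0 : V) (a b : V) :
    starMat c u1 u0 v1 v0 a b = starMat c u1 u0 v1 v0 b a := by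
  unfold starMat
  by_cases h : c a = c b
  · simp [h]
  · have h' : c b ≠ c a := fun e => h e.symm
    rw [if_neg h, if_neg h']
    by_cases h1 : c a = c u1
    · have : c b ≠ c u1 := fun e => h (h1.trans e.symm)
      simp [h1, this]
    · have : c b = c u1 := by
        revert h h1; cases c a <;> cases c b <;> cases c u1 <;> simp
      simp [h1, this]

lemma starMat_swap {c : V → Bool} {u1 u0 v1 v0 : V} (h : Cfg c u1 u0 v1 v0) (a b : V) :
    starMat c v1 v0 u1 u0 a b = starMat c u1 u0 v1 v0 a b := by
  obtain ⟨h1, h2, h3, h4, h5⟩ := h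
  unfold starMat starEnt
  by_cases hab : c a = c b
  · simp [hab]
  rw [if_neg hab, if_neg hab]
  by_cases ha : c a = c u1
  · have h6 : c a ≠ c v1 := fun e => h3 (ha ▸ e)
    rw [if_neg h6, if_pos ha]
    by_cases e1 : a = u1 <;> by_cases e2 : a = u0 <;> by_cases e3 : b = v1 <;>
      by_cases e4 : b = v0 <;> simp_all
  · have h6 : c a = c v1 := by
      revert h3 ha; cases c a <;> cases c v1 <;> cases c u1 <;> simp
    rw [if_pos h6, if_neg ha]
    by_cases e1 : b = u1 <;> by_cases e2 : b = u0 <;> by_cases e3 : a = v1 <;>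
      by_cases e4 : a = v0 <;> simp_all

/-- side sum -/
def sd (c : V → Bool) (w : V) (x : V → ℝ) : ℝ := ∑ b, if c b = c w then x b else 0

lemma row1 {c : V → Bool} {u1 u0 v1 v0 : V} (h : Cfg c u1 u0 v1 v0) (x : V → ℝ) :
    ∑ b, starMat c u1 u0 v1 v0 u1 b * x b = x v0 - x v1 := by
  obtain ⟨h1, h2, h3, h4, h5⟩ := h
  have : ∀ b, starMat c u1 u0 v1 v0 u1 b * x b =
      (if b = v0 then x b else 0) - (if b = v1 then x b else 0) := by
    intro b
    unfold starMat starEnt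
    by_cases hb : c u1 = c b
    · have e1 : b ≠ v0 := by rintro rfl; exact h3 (hb.trans h2)
      have e2 : b ≠ v1 := by rintro rfl; exact h3 hb
      simp [hb, e1, e2]
    · by_cases e1 : b = v0 <;> by_cases e2 : b = v1 <;> simp_all
  simp [this, Finset.sum_sub_distrib]

lemma row0 {c : V → Bool} {u1 u0 v1 v0 : V} (h : Cfg c u1 u0 v1 v0) (x : V → ℝ) :
    ∑ b, starMat c u1 u0 v1 v0 u0 b * x b = sd c v1 x - x v0 := by
  obtain ⟨h1, h2, h3, h4, h5⟩ := h
  have : ∀ b, starMat c u1 u0 v1 v0 u0 b * x b =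
      (if c b = c v1 then x b else 0) - (if b = v0 then x b else 0) := by
    intro b
    unfold starMat starEnt
    by_cases hb : c u1 = c b
    · have e1 : b ≠ v0 := by rintro rfl; exact h3 (hb.trans h2)
      have e2 : c b ≠ c v1 := by rw [← hb]; exact h3
      simp [h1, hb, e1, e2]
    · have e2 : c b = c v1 := by
        revert h3 hb; cases c b <;> cases c v1 <;> cases c u1 <;> simp
      by_cases e1 : b = v0 <;> simp_all
  simp [this, Finset.sum_sub_distrib, sd]

lemma rowr {c : V → Bool} {u1 u0 v1 v0 : V} (h : Cfg c u1 u0 v1 v0) (x : V → ℝ) (a : V)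
    (ha : c a = c u1) (ha1 : a ≠ u1) (ha0 : a ≠ u0) :
    ∑ b, starMat c u1 u0 v1 v0 a b * x b = sd c v1 x - x v1 := by
  obtain ⟨h1, h2, h3, h4, h5⟩ := h
  have : ∀ b, starMat c u1 u0 v1 v0 a b * x b =
      (if c b = c v1 then x b else 0) - (if b = v1 then x b else 0) := by
    intro b
    unfold starMat starEnt
    by_cases hb : c u1 = c b
    · have e1 : b ≠ v1 := by rintro rfl; exact h3 hb
      have e2 : c b ≠ c v1 := by rw [← hb]; exact h3
      simp [ha, hb, e1, e2]
    · have e2 : c b = c v1 := by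
        revert h3 hb; cases c b <;> cases c v1 <;> cases c u1 <;> simp
      by_cases e1 : b = v1 <;> simp_all
  simp [this, Finset.sum_sub_distrib, sd]

/-- number of vertices on the side of `w` -/
def sz (c : V → Bool) (w : V) : ℕ := (Finset.univ.filter fun b => c b = c w).card

lemma sd_const (c : V → Bool) (w : V) (k : ℝ) : sd c w (fun _ => k) = sz c w * k := by
  simp [sd, sz, ← Finset.sum_filter]

lemma sd_congr (c : V → Bool) (w : V) {x y : V → ℝ} (h : ∀ a, c a = c w → x a = y a) :
    sd c w x = sd c w y := by
  unfold sd
  refine Finset.sum_congr rfl fun a _ => ?_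
  split_ifs with ha
  · exact h a ha
  · rfl

lemma sd_two (c : V → Bool) (w p q : V) (hp : c p = c w) (hq : c q = c w)
    (k α β : ℝ) : sd c w (fun a => k + (if a = p then α else 0) + (if a = q then β else 0))
      = sz c w * k + α + β := by
  have : ∀ a, (if c a = c w then k + (if a = p then α else 0) + (if a = q then β else 0) else 0)
      = (if c a = c w then k else 0) + (if a = p then α else 0) + (if a = q then β else 0) := by
    intro a
    by_cases h : c a = c w
    · simp [h]
    · have e1 : a ≠ p := by rintro rfl; exact h hp
      have e2 : a ≠ q := by rintro rfl; exact h hq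
      simp [h, e1, e2]
  have h2 := sd_const c w k
  unfold sd at *
  simp only [this, Finset.sum_add_distrib, h2]
  simp

lemma sd_eig {c : V → Bool} {u1 u0 v1 v0 : V} (h : Cfg c u1 u0 v1 v0) (x : V → ℝ) (θ : ℝ)
    (hx : ∀ a, ∑ b, starMat c u1 u0 v1 v0 a b * x b = θ * x a) :
    θ * sd c u1 x = (sz c u1 - 1) * (sd c v1 x - x v1) := by
  have e1 : θ * sd c u1 x = sd c u1 (fun a => θ * x a) := by
    unfold sd; rw [Finset.mul_sum]; refine Finset.sum_congr rfl fun a _ => ?_; split_ifs <;> simp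
  rw [e1, sd_congr c u1 (y := fun a => (sd c v1 x - x v1) + (if a = u1 then x v0 - sd c v1 x else 0)
    + (if a = u0 then x v1 - x v0 else 0)), sd_two _ _ _ _ rfl h.cu]
  · ring
  · intro a ha

    rw [← hx]
    by_cases h1 : a = u1
    · subst h1; rw [row1 h]; simp [h.hu.symm]
    · by_cases h0 : a = u0
      · subst h0; rw [row0 h]; simp [h1]
      · rw [rowr h x a ha h1 h0]; simp [h1, h0]

lemma eig_rels {c : V → Bool} {u1 u0 v1 v0 : V} (h : Cfg c u1 u0 v1 v0) (x : V → ℝ) (θ : ℝ)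
    (hx : ∀ a, ∑ b, starMat c u1 u0 v1 v0 a b * x b = θ * x a) :
    x v0 = θ * x u1 + x v1 ∧ x u0 = θ * x v1 + x u1 ∧
    sd c v1 x = θ * x u0 + x v0 ∧ sd c u1 x = θ * x v0 + x u0 ∧
    (∀ a, c a = c u1 → a ≠ u1 → a ≠ u0 → θ * x a = sd c v1 x - x v1) ∧
    (∀ a, c a = c v1 → a ≠ v1 → a ≠ v0 → θ * x a = sd c u1 x - x u1) := by
  have hx' : ∀ a, ∑ b, starMat c v1 v0 u1 u0 a b * x b = θ * x a := by
    intro a; simp only [starMat_swap h]; exact hx a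
  have a1 := row1 h x
  have a2 := row0 h x
  have b1 := row1 h.swap x
  have b2 := row0 h.swap x
  rw [hx] at a1 a2
  rw [hx'] at b1 b2
  refine ⟨by linarith, by linarith, by linarith, by linarith, ?_, ?_⟩
  · intro a h1 h2 h3; rw [← hx]; exact rowr h x a h1 h2 h3
  · intro a h1 h2 h3; rw [← hx']; exact rowr h.swap x a h1 h2 h3

lemma side_cases {c : V → Bool} {u v : V} (h : c u ≠ c v) (a : V) : c a = c u ∨ c a = c v := by
  revert h; cases c a <;> cases c u <;> cases c v <;> simp

lemma eig_zero {c : V → Bool} {u1 u0 v1 v0 : V} (h : Cfg c u1 u0 v1 v0) (x : V → ℝ) (θ : ℝ)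
    (hθ : θ ≠ 0) (hx : ∀ a, ∑ b, starMat c u1 u0 v1 v0 a b * x b = θ * x a)
    (h1 : x u1 = 0) (h2 : x v1 = 0) : x = 0 := by
  obtain ⟨r1, r2, r3, r4, r5, r6⟩ := eig_rels h x θ hx
  have e1 : x v0 = 0 := by rw [r1, h1, h2]; ring
  have e2 : x u0 = 0 := by rw [r2, h1, h2]; ring
  rw [e1, e2] at r3 r4
  funext a
  rcases side_cases h.cuv a with ha | ha
  · by_cases k1 : a = u1
    · rw [k1, h1]; rfl
    by_cases k2 : a = u0
    · rw [k2, e2]; rfl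
    have := r5 a ha k1 k2
    rw [r3, h2] at this
    simpa [hθ] using this
  · by_cases k1 : a = v1
    · rw [k1, h2]; rfl
    by_cases k2 : a = v0
    · rw [k2, e1]; rfl
    have := r6 a ha k1 k2
    rw [r4, h1] at this
    simpa [hθ] using this

lemma eig_poly {c : V → Bool} {u1 u0 v1 v0 : V} (h : Cfg c u1 u0 v1 v0) (x : V → ℝ) (θ : ℝ)
    (hθ : θ ≠ 0) (hx : ∀ a, ∑ b, starMat c u1 u0 v1 v0 a b * x b = θ * x a) (hx0 : x ≠ 0)
    (m t : ℝ) (hm : (sz c u1 : ℝ) = m + 2) (ht : (sz c v1 : ℝ) = t + 2) :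
    (θ ^ 2) ^ 2 - (m * t + m + t + 3) * θ ^ 2 + (1 + 2 * m) * (1 + 2 * t) = 0 := by
  obtain ⟨r1, r2, r3, r4, r5, r6⟩ := eig_rels h x θ hx
  have hx' : ∀ a, ∑ b, starMat c v1 v0 u1 u0 a b * x b = θ * x a := by
    intro a; simp only [starMat_swap h]; exact hx a
  have s1 := sd_eig h x θ hx
  have s2 := sd_eig h.swap x θ hx'
  rw [hm] at s1; rw [ht] at s2
  set α := x u1 with hα
  set β := x v1 with hβ
  rw [r4, r3, r1, r2] at s1
  rw [r4, r3, r1, r2] at s2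
  have k1 : (θ^2 - 1 - 2 * m) * α = (m - 1) * θ * β := by
    apply mul_left_cancel₀ hθ; linarith
  have k2 : (θ^2 - 1 - 2 * t) * β = (t - 1) * θ * α := by
    apply mul_left_cancel₀ hθ; linarith
  by_contra hne
  have z1 : ((θ ^ 2) ^ 2 - (m * t + m + t + 3) * θ ^ 2 + (1 + 2 * m) * (1 + 2 * t)) * α = 0 := by
    linear_combination (θ^2 - 1 - 2*t) * k1 + (m-1)*θ * k2
  have z2 : ((θ ^ 2) ^ 2 - (m * t + m + t + 3) * θ ^ 2 + (1 + 2 * m) * (1 + 2 * t)) * β = 0 := by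
    linear_combination (θ^2 - 1 - 2*m) * k2 + (t-1)*θ * k1
  exact hx0 (eig_zero h x θ hθ hx ((mul_eq_zero.mp z1).resolve_left hne)
    ((mul_eq_zero.mp z2).resolve_left hne))

/-- existence of eigenvectors -/
lemma eig_exists {c : V → Bool} {u1 u0 v1 v0 : V} (h : Cfg c u1 u0 v1 v0) (θ : ℝ)
    (m t : ℝ) (hm : (sz c u1 : ℝ) = m + 2) (ht : (sz c v1 : ℝ) = t + 2)
    (α β : ℝ) (hne : α ≠ 0 ∨ β ≠ 0)
    (k1 : (θ^2 - 1 - 2 * m) * α = (m - 1) * θ * β)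
    (k2 : (θ^2 - 1 - 2 * t) * β = (t - 1) * θ * α) :
    ∃ x : V → ℝ, x ≠ 0 ∧ ∀ a, ∑ b, starMat c u1 u0 v1 v0 a b * x b = θ * x a := by
  let y : V → ℝ := fun a => (2 * α + θ * β) + (if a = u1 then -(θ * β + α) else 0)
    + (if a = u0 then -α else 0)
  let z : V → ℝ := fun a => (2 * β + θ * α) + (if a = v1 then -(θ * α + β) else 0)
    + (if a = v0 then -β else 0)
  let x : V → ℝ := fun a => if c a = c u1 then y a else z a
  have hvu : c v1 ≠ c u1 := h.cuv.symm
  have hSX : sd c u1 x = (m + 1) * (2 * α + θ * β) := by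
    rw [sd_congr c u1 (y := y) (fun a ha => by simp [x, ha])]
    rw [sd_two _ _ _ _ rfl h.cu, hm]; ring
  have hSY : sd c v1 x = (t + 1) * (2 * β + θ * α) := by
    rw [sd_congr c v1 (y := z) (fun a ha => by simp [x, ha, hvu])]
    rw [sd_two _ _ _ _ rfl h.cv, ht]; ring
  have xu1 : x u1 = α := by simp [x, y, h.hu.symm]; ring
  have xv1 : x v1 = β := by simp [x, z, hvu, h.hv.symm]; ring
  have xu0 : x u0 = θ * β + α := by simp [x, y, h.hu, h.cu]; ring
  have xv0 : x v0 = θ * α + β := by simp [x, z, hvu, h.hv, h.cv]; ring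
  refine ⟨x, ?_, ?_⟩
  · intro hx
    rcases hne with h1 | h1
    · exact h1 (by rw [← xu1, hx]; rfl)
    · exact h1 (by rw [← xv1, hx]; rfl)
  intro a
  rcases side_cases h.cuv a with ha | ha
  · by_cases a1 : a = u1
    · subst a1; rw [row1 h, xv0, xv1, xu1]; ring
    by_cases a0 : a = u0
    · subst a0; rw [row0 h, hSY, xv0, xu0]; linarith
    rw [rowr h x a ha a1 a0, hSY, xv1]
    have : x a = 2 * α + θ * β := by simp [x, y, ha, a1, a0]
    rw [this]; linarith
  · simp only [← starMat_swap h]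
    by_cases a1 : a = v1
    · subst a1; rw [row1 h.swap, xu0, xu1, xv1]; ring
    by_cases a0 : a = v0
    · subst a0; rw [row0 h.swap, hSX, xv0, xu0]; linarith
    rw [rowr h.swap x a ha a1 a0, hSX, xu1]
    have : x a = 2 * β + θ * α := by simp [x, z, ha, hvu, a1, a0]
    rw [this]; linarith

lemma max_form [Nonempty V] (M : V → V → ℝ) (hM : ∀ a b, M a b = M b a) :
    ∃ (θ : ℝ) (x : V → ℝ), x ≠ 0 ∧ (∀ a, ∑ b, M a b * x b = θ * x a) ∧
      (∀ z : V → ℝ, ∑ a, ∑ b, M a b * z a * z b ≤ θ * ∑ a, z a ^ 2) ∧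
      (∀ z : V → ℝ, ∑ a, ∑ b, M a b * z a * z b = θ * ∑ a, z a ^ 2 →
        ∀ a, ∑ b, M a b * z b = θ * z a) := by
  let S : Set (V → ℝ) := {x | ∑ a, x a ^ 2 = 1}
  have hSc : IsCompact S := by
    rw [Metric.isCompact_iff_isClosed_bounded]
    constructor
    · exact isClosed_eq (by fun_prop) (by fun_prop)
    · rw [isBounded_iff_forall_norm_le]
      refine ⟨1, fun x hx => ?_⟩
      rw [pi_norm_le_iff_of_nonneg zero_le_one]
      intro i
      have h1 : x i ^ 2 ≤ ∑ a, x a ^ 2 :=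
        Finset.single_le_sum (f := fun a => x a ^ 2) (fun a _ => sq_nonneg _) (Finset.mem_univ i)
      have h2 : ∑ a, x a ^ 2 = 1 := hx
      rw [h2] at h1
      rw [Real.norm_eq_abs]
      exact abs_le_one_iff_mul_self_le_one.mpr (by nlinarith)
  have hSn : S.Nonempty := by
    obtain ⟨v⟩ := ‹Nonempty V›
    refine ⟨fun a => if a = v then 1 else 0, ?_⟩
    simp [S]
  let q : (V → ℝ) → ℝ := fun z => ∑ a, ∑ b, M a b * z a * z b
  obtain ⟨x, hxS, hmax⟩ := hSc.exists_isMaxOn hSn (f := q) (by fun_prop)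
  have hx1 : ∑ a, x a ^ 2 = 1 := hxS
  have hform : ∀ z : V → ℝ, q z ≤ q x * ∑ a, z a ^ 2 := by
    intro z
    by_cases hz : ∑ a, z a ^ 2 = 0
    · have : ∀ a, z a = 0 := by
        intro a
        have := (Finset.sum_eq_zero_iff_of_nonneg (fun a _ => sq_nonneg (z a))).mp hz a
          (Finset.mem_univ a)
        exact pow_eq_zero_iff (two_ne_zero) |>.mp this
      simp [q, this]
    · have hpos : 0 < ∑ a, z a ^ 2 :=
        lt_of_le_of_ne (Finset.sum_nonneg fun a _ => sq_nonneg _) (Ne.symm hz)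
      set N := ∑ a, z a ^ 2 with hN
      have hs : Real.sqrt N ^ 2 = N := Real.sq_sqrt hpos.le
      have hs0 : Real.sqrt N ≠ 0 := (Real.sqrt_pos.mpr hpos).ne'
      have hw : (fun a => (Real.sqrt N)⁻¹ * z a) ∈ S := by
        show ∑ a, ((Real.sqrt N)⁻¹ * z a) ^ 2 = 1
        simp only [mul_pow, ← Finset.mul_sum]
        rw [← hN, inv_pow, hs]; field_simp
      have h1 := hmax hw
      have h2 : q (fun a => (Real.sqrt N)⁻¹ * z a) = N⁻¹ * q z := by
        simp only [q, Finset.mul_sum]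
        refine Finset.sum_congr rfl fun a _ => Finset.sum_congr rfl fun b _ => ?_
        have : N⁻¹ = (Real.sqrt N)⁻¹ * (Real.sqrt N)⁻¹ := by
          rw [← mul_inv, ← sq, hs]
        rw [this]; ring
      have h3 : N⁻¹ * q z ≤ q x := by rw [← h2]; exact h1
      rw [inv_mul_le_iff₀ hpos] at h3
      linarith
  have heq : ∀ z : V → ℝ, q z = q x * ∑ a, z a ^ 2 → ∀ a, ∑ b, M a b * z b = q x * z a := by
    intro z hz
    -- perturb
    let d : V → ℝ := fun a => ∑ b, M a b * z b - q x * z a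
    have hexp : ∀ s : ℝ, q (fun a => z a + s * d a) - q x * ∑ a, (z a + s * d a) ^ 2
        = 2 * s * ∑ a, d a ^ 2 + s ^ 2 * (q d - q x * ∑ a, d a ^ 2) := by
      intro s
      have e1 : q (fun a => z a + s * d a) = q z + 2 * s * (∑ a, d a * ∑ b, M a b * z b)
          + s ^ 2 * q d := by
        have e2 : ∑ a, ∑ b, M a b * z a * d b = ∑ a, d a * ∑ b, M a b * z b := by
          rw [Finset.sum_comm]
          refine Finset.sum_congr rfl fun a _ => ?_
          rw [Finset.mul_sum]
          refine Finset.sum_congr rfl fun b _ => ?_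
          rw [hM b a]; ring
        have e3 : ∑ a, ∑ b, M a b * d a * z b = ∑ a, d a * ∑ b, M a b * z b := by
          refine Finset.sum_congr rfl fun a _ => ?_
          rw [Finset.mul_sum]
          refine Finset.sum_congr rfl fun b _ => ?_
          ring
        have e4 : q (fun a => z a + s * d a) = q z + s * (∑ a, ∑ b, M a b * z a * d b)
           + s * (∑ a, ∑ b, M a b * d a * z b) + s ^ 2 * q d := by
          simp only [q, Finset.mul_sum, ← Finset.sum_add_distrib]
          refine Finset.sum_congr rfl fun a _ => Finset.sum_congr rfl fun b _ => ?_
          ring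
        rw [e4, e2, e3]; ring
      have e5 : ∑ a, (z a + s * d a) ^ 2 = ∑ a, z a ^ 2 + 2 * s * ∑ a, d a * z a
          + s ^ 2 * ∑ a, d a ^ 2 := by
        simp only [Finset.mul_sum, ← Finset.sum_add_distrib]
        refine Finset.sum_congr rfl fun a _ => ?_
        ring
      have e6 : ∑ a, d a ^ 2 = ∑ a, d a * ∑ b, M a b * z b - q x * ∑ a, d a * z a := by
        rw [Finset.mul_sum, ← Finset.sum_sub_distrib]
        refine Finset.sum_congr rfl fun a _ => ?_
        simp only [d]; ring
      rw [e1, e5]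
      linear_combination hz - 2 * s * e6
    set D := ∑ a, d a ^ 2 with hD
    have hD0 : 0 ≤ D := Finset.sum_nonneg fun a _ => sq_nonneg _
    set K := q d - q x * D with hK
    have hle : ∀ s : ℝ, 2 * s * D + s ^ 2 * K ≤ 0 := by
      intro s
      rw [← hexp s]
      linarith [hform (fun a => z a + s * d a)]
    have hDz : D = 0 := by
      by_contra hne
      have hDp : 0 < D := lt_of_le_of_ne hD0 (Ne.symm hne)
      have h1 := hle (D / (|K| + 1))
      have hk : 0 < |K| + 1 := by positivity
      have hs : 0 < D / (|K| + 1) := by positivity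
      have h2 : D / (|K| + 1) * (|K| + 1) = D := by field_simp
      set s := D / (|K| + 1)
      have h3 : 2 * D + s * K ≤ 0 := by
        by_contra hc
        push Not at hc
        nlinarith
      have h4 : -|K| ≤ K := neg_abs_le K
      nlinarith
    intro a
    have := (Finset.sum_eq_zero_iff_of_nonneg (fun a _ => sq_nonneg (d a))).mp hDz a
      (Finset.mem_univ a)
    have : d a = 0 := pow_eq_zero_iff (two_ne_zero) |>.mp this
    simp only [d] at this
    linarith
  refine ⟨q x, x, ?_, ?_, hform, heq⟩
  · rintro rfl; simp at hx1
  · exact heq x (by rw [hx1, mul_one])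

/-- gain entries -/
noncomputable def g0 (A : V → V → ℝ) (u1 u0 v1 v0 : V) (a b : V) : ℝ :=
  (if A a v1 = 1 ∧ a ≠ u0 then 1 else 0) *
    ((if A u1 b = 1 ∧ b ≠ v0 then 1 else 0) + (if b = v0 then 1 else 0)) +
  (if a = u0 then 1 else 0) * (if A u1 b = 1 ∧ b ≠ v0 then 1 else 0) -
  (if A a v1 = 1 ∧ a ≠ u0 then 1 else 0) * (if b = v1 then 1 else 0) -
  (if a = u1 then 1 else 0) * (if A u1 b = 1 ∧ b ≠ v0 then 1 else 0)

structure Good (c : V → Bool) (A : V → V → ℝ) : Prop where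
  symm : ∀ a b, A a b = A b a
  ent : ∀ a b, A a b = 0 ∨ A a b = 1 ∨ A a b = -1
  bip : ∀ a b, A a b ≠ 0 → c a ≠ c b
  c4 : ∀ u u' v v', u ≠ u' → v ≠ v' → c u = c u' → c v = c v' →
    A u v * A u' v * A u v' * A u' v' ≠ -1

structure Nb (A : V → V → ℝ) (u1 u0 v1 v0 : V) : Prop where
  e11 : A u1 v1 = -1
  e01 : A u0 v1 = 1
  e10 : A u1 v0 = 1

lemma Good.le_one {c : V → Bool} {A : V → V → ℝ} (h : Good c A) (a b : V) : A a b ≤ 1 := by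
  rcases h.ent a b with e | e | e <;> rw [e] <;> norm_num

lemma Good.le_zero {c : V → Bool} {A : V → V → ℝ} (h : Good c A) (a b : V) (h1 : A a b ≠ 1) :
    A a b ≤ 0 := by
  rcases h.ent a b with e | e | e
  · rw [e]
  · exact absurd e h1
  · rw [e]; norm_num

lemma Good.col {c : V → Bool} {A : V → V → ℝ} (h : Good c A) {a b w : V} (h1 : A a b ≠ 0)
    (h2 : A w b ≠ 0) : c a = c w := by
  have := h.bip _ _ h1
  have := h.bip _ _ h2
  revert this; revert this; cases c a <;> cases c b <;> cases c w <;> simp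

lemma Nb.swap {c : V → Bool} {A : V → V → ℝ} (h : Good c A) {u1 u0 v1 v0 : V}
    (hn : Nb A u1 u0 v1 v0) : Nb A v1 v0 u1 u0 :=
  ⟨by rw [h.symm]; exact hn.e11, by rw [h.symm]; exact hn.e10, by rw [h.symm]; exact hn.e01⟩

lemma Nb.cfg {c : V → Bool} {A : V → V → ℝ} (h : Good c A) {u1 u0 v1 v0 : V}
    (hn : Nb A u1 u0 v1 v0) : Cfg c u1 u0 v1 v0 := by
  obtain ⟨h1, h2, h3⟩ := hn
  refine ⟨h.col (b := v1) (by rw [h2]; norm_num) (by rw [h1]; norm_num), ?_,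
    h.bip _ _ (by rw [h1]; norm_num), ?_, ?_⟩
  · exact h.col (b := u1) (by rw [h.symm, h3]; norm_num) (by rw [h.symm, h1]; norm_num)
  · rintro rfl; rw [h1] at h2; norm_num at h2
  · rintro rfl; rw [h1] at h3; norm_num at h3

lemma pq_block {c : V → Bool} {A : V → V → ℝ} (h : Good c A) {u1 v1 a b : V}
    (h11 : A u1 v1 = -1) (ha : A a v1 = 1) (hb : A u1 b = 1) : A a b ≠ 1 := by
  intro hab
  have n1 : a ≠ u1 := by rintro rfl; rw [h11] at ha; norm_num at ha
  have n2 : b ≠ v1 := by rintro rfl; rw [h11] at hb; norm_num at hb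
  have := h.c4 a u1 b v1 n1 n2 (h.col (b := v1) (by rw [ha]; norm_num) (by rw [h11]; norm_num))
    (h.col (b := u1) (by rw [h.symm, hb]; norm_num) (by rw [h.symm, h11]; norm_num))
  rw [hab, hb, ha, h11] at this
  norm_num at this

lemma pw0 {c : V → Bool} {A : V → V → ℝ} (h : Good c A) {u1 u0 v1 v0 : V}
    (hn : Nb A u1 u0 v1 v0) (a b : V) :
    g0 A u1 u0 v1 v0 a b ≤ starEnt u1 u0 v1 v0 a b - A a b := by
  have hc := hn.cfg h
  obtain ⟨h1, h2, h3⟩ := hn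
  have hu := hc.hu
  have hv := hc.hv
  have l1 := h.le_one a b
  have blk := fun ha hb => h.le_zero a b (pq_block h (a := a) (b := b) h1 ha hb)
  have l0 := h.le_zero a b
  unfold g0 starEnt
  by_cases a1 : a = u1
  · subst a1
    by_cases b1 : b = v1
    · subst b1; simp [h1, hu.symm, hv.symm]; norm_num
    by_cases b0 : b = v0
    · subst b0; simp [h1, hu.symm]; norm_num [h3]
    by_cases q : A a b = 1
    · simp [h1, hu.symm, b0, b1, q]; norm_num
    · simp [h1, hu.symm, b0, b1, q]; norm_num; exact l0 q
  by_cases a0 : a = u0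
  · subst a0
    by_cases b1 : b = v1
    · subst b1; simp [h1, h2, hu, hv.symm]; norm_num
    by_cases b0 : b = v0
    · subst b0; simp [h3, hu]; exact blk h2 h3
    by_cases q : A u1 b = 1
    · simp [h2, hu, b0, q]; exact blk h2 q
    · simp [h2, hu, b0, q]; exact l1
  by_cases p : A a v1 = 1
  · by_cases b1 : b = v1
    · subst b1; simp [h1, a0, a1, hv.symm, p]; norm_num
    by_cases b0 : b = v0
    · subst b0; simp [h3, a0, a1, b1, p]; exact blk p h3
    by_cases q : A u1 b = 1
    · simp [a0, a1, b1, b0, p, q]; exact blk p q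
    · simp [a0, a1, b1, b0, p, q]; exact l1
  · by_cases b1 : b = v1
    · subst b1; simp [a0, a1, p]; exact l0 p
    · simp [a0, a1, b1, p]; exact l1

lemma g0_side {c : V → Bool} {A : V → V → ℝ} (h : Good c A) {u1 u0 v1 v0 : V}
    (hn : Nb A u1 u0 v1 v0) (a b : V) (hab : c a ≠ c u1 ∨ c b ≠ c v1) :
    g0 A u1 u0 v1 v0 a b = 0 := by
  have hc := hn.cfg h
  obtain ⟨h1, h2, h3⟩ := hn
  rcases hab with ha | hb
  · have e1 : A a v1 ≠ 1 := fun e => ha (h.col (b := v1) (by rw [e]; norm_num)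
      (by rw [h1]; norm_num))
    have e2 : a ≠ u0 := by rintro rfl; exact ha hc.cu
    have e3 : a ≠ u1 := by rintro rfl; exact ha rfl
    simp [g0, e1, e2, e3]
  · have e1 : A u1 b ≠ 1 := fun e => hb (h.col (b := u1) (by rw [h.symm, e]; norm_num)
      (by rw [h.symm, h1]; norm_num))
    have e2 : b ≠ v0 := by rintro rfl; exact hb hc.cv
    have e3 : b ≠ v1 := by rintro rfl; exact hb rfl
    simp [g0, e1, e2, e3]

lemma pw {c : V → Bool} {A : V → V → ℝ} (h : Good c A) {u1 u0 v1 v0 : V}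
    (hn : Nb A u1 u0 v1 v0) (a b : V) :
    g0 A u1 u0 v1 v0 a b + g0 A u1 u0 v1 v0 b a ≤ starMat c u1 u0 v1 v0 a b - A a b := by
  have hc := hn.cfg h
  by_cases hab : c a = c b
  · have e0 : A a b = 0 := by by_contra e; exact h.bip _ _ e hab
    have : starMat c u1 u0 v1 v0 a b = 0 := by simp [starMat, hab]
    rw [e0, this, g0_side h hn a b, g0_side h hn b a]
    · norm_num
    · by_contra hh; push Not at hh; exact hc.cuv (by rw [← hh.1, ← hh.2, hab])
    · by_contra hh; push Not at hh; exact hc.cuv (by rw [← hh.1, ← hh.2, hab])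
  · by_cases ha : c a = c u1
    · rw [g0_side h hn b a (Or.inl (fun e => hab (ha.trans e.symm)))]
      have := pw0 h hn a b
      simp only [starMat, if_neg hab, if_pos ha]; linarith
    · rw [g0_side h hn a b (Or.inl ha)]
      have := pw0 h hn b a
      simp only [starMat, if_neg hab, if_neg ha]; rw [h.symm a b]; linarith

/-- excess sum -/
noncomputable def pex (A : V → V → ℝ) (u0 v1 : V) (x : V → ℝ) : ℝ :=
  ∑ a, (if A a v1 = 1 ∧ a ≠ u0 then 1 else 0) * x a

lemma pex_eq {c : V → Bool} {A : V → V → ℝ} (h : Good c A) (u1 v0 : V) (x : V → ℝ) :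
    ∑ b, (if A u1 b = 1 ∧ b ≠ v0 then 1 else 0) * x b = pex A v0 u1 x := by
  unfold pex
  refine Finset.sum_congr rfl fun a _ => ?_
  rw [h.symm u1 a]

lemma sum_g0 {c : V → Bool} {A : V → V → ℝ} (h : Good c A) (u1 u0 v1 v0 : V) (x : V → ℝ) :
    ∑ a, ∑ b, g0 A u1 u0 v1 v0 a b * x a * x b =
     pex A u0 v1 x * (pex A v0 u1 x + x v0) + x u0 * pex A v0 u1 x - pex A u0 v1 x * x v1
      - x u1 * pex A v0 u1 x := by
  rw [← pex_eq h u1 v0 x]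
  have d : ∀ w, x w = ∑ b, (if b = w then 1 else 0) * x b := by intro w; simp
  conv_rhs => rw [d v0, d u0, d v1, d u1]
  unfold pex
  rw [← Finset.sum_add_distrib]
  simp only [Finset.sum_mul_sum, ← Finset.sum_add_distrib, ← Finset.sum_sub_distrib]
  refine Finset.sum_congr rfl fun a _ => Finset.sum_congr rfl fun b _ => ?_
  unfold g0
  ring

lemma row_bound_s17 {c : V → Bool} {A : V → V → ℝ} (h : Good c A) {u1 u0 v1 v0 : V}
    (hn : Nb A u1 u0 v1 v0) (x : V → ℝ) (hx : ∀ a, 0 ≤ x a) :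
    ∑ b, A u1 b * x b ≤ pex A v0 u1 x + x v0 - x v1 := by
  have hc := hn.cfg h
  rw [← pex_eq h u1 v0 x]
  have d : ∀ w, x w = ∑ b, (if b = w then 1 else 0) * x b := by intro w; simp
  conv_rhs => rw [d v0, d v1]
  simp only [← Finset.sum_add_distrib, ← Finset.sum_sub_distrib]
  refine Finset.sum_le_sum fun b _ => ?_
  rw [← add_mul, ← sub_mul]
  refine mul_le_mul_of_nonneg_right ?_ (hx b)
  by_cases b1 : b = v1
  · subst b1; simp [hn.e11, hc.hv.symm]; norm_num
  by_cases b0 : b = v0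
  · subst b0; simp [hn.e10, hc.hv]
  by_cases q : A u1 b = 1
  · simp [b0, b1, q]
  · simp [b0, b1, q]; exact h.le_zero _ _ q

lemma pex_nonneg (A : V → V → ℝ) (u0 v1 : V) (x : V → ℝ) (hx : ∀ a, 0 ≤ x a) :
    0 ≤ pex A u0 v1 x := by
  unfold pex
  refine Finset.sum_nonneg fun a _ => mul_nonneg ?_ (hx a)
  split_ifs <;> norm_num

lemma gain_nonneg {c : V → Bool} {A : V → V → ℝ} (h : Good c A) {u1 u0 v1 v0 : V}
    (hn : Nb A u1 u0 v1 v0) (x : V → ℝ) (hx : ∀ a, 0 ≤ x a) (ρ : ℝ) (hρ : 1 ≤ ρ)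
    (he : ∀ a, ∑ b, A a b * x b = ρ * x a) :
    0 ≤ ∑ a, ∑ b, g0 A u1 u0 v1 v0 a b * x a * x b := by
  rw [sum_g0 h]
  have r1 := row_bound_s17 h hn x hx
  have r2 := row_bound_s17 h (hn.swap h) x hx
  rw [he] at r1 r2
  have hP := pex_nonneg A u0 v1 x hx
  have hQ := pex_nonneg A v0 u1 x hx
  set P := pex A u0 v1 x
  set Q := pex A v0 u1 x
  have a1 := hx u1
  have a2 := hx u0
  have a3 := hx v1
  have a4 := hx v0
  rcases le_total Q (ρ * P) with hc | hc
  · have k1 := mul_nonneg hP (sub_nonneg.mpr r1)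
    have k2 := mul_nonneg a1 (sub_nonneg.mpr hc)
    have k3 := mul_nonneg a2 hQ
    nlinarith
  · have hc' : P ≤ ρ * Q := by nlinarith
    have k1 := mul_nonneg hQ (sub_nonneg.mpr r2)
    have k2 := mul_nonneg a3 (sub_nonneg.mpr hc')
    have k3 := mul_nonneg a4 hP
    nlinarith

lemma sum_split {c : V → Bool} {A : V → V → ℝ} (h : Good c A) (u1 u0 v1 v0 : V) (x : V → ℝ) :
    ∑ a, ∑ b, starMat c u1 u0 v1 v0 a b * x a * x b - ∑ a, ∑ b, A a b * x a * x b =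
    ∑ a, ∑ b, (starMat c u1 u0 v1 v0 a b - A a b -
      (g0 A u1 u0 v1 v0 a b + g0 A u1 u0 v1 v0 b a)) * x a * x b +
    2 * ∑ a, ∑ b, g0 A u1 u0 v1 v0 a b * x a * x b := by
  have e : ∑ a, ∑ b, g0 A u1 u0 v1 v0 b a * x a * x b =
      ∑ a, ∑ b, g0 A u1 u0 v1 v0 a b * x a * x b := by
    rw [Finset.sum_comm]
    refine Finset.sum_congr rfl fun a _ => Finset.sum_congr rfl fun b _ => ?_
    ring
  have e' : 2 * ∑ a, ∑ b, g0 A u1 u0 v1 v0 a b * x a * x b =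
      ∑ a, ∑ b, g0 A u1 u0 v1 v0 b a * x a * x b + ∑ a, ∑ b, g0 A u1 u0 v1 v0 a b * x a * x b := by
    rw [e]; ring
  rw [e']
  simp only [← Finset.sum_add_distrib, ← Finset.sum_sub_distrib]
  refine Finset.sum_congr rfl fun a _ => Finset.sum_congr rfl fun b _ => ?_
  ring

lemma form_le {c : V → Bool} {A : V → V → ℝ} (h : Good c A) {u1 u0 v1 v0 : V}
    (hn : Nb A u1 u0 v1 v0) (x : V → ℝ) (hx : ∀ a, 0 ≤ x a) (ρ : ℝ) (hρ : 1 ≤ ρ)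
    (he : ∀ a, ∑ b, A a b * x b = ρ * x a) :
    ∑ a, ∑ b, A a b * x a * x b ≤ ∑ a, ∑ b, starMat c u1 u0 v1 v0 a b * x a * x b := by
  have h1 := sum_split h u1 u0 v1 v0 x
  have h2 := gain_nonneg h hn x hx ρ hρ he
  have h3 : 0 ≤ ∑ a, ∑ b, (starMat c u1 u0 v1 v0 a b - A a b -
      (g0 A u1 u0 v1 v0 a b + g0 A u1 u0 v1 v0 b a)) * x a * x b := by
    refine Finset.sum_nonneg fun a _ => Finset.sum_nonneg fun b _ => ?_
    exact mul_nonneg (mul_nonneg (sub_nonneg.mpr (pw h hn a b)) (hx a)) (hx b)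
  linarith

lemma st_pos {c : V → Bool} {u1 u0 v1 v0 : V} (h : Cfg c u1 u0 v1 v0) (x : V → ℝ) (θ : ℝ)
    (hθ : 0 < θ) (hx : ∀ a, ∑ b, starMat c u1 u0 v1 v0 a b * x b = θ * x a) (hx0 : x ≠ 0)
    (hnn : ∀ a, 0 ≤ x a) : (0 < x u1 ∨ 0 < x v1) ∧
      (∀ a, a ≠ u1 → a ≠ v1 → 0 < x a) := by
  have hor : 0 < x u1 ∨ 0 < x v1 := by
    by_contra hh
    push Not at hh
    exact hx0 (eig_zero h x θ hθ.ne' hx (le_antisymm hh.1 (hnn _)) (le_antisymm hh.2 (hnn _)))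
  refine ⟨hor, ?_⟩
  obtain ⟨r1, r2, r3, r4, r5, r6⟩ := eig_rels h x θ hx
  have n1 := hnn u1
  have n2 := hnn v1
  have p1 : 0 < x v0 := by
    rw [r1]; rcases hor with k | k
    · have := mul_pos hθ k; linarith
    · have := mul_nonneg hθ.le n1; linarith
  have p2 : 0 < x u0 := by
    rw [r2]; rcases hor with k | k
    · have := mul_nonneg hθ.le n2; linarith
    · have := mul_pos hθ k; linarith
  intro a a1 a2
  rcases side_cases h.cuv a with ha | ha
  · by_cases a0 : a = u0
    · rw [a0]; exact p2
    have := r5 a ha a1 a0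
    have k : 0 < θ * x a := by
      rw [this, r3, r1]
      have := mul_pos hθ p2
      have := mul_nonneg hθ.le n1
      linarith
    exact (mul_pos_iff_of_pos_left hθ).mp k
  · by_cases a0 : a = v0
    · rw [a0]; exact p1
    have := r6 a ha a2 a0
    have k : 0 < θ * x a := by
      rw [this, r4, r2]
      have := mul_pos hθ p1
      have := mul_nonneg hθ.le n2
      linarith
    exact (mul_pos_iff_of_pos_left hθ).mp k

lemma eq_case {c : V → Bool} {A : V → V → ℝ} (h : Good c A) {u1 u0 v1 v0 : V}
    (hn : Nb A u1 u0 v1 v0) (x : V → ℝ) (hx : ∀ a, 0 ≤ x a) (hx0 : x ≠ 0) (ρ : ℝ) (hρ : 1 ≤ ρ)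
    (he : ∀ a, ∑ b, A a b * x b = ρ * x a)
    (hs : ∀ a, ∑ b, starMat c u1 u0 v1 v0 a b * x b = ρ * x a) :
    ∀ a b, A a b = starMat c u1 u0 v1 v0 a b := by
  have hc := hn.cfg h
  have hρ0 : 0 < ρ := by linarith
  obtain ⟨hor, hpos⟩ := st_pos hc x ρ hρ0 hs hx0 hx
  have hD : ∀ a, ∑ b, (starMat c u1 u0 v1 v0 a b - A a b) * x b = 0 := by
    intro a; simp only [sub_mul, Finset.sum_sub_distrib]; rw [hs, he]; ring
  have hform : ∀ M : V → V → ℝ, (∀ a, ∑ b, M a b * x b = ρ * x a) →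
      ∑ a, ∑ b, M a b * x a * x b = ρ * ∑ a, x a ^ 2 := by
    intro M hM
    rw [Finset.mul_sum]
    refine Finset.sum_congr rfl fun a _ => ?_
    have : ∑ b, M a b * x a * x b = x a * ∑ b, M a b * x b := by
      rw [Finset.mul_sum]; refine Finset.sum_congr rfl fun b _ => ?_; ring
    rw [this, hM]; ring
  have h1 := sum_split h u1 u0 v1 v0 x
  rw [hform _ hs, hform _ he, sub_self] at h1
  have h2 := gain_nonneg h hn x hx ρ hρ he
  have hnn : ∀ a b, 0 ≤ (starMat c u1 u0 v1 v0 a b - A a b -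
      (g0 A u1 u0 v1 v0 a b + g0 A u1 u0 v1 v0 b a)) * x a * x b := fun a b =>
    mul_nonneg (mul_nonneg (sub_nonneg.mpr (pw h hn a b)) (hx a)) (hx b)
  have h3 : 0 ≤ ∑ a, ∑ b, (starMat c u1 u0 v1 v0 a b - A a b -
      (g0 A u1 u0 v1 v0 a b + g0 A u1 u0 v1 v0 b a)) * x a * x b :=
    Finset.sum_nonneg fun a _ => Finset.sum_nonneg fun b _ => hnn a b
  have h4 : ∑ a, ∑ b, g0 A u1 u0 v1 v0 a b * x a * x b = 0 := by linarith
  have h5 : ∑ a, ∑ b, (starMat c u1 u0 v1 v0 a b - A a b -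
      (g0 A u1 u0 v1 v0 a b + g0 A u1 u0 v1 v0 b a)) * x a * x b = 0 := by linarith
  have h6 : ∀ a b, (starMat c u1 u0 v1 v0 a b - A a b -
      (g0 A u1 u0 v1 v0 a b + g0 A u1 u0 v1 v0 b a)) * x a * x b = 0 := by
    intro a b
    have := (Finset.sum_eq_zero_iff_of_nonneg
      (fun a _ => Finset.sum_nonneg fun b _ => hnn a b)).mp h5 a (Finset.mem_univ a)
    exact (Finset.sum_eq_zero_iff_of_nonneg (fun b _ => hnn a b)).mp this b (Finset.mem_univ b)
  have hrow : ∀ a, 0 < x a → ∑ b, (g0 A u1 u0 v1 v0 a b + g0 A u1 u0 v1 v0 b a) * x b = 0 := by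
    intro a ha
    rw [← hD a]
    refine Finset.sum_congr rfl fun b _ => ?_
    have := h6 a b
    have h7 : x a * ((starMat c u1 u0 v1 v0 a b - A a b -
      (g0 A u1 u0 v1 v0 a b + g0 A u1 u0 v1 v0 b a)) * x b) = 0 := by linarith
    have := (mul_eq_zero.mp h7).resolve_left ha.ne'
    linarith
  obtain ⟨r1, r2, r3, r4, r5, r6⟩ := eig_rels hc x ρ hs
  rw [sum_g0 h] at h4
  have hP := pex_nonneg A u0 v1 x hx
  have hQ := pex_nonneg A v0 u1 x hx
  -- the rows u1 and v1
  have ku : 0 < x u1 → pex A v0 u1 x = 0 := by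
    intro k
    have := hrow u1 k
    have e : ∀ b, (g0 A u1 u0 v1 v0 u1 b + g0 A u1 u0 v1 v0 b u1) * x b =
        -((if A u1 b = 1 ∧ b ≠ v0 then 1 else 0) * x b) := by
      intro b
      rw [g0_side h hn b u1 (Or.inr hc.cuv)]
      have hm : ¬ ((-1 : ℝ) = 1) := by norm_num
      simp [g0, hn.e11, hc.hu.symm, hm]
    simp only [e, Finset.sum_neg_distrib, pex_eq h] at this
    linarith
  have kv : 0 < x v1 → pex A u0 v1 x = 0 := by
    intro k
    have := hrow v1 k
    have e : ∀ b, (g0 A u1 u0 v1 v0 v1 b + g0 A u1 u0 v1 v0 b v1) * x b =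
        -((if A b v1 = 1 ∧ b ≠ u0 then 1 else 0) * x b) := by
      intro b
      rw [g0_side h hn v1 b (Or.inl hc.cuv.symm)]
      have hm : ¬ ((-1 : ℝ) = 1) := by norm_num
      simp [g0, hn.e11, hc.hv.symm, hm]
    simp only [e, Finset.sum_neg_distrib] at this
    unfold pex
    linarith
  have hPQ : pex A u0 v1 x = 0 ∧ pex A v0 u1 x = 0 := by
    rw [r1, r2] at h4
    rcases hor with k | k
    · have := ku k
      refine ⟨?_, this⟩
      rw [this] at h4
      have h7 : pex A u0 v1 x * (ρ * x u1) = 0 := by linarith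
      exact (mul_eq_zero.mp h7).resolve_right (mul_pos hρ0 k).ne'
    · have := kv k
      refine ⟨this, ?_⟩
      rw [this] at h4
      have h7 : pex A v0 u1 x * (ρ * x v1) = 0 := by linarith
      exact (mul_eq_zero.mp h7).resolve_right (mul_pos hρ0 k).ne'
  have hp : ∀ (w z : V), c w ≠ c z → pex A w z x = 0 → (∀ a, c a = c w → A a z = 1 → 0 < x a) →
      ∀ a, ¬ (A a z = 1 ∧ a ≠ w) := by
    intro w z hwz h7 h8 a ha
    unfold pex at h7
    have := (Finset.sum_eq_zero_iff_of_nonneg (fun a _ => mul_nonneg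
      (by split_ifs <;> norm_num) (hx a))).mp h7 a (Finset.mem_univ a)
    rw [if_pos ha, one_mul] at this
    have hb := h.bip a z (by rw [ha.1]; norm_num)
    have := h8 a (by revert hb hwz; cases c a <;> cases c w <;> cases c z <;> simp) ha.1
    linarith
  have hp0 := hp u0 v1 (by rw [hc.cu]; exact hc.cuv) hPQ.1 (fun a ha ha1 => hpos a
    (by rintro rfl; rw [hn.e11] at ha1; norm_num at ha1)
    (by rintro rfl; rw [hc.cu] at ha; exact hc.cuv ha.symm))
  have hq0 := hp v0 u1 (by rw [hc.cv]; exact hc.cuv.symm) hPQ.2 (fun a ha ha1 => hpos a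
    (by rintro rfl; rw [hc.cv] at ha; exact hc.cuv ha)
    (by rintro rfl; rw [h.symm, hn.e11] at ha1; norm_num at ha1))
  have hg : ∀ a b, g0 A u1 u0 v1 v0 a b = 0 := by
    intro a b
    have e1 := hp0 a
    have e2 := hq0 b
    rw [h.symm] at e2
    unfold g0
    rw [if_neg e1, if_neg e2]; ring
  have hDn : ∀ a b, 0 ≤ starMat c u1 u0 v1 v0 a b - A a b := by
    intro a b
    have := pw h hn a b
    rw [hg, hg] at this
    linarith
  have hDz : ∀ a b, (starMat c u1 u0 v1 v0 a b - A a b) * x b = 0 := by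
    intro a b
    exact (Finset.sum_eq_zero_iff_of_nonneg (fun b _ => mul_nonneg (hDn a b) (hx b))).mp (hD a) b
      (Finset.mem_univ b)
  have fin1 : ∀ a b, 0 < x b → A a b = starMat c u1 u0 v1 v0 a b := by
    intro a b hb
    have := (mul_eq_zero.mp (hDz a b)).resolve_right hb.ne'
    linarith
  intro a b
  by_cases hb : 0 < x b
  · exact fin1 a b hb
  by_cases ha : 0 < x a
  · rw [h.symm, starMat_symm]; exact fin1 b a ha
  have hb' : b = u1 ∨ b = v1 := by
    by_contra hh; push Not at hh; exact hb (hpos b hh.1 hh.2)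
  have ha' : a = u1 ∨ a = v1 := by
    by_contra hh; push Not at hh; exact ha (hpos a hh.1 hh.2)
  have same : a = b := by
    rcases ha' with rfl | rfl <;> rcases hb' with rfl | rfl
    · rfl
    · exact absurd hor (by push Not; exact ⟨not_lt.mp ha, not_lt.mp hb⟩)
    · exact absurd hor (by push Not; exact ⟨not_lt.mp hb, not_lt.mp ha⟩)
    · rfl
  subst same
  have : A a a = 0 := by by_contra e; exact h.bip _ _ e rfl
  simp [this, starMat]

lemma Good.switch {c : V → Bool} {A : V → V → ℝ} (h : Good c A) (ε : V → ℝ)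
    (hε : ∀ v, ε v = 1 ∨ ε v = -1) : Good c (fun a b => ε a * A a b * ε b) := by
  refine ⟨?_, ?_, ?_, ?_⟩
  · intro a b; rw [h.symm a b]; ring
  · intro a b
    rcases hε a with e1 | e1 <;> rcases hε b with e2 | e2 <;> rcases h.ent a b with e3 | e3 | e3 <;>
      simp [e1, e2, e3]
  · intro a b hab
    exact h.bip a b (fun e => hab (by simp [e]))
  · intro u u' v v' h1 h2 h3 h4
    have hsq : ∀ w, ε w * ε w = 1 := by
      intro w; rcases hε w with e | e <;> rw [e] <;> norm_num
    have := h.c4 u u' v v' h1 h2 h3 h4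
    have e : ε u * A u v * ε v * (ε u' * A u' v * ε v) * (ε u * A u v' * ε v') *
        (ε u' * A u' v' * ε v') = A u v * A u' v * A u v' * A u' v' := by
      calc _ = (ε u * ε u) * (ε u' * ε u') * (ε v * ε v) * (ε v' * ε v') *
          (A u v * A u' v * A u v' * A u' v') := by ring
        _ = _ := by rw [hsq, hsq, hsq, hsq]; ring
    rw [e]; exact this

/-- no switching makes the matrix entrywise nonnegative -/
def Unb (A : V → V → ℝ) : Prop :=
  ∀ ε : V → ℝ, (∀ v, ε v = 1 ∨ ε v = -1) → ∃ u v, ε u * A u v * ε v = -1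

lemma exists_switch {c : V → Bool} {A : V → V → ℝ} (h : Good c A) (hU : Unb A) (x : V → ℝ)
    (ρ : ℝ) (hρ : 0 < ρ) (he : ∀ a, ∑ b, A a b * x b = ρ * x a) :
    ∃ ε : V → ℝ, (∀ v, ε v = 1 ∨ ε v = -1) ∧ (∀ v, 0 ≤ ε v * x v) ∧
      ∃ u1 u0 v1 v0, Nb (fun a b => ε a * A a b * ε b) u1 u0 v1 v0 := by
  classical
  let S : Finset (V → ℝ) :=
    (Fintype.piFinset (fun _ => ({1, -1} : Finset ℝ))).filter (fun ε => ∀ v, 0 ≤ ε v * x v)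
  have hS : ∀ ε, ε ∈ S ↔ (∀ v, ε v = 1 ∨ ε v = -1) ∧ ∀ v, 0 ≤ ε v * x v := by
    intro ε; simp [S, Fintype.mem_piFinset]
  have hne : S.Nonempty := by
    refine ⟨fun v => if 0 ≤ x v then 1 else -1, (hS _).mpr ⟨?_, ?_⟩⟩
    · intro v; by_cases hv : 0 ≤ x v <;> simp [hv]
    · intro v
      by_cases hv : 0 ≤ x v
      · simp [hv]
      · simp [hv]; linarith
  obtain ⟨ε, hεS, hmax⟩ := S.exists_max_image (fun ε => ∑ a, ∑ b, ε a * A a b * ε b) hne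
  obtain ⟨hε, hεx⟩ := (hS ε).mp hεS
  refine ⟨ε, hε, hεx, ?_⟩
  have hG := h.switch ε hε
  set B : V → V → ℝ := fun a b => ε a * A a b * ε b with hB
  have hsq : ∀ w, ε w * ε w = 1 := by
    intro w; rcases hε w with e | e <;> rw [e] <;> norm_num
  have hBe : ∀ a, ∑ b, B a b * (ε b * x b) = ρ * (ε a * x a) := by
    intro a
    calc _ = ∑ b, ε a * (A a b * x b) := by
          refine Finset.sum_congr rfl fun b _ => ?_
          calc _ = (ε b * ε b) * (ε a * (A a b * x b)) := by simp only [hB]; ring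
            _ = _ := by rw [hsq, one_mul]
      _ = _ := by rw [← Finset.mul_sum, he]; ring
  have key : ∀ u w, B u w = -1 → ∃ v, B u v = 1 := by
    intro u w huw
    by_contra hno
    push Not at hno
    have hle : ∀ b, B u b ≤ 0 := fun b => hG.le_zero u b (hno b)
    have h1 : ρ * (ε u * x u) ≤ 0 := by
      rw [← hBe]
      exact Finset.sum_nonpos fun b _ => mul_nonpos_of_nonpos_of_nonneg (hle b) (hεx b)
    have h2 : ε u * x u = 0 := by
      have := hεx u
      have h3 : ρ * (ε u * x u) = 0 := le_antisymm h1 (mul_nonneg hρ.le this)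
      exact (mul_eq_zero.mp h3).resolve_left hρ.ne'
    let f : V → ℝ := fun a => 1 - 2 * (if a = u then 1 else 0)
    have hmem : (fun a => ε a * f a) ∈ S := by
      refine (hS _).mpr ⟨?_, ?_⟩
      · intro v
        by_cases hv : v = u
        · simp only [f, hv, if_true]; rcases hε u with e | e <;> rw [e] <;> norm_num
        · simp only [f, hv, if_false]; simpa using hε v
      · intro v
        by_cases hv : v = u
        · subst hv
          have : ε v * f v * x v = f v * (ε v * x v) := by ring
          rw [this, h2, mul_zero]
        · simp only [f, hv, if_false]; simpa using hεx v
    have h4 := hmax _ hmem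
    have h5 : ∑ a, ∑ b, ε a * f a * A a b * (ε b * f b) =
        ∑ a, ∑ b, B a b - 4 * ∑ b, B u b := by
      have hBu : B u u = 0 := by by_contra e; exact hG.bip _ _ e rfl
      have e1 : ∀ a b, ε a * f a * A a b * (ε b * f b) = B a b
          - 2 * ((if a = u then 1 else 0) * B a b) - 2 * ((if b = u then 1 else 0) * B a b)
          + 4 * ((if a = u then 1 else 0) * ((if b = u then 1 else 0) * B a b)) := by
        intro a b; simp only [f, hB]; ring
      simp only [e1, Finset.sum_add_distrib, Finset.sum_sub_distrib, ← Finset.mul_sum]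
      have e2 : ∑ a, (if a = u then (1:ℝ) else 0) * ∑ b, B a b = ∑ b, B u b := by simp
      have e3 : ∑ a, ∑ b, (if b = u then (1:ℝ) else 0) * B a b = ∑ b, B u b := by
        simp [hG.symm u]
      have e4 : ∑ a, (if a = u then (1:ℝ) else 0) * ∑ b, (if b = u then (1:ℝ) else 0) * B a b = 0 := by
        simp [hBu]
      rw [e2, e3, e4]; ring
    have h6 : ∑ b, B u b < 0 := by
      have := Finset.sum_lt_sum (f := fun b => B u b) (g := fun _ => (0:ℝ)) (s := Finset.univ)
        (fun b _ => hle b) ⟨w, Finset.mem_univ w, by rw [huw]; norm_num⟩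
      simpa using this
    change _ ≤ ∑ a, ∑ b, B a b at h4
    change ∑ a, ∑ b, ε a * f a * A a b * (ε b * f b) ≤ _ at h4
    rw [h5] at h4
    linarith
  obtain ⟨u1, v1, h11⟩ := hU ε hε
  obtain ⟨v0, h10⟩ := key u1 v1 h11
  obtain ⟨u0, h01⟩ := key v1 u1 (by rw [hG.symm]; exact h11)
  exact ⟨u1, u0, v1, v0, h11, by rw [hG.symm]; exact h01, h10⟩

lemma sz_ge {c : V → Bool} {A : V → V → ℝ} (h : Good c A) (hU : Unb A) (w : V) :
    3 ≤ sz c w := by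
  classical
  by_contra hlt
  have hle : (Finset.univ.filter fun b => c b = c w).card ≤ 2 := by unfold sz at hlt; omega
  obtain ⟨x1, x2, hx⟩ : ∃ x1 x2, ∀ u, c u = c w → u = x1 ∨ u = x2 := by
    have h1 : w ∈ Finset.univ.filter fun b => c b = c w := by simp
    by_cases h2 : ∃ z, c z = c w ∧ z ≠ w
    · obtain ⟨z, hz, hzw⟩ := h2
      refine ⟨w, z, fun u hu => ?_⟩
      by_contra hh
      push Not at hh
      have : ({u, w, z} : Finset V) ⊆ Finset.univ.filter fun b => c b = c w := by
        intro y hy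
        simp only [Finset.mem_insert, Finset.mem_singleton] at hy
        rcases hy with rfl | rfl | rfl <;> simp [hu, hz]
      have h3 := Finset.card_le_card this
      rw [Finset.card_eq_three.mpr ⟨u, w, z, hh.1, hh.2, hzw.symm, rfl⟩] at h3
      omega
    · push Not at h2
      exact ⟨w, w, fun u hu => Or.inl (h2 u hu)⟩
  let e2 : ℝ := if ∃ y, A x1 y * A x2 y = -1 then -1 else 1
  have he2 : e2 = 1 ∨ e2 = -1 := by
    simp only [e2]; split_ifs <;> simp
  let ε : V → ℝ := fun v => if c v = c w then (if v = x1 then 1 else e2) else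
    (if A x1 v ≠ 0 then A x1 v else if A x2 v ≠ 0 then e2 * A x2 v else 1)
  have hε : ∀ v, ε v = 1 ∨ ε v = -1 := by
    intro v
    simp only [ε]
    split_ifs with h1 h2 h3 h4
    · simp
    · exact he2
    · rcases h.ent x1 v with e | e | e
      · exact absurd e h3
      · exact Or.inl e
      · exact Or.inr e
    · rcases h.ent x2 v with e | e | e
      · exact absurd e h4
      · rcases he2 with e' | e' <;> simp [e, e']
      · rcases he2 with e' | e' <;> simp [e, e']
    · simp
  have hpos : ∀ u v, c u = c w → c v ≠ c w → ε u * A u v * ε v ≠ -1 := by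
    intro u v hu hv
    rcases hx u hu with rfl | rfl
    · have e1 : ε u = 1 := by simp [ε, hu]
      have e3 : A u v ≠ 0 → ε v = A u v := by intro hh; simp [ε, hv, hh]
      rcases h.ent u v with e | e | e
      · rw [e]; norm_num
      · rw [e3 (by rw [e]; norm_num), e, e1]; norm_num
      · rw [e3 (by rw [e]; norm_num), e, e1]; norm_num
    · by_cases h12 : u = x1
      · subst h12
        have e1 : ε u = 1 := by simp [ε, hu]
        have e3 : A u v ≠ 0 → ε v = A u v := by intro hh; simp [ε, hv, hh]
        rcases h.ent u v with e | e | e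
        · rw [e]; norm_num
        · rw [e3 (by rw [e]; norm_num), e, e1]; norm_num
        · rw [e3 (by rw [e]; norm_num), e, e1]; norm_num
      have e1 : ε u = e2 := by simp [ε, hu, h12]
      by_cases hz : A u v = 0
      · rw [hz]; norm_num
      have hsqu : A u v * A u v = 1 := by
        rcases h.ent u v with e | e | e
        · exact absurd e hz
        · rw [e]; norm_num
        · rw [e]; norm_num
      have hsq2 : e2 * e2 = 1 := by rcases he2 with e | e <;> rw [e] <;> norm_num
      by_cases hz1 : A x1 v = 0
      · have e3 : ε v = e2 * A u v := by simp [ε, hv, hz1, hz]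
        rw [e1, e3]
        have : e2 * A u v * (e2 * A u v) = (e2 * e2) * (A u v * A u v) := by ring
        rw [this, hsqu, hsq2]; norm_num
      · have e3 : ε v = A x1 v := by simp [ε, hv, hz1]
        rw [e1, e3]
        by_cases hy : ∃ y, A x1 y * A u y = -1
        · have e4 : e2 = -1 := by simp only [e2]; rw [if_pos hy]
          rw [e4]
          intro hbad
          obtain ⟨y, hy⟩ := hy
          have k : A u v * A x1 v = 1 := by linarith
          have hvy : v ≠ y := by
            rintro rfl; rw [mul_comm] at k; rw [k] at hy; norm_num at hy
          have n1 : A x1 y ≠ 0 := by rintro e; rw [e] at hy; norm_num at hy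
          have hcc : c u = c x1 := h.col (b := v) hz hz1
          refine h.c4 u x1 v y h12 hvy hcc ?_ ?_
          · exact h.col (b := x1) (by rw [h.symm]; exact hz1) (by rw [h.symm]; exact n1)
          · calc _ = (A u v * A x1 v) * (A x1 y * A u y) := by ring
              _ = -1 := by rw [k, hy]; norm_num
        · have e4 : e2 = 1 := by simp only [e2]; rw [if_neg hy]
          rw [e4]
          intro hbad
          exact hy ⟨v, by linarith⟩
  obtain ⟨u, v, huv⟩ := hU ε hε
  have hA : A u v ≠ 0 := by intro e; rw [e] at huv; norm_num at huv
  have hb := h.bip u v hA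
  by_cases hu : c u = c w
  · exact hpos u v hu (fun e => hb (hu.trans e.symm)) huv
  · have hv : c v = c w := by
      revert hb hu; cases c u <;> cases c v <;> cases c w <;> simp
    refine hpos v u hv hu ?_
    rw [h.symm]; linarith

lemma sz_add {c : V → Bool} {u v : V} (h : c u ≠ c v) : sz c u + sz c v = Fintype.card V := by
  classical
  unfold sz
  have : (Finset.univ.filter fun b => c b = c v) = Finset.univ.filter fun b => ¬ c b = c u := by
    ext b
    simp only [Finset.mem_filter, Finset.mem_univ, true_and]
    revert h; cases c b <;> cases c u <;> cases c v <;> simp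
  rw [this, Finset.card_filter_add_card_filter_not]
  rfl

end StarMatrix

/-- the bound -/
noncomputable def bnd (n : ℕ) : ℝ :=
  (if Even n then ((n : ℝ) - 6 + Real.sqrt (((n : ℝ) - 2) * ((n : ℝ) + 6))) / 4
      else Real.sqrt ((((n : ℝ) ^ 2 - 4 * (n : ℝ) + 11) +
        Real.sqrt (((n : ℝ) ^ 2 - 4 * (n : ℝ) + 11) ^ 2 -
          64 * ((n : ℝ) - 2) * ((n : ℝ) - 4))) / 8))

/-- the four properties of the bound with side sizes `M + 2`, `T + 2` -/
structure BndProps (R M T : ℝ) (n : ℕ) : Prop where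
  one : 1 ≤ R
  large : ∀ θ, R < θ →
    0 < (θ ^ 2) ^ 2 - (M * T + M + T + 3) * θ ^ 2 + (1 + 2 * M) * (1 + 2 * T)
  four : 7 ≤ n → 4 < R ^ 2
  vec : ∃ α β : ℝ, (α ≠ 0 ∨ β ≠ 0) ∧ (R^2 - 1 - 2 * M) * α = (M - 1) * R * β ∧
    (R^2 - 1 - 2 * T) * β = (T - 1) * R * α

lemma bnd_even (t : ℕ) (ht : 1 ≤ t) : BndProps (bnd (2 * (t + 2))) t t (2 * (t + 2)) := by
  have he : Even (2 * (t + 2)) := even_two_mul _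
  have ht' : (1:ℝ) ≤ t := by exact_mod_cast ht
  set R := bnd (2 * (t + 2)) with hR
  have hRf : R = (2 * (t:ℝ) - 2 + Real.sqrt ((2 * (t:ℝ) + 2) * (2 * t + 10))) / 4 := by
    rw [hR, bnd, if_pos he]; push_cast; ring_nf
  have hs : Real.sqrt ((2 * (t:ℝ) + 2) * (2 * t + 10)) ^ 2 = (2 * (t:ℝ) + 2) * (2 * t + 10) :=
    Real.sq_sqrt (by positivity)
  have hs0 : 0 < Real.sqrt ((2 * (t:ℝ) + 2) * (2 * t + 10)) := Real.sqrt_pos.mpr (by positivity)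
  set s := Real.sqrt ((2 * (t:ℝ) + 2) * (2 * t + 10))
  have hq : R ^ 2 = (t - 1) * R + (1 + 2 * t) := by
    rw [hRf]; linear_combination hs / 16
  have hR0 : 0 < R := by rw [hRf]; linarith
  have hone : 1 ≤ R := by
    have := mul_nonneg (sub_nonneg.mpr ht') hR0.le
    nlinarith
  have hpos : 0 < R - (t - 1) := by
    have : R * (R - (t - 1)) = 1 + 2 * t := by linarith
    have h2 : 0 < R * (R - (t - 1)) := by rw [this]; linarith
    exact (mul_pos_iff_of_pos_left hR0).mp h2
  refine ⟨hone, ?_, ?_, ?_⟩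
  · intro θ hθ
    have e1 : 0 < θ ^ 2 - (t - 1) * θ - (1 + 2 * t) := by
      have : θ ^ 2 - (t - 1) * θ - (1 + 2 * t) = (θ - R) * (θ + (R - (t - 1))) := by
        linear_combination hq
      rw [this]
      exact mul_pos (by linarith) (by linarith)
    have e2 : 0 < θ ^ 2 + (t - 1) * θ - (1 + 2 * t) := by
      have := mul_nonneg (sub_nonneg.mpr ht') (hR0.trans hθ).le
      linarith
    have := mul_pos e1 e2
    nlinarith
  · intro hn
    have ht2 : (2:ℝ) ≤ t := by
      have : 2 ≤ t := by omega
      exact_mod_cast this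
    have : 2 < R := by
      by_contra hh
      push Not at hh
      nlinarith
    nlinarith
  · exact ⟨1, 1, by norm_num, by linarith, by linarith⟩

lemma bnd_odd (m : ℕ) (hm : 1 ≤ m) :
    BndProps (bnd (2 * (m + 2) + 1)) m (m + 1) (2 * (m + 2) + 1) := by
  have he : ¬ Even (2 * (m + 2) + 1) := by simp
  have hm' : (1:ℝ) ≤ m := by exact_mod_cast hm
  set R := bnd (2 * (m + 2) + 1) with hR
  obtain ⟨e, hedef⟩ : ∃ e : ℝ, e = m ^ 2 + 3 * m + 4 := ⟨_, rfl⟩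
  obtain ⟨K, hK⟩ : ∃ K : ℝ, K = (1 + 2 * m) * (2 * m + 3) := ⟨_, rfl⟩
  have hRf : R = Real.sqrt ((4 * e + Real.sqrt ((4 * e) ^ 2 - 64 * K)) / 8) := by
    rw [hR, bnd, if_neg he, hedef, hK]; push_cast; ring_nf
  have hd : (e - 8) ^ 2 < e ^ 2 - 4 * K := by rw [hK, hedef]; nlinarith
  have hd0 : 0 ≤ (4 * e) ^ 2 - 64 * K := by nlinarith [sq_nonneg (e - 8)]
  have hs : Real.sqrt ((4 * e) ^ 2 - 64 * K) ^ 2 = (4 * e) ^ 2 - 64 * K := Real.sq_sqrt hd0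
  have hs0 : 0 ≤ Real.sqrt ((4 * e) ^ 2 - 64 * K) := Real.sqrt_nonneg _
  set s := Real.sqrt ((4 * e) ^ 2 - 64 * K)
  have he0 : 8 ≤ e := by rw [hedef]; nlinarith
  have hL : R ^ 2 = (4 * e + s) / 8 := by rw [hRf]; exact Real.sq_sqrt (by linarith)
  have hR0 : 0 ≤ R := by rw [hRf]; exact Real.sqrt_nonneg _
  have hq : (R ^ 2) ^ 2 - e * R ^ 2 + K = 0 := by
    rw [hL]; linear_combination hs / 64
  have hsbig : 4 * (8 - e) < s ∧ 0 ≤ s := ⟨by nlinarith, hs0⟩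
  have hL4 : 4 < R ^ 2 := by rw [hL]; linarith [hsbig.1]
  refine ⟨by nlinarith, ?_, fun _ => hL4, ?_⟩
  · intro θ hθ
    have h1 : R ^ 2 < θ ^ 2 := by nlinarith
    have h2 : 0 ≤ 2 * R ^ 2 - e := by rw [hL]; linarith
    have h3 : (θ ^ 2) ^ 2 - e * θ ^ 2 + K = (θ ^ 2 - R ^ 2) * (θ ^ 2 + R ^ 2 - e) := by
      linear_combination hq
    have h4 : 0 < (θ ^ 2 - R ^ 2) * (θ ^ 2 + R ^ 2 - e) := mul_pos (by linarith) (by linarith)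
    rw [← h3, hedef, hK] at h4
    linarith
  · have hβ : 0 < R ^ 2 - 1 - 2 * m := by rw [hL, hedef]; nlinarith
    refine ⟨R * (m - 1), R ^ 2 - 1 - 2 * m, Or.inr hβ.ne', by ring, ?_⟩
    rw [hedef, hK] at hq
    linear_combination hq

lemma bnd_props (n : ℕ) (hn : 6 ≤ n) :
    BndProps (bnd n) (((n / 2 - 2 : ℕ) : ℝ)) (((n - n / 2 - 2 : ℕ) : ℝ)) n := by
  rcases Nat.even_or_odd' n with ⟨k, rfl | rfl⟩
  · obtain ⟨t, rfl⟩ : ∃ t, k = t + 2 := ⟨k - 2, by omega⟩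
    have e1 : 2 * (t + 2) / 2 - 2 = t := by omega
    have e2 : 2 * (t + 2) - 2 * (t + 2) / 2 - 2 = t := by omega
    rw [e1, e2]
    exact bnd_even t (by omega)
  · obtain ⟨t, rfl⟩ : ∃ t, k = t + 2 := ⟨k - 2, by omega⟩
    have e1 : (2 * (t + 2) + 1) / 2 - 2 = t := by omega
    have e2 : 2 * (t + 2) + 1 - (2 * (t + 2) + 1) / 2 - 2 = t + 1 := by omega
    rw [e1, e2]
    push_cast
    exact bnd_odd t (by omega)

lemma poly_compare (n m t : ℕ) (hn : 6 ≤ n) (hm : 1 ≤ m) (ht : 1 ≤ t) (hmt : m + t + 4 = n)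
    (θ : ℝ) (hθ : 0 < θ)
    (hp : (θ ^ 2) ^ 2 - ((m:ℝ) * t + m + t + 3) * θ ^ 2 + (1 + 2 * m) * (1 + 2 * t) = 0) :
    θ ≤ bnd n ∧ (θ = bnd n → (m + 2 = n / 2 ∧ t + 2 = n - n / 2) ∨
      (t + 2 = n / 2 ∧ m + 2 = n - n / 2)) := by
  obtain ⟨h1, h2, h3, -⟩ := bnd_props n hn
  obtain ⟨M, hM⟩ : ∃ M, M = n / 2 - 2 := ⟨_, rfl⟩
  obtain ⟨T, hT⟩ : ∃ T, T = n - n / 2 - 2 := ⟨_, rfl⟩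
  rw [← hM, ← hT] at h2
  have hsum : M + T = m + t := by omega
  have hsumR : (M:ℝ) + T = m + t := by exact_mod_cast hsum
  have hTM : T = M ∨ T = M + 1 := by omega
  by_cases hcase : m = M ∨ m = T
  · have hz : (M:ℝ) * T = m * t := by
      rcases hcase with h | h
      · have : t = T := by omega
        rw [h, this]
      · have : t = M := by omega
        rw [h, this]; ring
    refine ⟨?_, fun _ => by omega⟩
    by_contra hh
    push Not at hh
    have := h2 θ hh
    nlinarith
  · have hz : m * t < M * T := by
      push Not at hcase
      rcases lt_or_gt_of_ne hcase.1 with h | h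
      · obtain ⟨d, hd⟩ : ∃ d, M = m + d + 1 := ⟨M - m - 1, by omega⟩
        have : t = T + d + 1 := by omega
        subst this
        rw [hd] at hTM ⊢
        rcases hTM with h' | h' <;> rw [h'] <;> nlinarith
      · obtain ⟨d, hd⟩ : ∃ d, m = M + d + 1 := ⟨m - M - 1, by omega⟩
        have : T = t + d + 1 := by omega
        have h4 : T < m := by omega
        subst hd
        rw [this] at h4 ⊢
        nlinarith
    have hn7 : 7 ≤ n := by
      by_contra hh
      have : n = 6 := by omega
      subst this
      have : m = 1 := by omega
      omega
    have h4 := h3 hn7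
    have hlt : θ < bnd n := by
      by_contra hh
      push Not at hh
      have h5 : 4 < θ ^ 2 := by nlinarith
      have hzR : (m:ℝ) * t < M * T := by exact_mod_cast hz
      have h6 : (θ ^ 2) ^ 2 - ((M:ℝ) * T + M + T + 3) * θ ^ 2 + (1 + 2 * M) * (1 + 2 * T) < 0 := by
        have : (θ ^ 2) ^ 2 - ((M:ℝ) * T + M + T + 3) * θ ^ 2 + (1 + 2 * M) * (1 + 2 * T) =
            -((M:ℝ) * T - m * t) * (θ ^ 2 - 4) := by
          linear_combination hp + (2 - θ ^ 2) * hsumR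
        rw [this]
        nlinarith [mul_pos (sub_pos.mpr hzR) (sub_pos.mpr h5)]
      rcases hh.lt_or_eq with h7 | h7
      · linarith [h2 θ h7]
      · -- a slightly larger value still violates positivity
        have hc : Continuous (fun y : ℝ => (y ^ 2) ^ 2 - ((M:ℝ) * T + M + T + 3) * y ^ 2 +
            (1 + 2 * M) * (1 + 2 * T)) := by fun_prop
        have hev : ∀ᶠ y in nhds θ, (y ^ 2) ^ 2 - ((M:ℝ) * T + M + T + 3) * y ^ 2 +
            (1 + 2 * M) * (1 + 2 * T) < 0 := hc.continuousAt.eventually_lt continuousAt_const h6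
        have hev2 := (hev.filter_mono (nhdsWithin_le_nhds (s := Set.Ioi θ))).and
          self_mem_nhdsWithin
        obtain ⟨y, hy1, hy2⟩ := hev2.exists
        have := h2 y (by rw [h7]; exact hy2)
        linarith
    exact ⟨hlt.le, fun e => absurd e hlt.ne⟩

section Main

variable {V : Type*} [Fintype V] [DecidableEq V]

lemma main_bound [Nonempty V] {c : V → Bool} {A : V → V → ℝ} (h : Good c A) (hU : Unb A)
    (n : ℕ) (hn : 6 ≤ n) (hcard : Fintype.card V = n) (x : V → ℝ) (hx0 : x ≠ 0)
    (ρ : ℝ) (hρ : 1 ≤ ρ) (he : ∀ a, ∑ b, A a b * x b = ρ * x a) :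
    ρ ≤ bnd n ∧ (ρ = bnd n → ∃ (ε : V → ℝ) (u1 u0 v1 v0 : V), (∀ v, ε v = 1 ∨ ε v = -1) ∧
      Cfg c u1 u0 v1 v0 ∧ sz c u1 = n / 2 ∧ sz c v1 = n - n / 2 ∧
      ∀ a b, ε a * A a b * ε b = starMat c u1 u0 v1 v0 a b) := by
  have hρ0 : 0 < ρ := by linarith
  obtain ⟨ε, hε, hεx, u1, u0, v1, v0, hnb⟩ := exists_switch h hU x ρ hρ0 he
  have hG := h.switch ε hε
  have hsq : ∀ w, ε w * ε w = 1 := by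
    intro w; rcases hε w with e | e <;> rw [e] <;> norm_num
  have hBe : ∀ a, ∑ b, (ε a * A a b * ε b) * (ε b * x b) = ρ * (ε a * x a) := by
    intro a
    calc _ = ∑ b, ε a * (A a b * x b) := by
          refine Finset.sum_congr rfl fun b _ => ?_
          calc _ = (ε b * ε b) * (ε a * (A a b * x b)) := by ring
            _ = _ := by rw [hsq, one_mul]
      _ = _ := by rw [← Finset.mul_sum, he]; ring
  have hc := hnb.cfg hG
  have hz0 : (fun v => ε v * x v) ≠ 0 := by
    intro hz
    apply hx0
    funext v
    have h1 : ε v * x v = 0 := congrFun hz v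
    calc x v = (ε v * ε v) * x v := by rw [hsq, one_mul]
      _ = ε v * (ε v * x v) := by ring
      _ = 0 := by rw [h1, mul_zero]
  have hpos2 : 0 < ∑ v, (ε v * x v) ^ 2 := by
    obtain ⟨v, hv⟩ := Function.ne_iff.mp hz0
    exact Finset.sum_pos' (fun a _ => sq_nonneg _) ⟨v, Finset.mem_univ v, by
      have hv' : ε v * x v ≠ 0 := hv
      positivity⟩
  obtain ⟨θ, y, hy0, hye, hform, heq⟩ := max_form (starMat c u1 u0 v1 v0)
    (starMat_symm c u1 u0 v1 v0)
  have hf := form_le hG hnb (fun v => ε v * x v) hεx ρ hρ hBe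
  have hf1 : ∑ a, ∑ b, (ε a * A a b * ε b) * (ε a * x a) * (ε b * x b) =
      ρ * ∑ v, (ε v * x v) ^ 2 := by
    rw [Finset.mul_sum]
    refine Finset.sum_congr rfl fun a _ => ?_
    have : ∑ b, (ε a * A a b * ε b) * (ε a * x a) * (ε b * x b) =
        (ε a * x a) * ∑ b, (ε a * A a b * ε b) * (ε b * x b) := by
      rw [Finset.mul_sum]; refine Finset.sum_congr rfl fun b _ => ?_; ring
    rw [this, hBe]; ring
  have hf2 := hform (fun v => ε v * x v)
  have hρθ : ρ ≤ θ := by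
    refine le_of_mul_le_mul_right ?_ hpos2
    rw [← hf1]; exact hf.trans hf2
  have hθ0 : 0 < θ := by linarith
  have hr := sz_ge hG (w := u1) (by
    intro δ hδ
    obtain ⟨u, v, huv⟩ := hU (fun v => δ v * ε v) (by
      intro v; rcases hε v with e | e <;> rcases hδ v with e' | e' <;> simp [e, e'])
    exact ⟨u, v, by rw [← huv]; ring⟩)
  have hs := sz_ge hG (w := v1) (by
    intro δ hδ
    obtain ⟨u, v, huv⟩ := hU (fun v => δ v * ε v) (by
      intro v; rcases hε v with e | e <;> rcases hδ v with e' | e' <;> simp [e, e'])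
    exact ⟨u, v, by rw [← huv]; ring⟩)
  have hadd := sz_add hc.cuv
  obtain ⟨m, hm⟩ : ∃ m, sz c u1 = m + 2 := ⟨sz c u1 - 2, by omega⟩
  obtain ⟨t, ht⟩ : ∃ t, sz c v1 = t + 2 := ⟨sz c v1 - 2, by omega⟩
  have hpoly := eig_poly hc y θ hθ0.ne' hye hy0 m t (by rw [hm]; push_cast; ring)
    (by rw [ht]; push_cast; ring)
  obtain ⟨hle, heqc⟩ := poly_compare n m t hn (by omega) (by omega) (by omega) θ hθ0 hpoly
  refine ⟨hρθ.trans hle, fun hρb => ?_⟩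
  have hθρ : θ = ρ := le_antisymm (by rw [hρb]; exact hle) hρθ
  have hst := heq (fun v => ε v * x v) (le_antisymm hf2 (by
    rw [hθρ, ← hf1]; exact hf))
  rw [hθρ] at hst
  have hfin := eq_case hG hnb (fun v => ε v * x v) hεx hz0 ρ hρ hBe hst
  rcases heqc (hθρ.trans hρb) with ⟨k1, k2⟩ | ⟨k1, k2⟩
  · exact ⟨ε, u1, u0, v1, v0, hε, hc, by omega, by omega, hfin⟩
  · refine ⟨ε, v1, v0, u1, u0, hε, hc.swap, by omega, by omega, fun a b => ?_⟩
    rw [starMat_swap hc]; exact hfin a b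

lemma fin_equiv {X : Type*} [Fintype X] [DecidableEq X] (r : ℕ) (hr : Fintype.card X = r)
    (p q : X) (hpq : p ≠ q) : ∃ e : X ≃ Fin r, ((e p : ℕ) = 0) ∧ (e q : ℕ) = r - 1 := by
  have h2 : 1 < r := by rw [← hr]; exact Fintype.one_lt_card_iff.mpr ⟨p, q, hpq⟩
  let e0 : X ≃ Fin r := Fintype.equivFinOfCardEq hr
  let z : Fin r := ⟨0, by omega⟩
  let l : Fin r := ⟨r - 1, by omega⟩
  let e1 : X ≃ Fin r := (Equiv.swap p (e0.symm z)).trans e0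
  have h1 : e1 p = z := by simp [e1]
  refine ⟨(Equiv.swap q (e1.symm l)).trans e1, ?_, ?_⟩
  · have hne : p ≠ e1.symm l := by
      intro hh
      have : e1 p = l := by rw [hh]; simp
      rw [h1] at this
      have := congrArg Fin.val this
      simp [z, l] at this; omega
    rw [Equiv.trans_apply, Equiv.swap_apply_of_ne_of_ne hpq hne, h1]
  · simp [l]

lemma star_iso {c : V → Bool} {u1 u0 v1 v0 : V} (h : Cfg c u1 u0 v1 v0) (r s : ℕ)
    (hr : sz c u1 = r) (hs : sz c v1 = s) :
    ∃ e : V ≃ Fin r ⊕ Fin s, ∀ a b, starMat c u1 u0 v1 v0 a b = gammaMatrix r s (e a) (e b) := by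
  have hnot : ∀ b, ¬ c b = c u1 ↔ c b = c v1 := by
    intro b
    have := h.cuv
    revert this; cases c b <;> cases c u1 <;> cases c v1 <;> simp
  obtain ⟨eX, hX0, hX1⟩ := fin_equiv (X := {a // c a = c u1}) r
    (by rw [Fintype.card_subtype]; exact hr) ⟨u0, h.cu⟩ ⟨u1, rfl⟩ (by simpa using h.hu)
  obtain ⟨eY, hY0, hY1⟩ := fin_equiv (X := {a // ¬ c a = c u1}) s
    (by rw [Fintype.card_subtype, ← hs]; unfold sz; congr 1; ext b; simp [hnot])
    ⟨v0, (hnot _).mpr h.cv⟩ ⟨v1, (hnot _).mpr rfl⟩ (by simpa using h.hv)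
  let e : V ≃ Fin r ⊕ Fin s :=
    (Equiv.sumCompl (fun a => c a = c u1)).symm.trans (Equiv.sumCongr eX eY)
  have eL : ∀ a (ha : c a = c u1), e a = Sum.inl (eX ⟨a, ha⟩) := by
    intro a ha; exact ((Equiv.symm_apply_eq e).mp (by simp [e])).symm
  have eR : ∀ a (ha : ¬ c a = c u1), e a = Sum.inr (eY ⟨a, ha⟩) := by
    intro a ha; exact ((Equiv.symm_apply_eq e).mp (by simp [e])).symm
  have x0 : ∀ a (ha : c a = c u1), ((eX ⟨a, ha⟩ : Fin r) : ℕ) = 0 ↔ a = u0 := by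
    intro a ha; rw [← hX0, ← Fin.ext_iff, eX.injective.eq_iff]; simp
  have x1 : ∀ a (ha : c a = c u1), ((eX ⟨a, ha⟩ : Fin r) : ℕ) = r - 1 ↔ a = u1 := by
    intro a ha; rw [← hX1, ← Fin.ext_iff, eX.injective.eq_iff]; simp
  have y0 : ∀ a (ha : ¬ c a = c u1), ((eY ⟨a, ha⟩ : Fin s) : ℕ) = 0 ↔ a = v0 := by
    intro a ha; rw [← hY0, ← Fin.ext_iff, eY.injective.eq_iff]; simp
  have y1 : ∀ a (ha : ¬ c a = c u1), ((eY ⟨a, ha⟩ : Fin s) : ℕ) = s - 1 ↔ a = v1 := by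
    intro a ha; rw [← hY1, ← Fin.ext_iff, eY.injective.eq_iff]; simp
  have hG : ∀ a b (ha : c a = c u1) (hb : ¬ c b = c u1),
      gammaSign r s (eX ⟨a, ha⟩) (eY ⟨b, hb⟩) = starEnt u1 u0 v1 v0 a b := by
    intro a b ha hb
    simp only [gammaSign, starEnt, x0, x1, y0, y1]
  refine ⟨e, fun a b => ?_⟩
  by_cases ha : c a = c u1 <;> by_cases hb : c b = c u1
  · rw [eL a ha, eL b hb]; simp [gammaMatrix, starMat, ha, hb]
  · rw [eL a ha, eR b hb]
    have : c a ≠ c b := fun e => hb (e ▸ ha)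
    simp only [gammaMatrix, Matrix.of_apply, hG, starMat, if_neg this, if_pos ha]
  · rw [eR a ha, eL b hb]
    have : c a ≠ c b := fun e => ha (e.trans hb)
    simp only [gammaMatrix, Matrix.of_apply, hG, starMat, if_neg this, if_neg ha]
  · rw [eR a ha, eR b hb]
    have : c a = c b := by rw [(hnot a).mp ha, (hnot b).mp hb]
    simp [gammaMatrix, starMat, this]

lemma gamma_eig (n : ℕ) (hn : 6 ≤ n) : ∃ w : Fin (n / 2) ⊕ Fin (n - n / 2) → ℝ, w ≠ 0 ∧
    ∀ a, ∑ b, gammaMatrix (n / 2) (n - n / 2) a b * w b = bnd n * w a := by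
  obtain ⟨-, -, -, α, β, hne, k1, k2⟩ := bnd_props n hn
  obtain ⟨r, hr⟩ : ∃ r, r = n / 2 := ⟨_, rfl⟩
  obtain ⟨s, hs⟩ : ∃ s, s = n - n / 2 := ⟨_, rfl⟩
  rw [← hr] at k1; rw [← hs] at k2
  rw [← hs, ← hr]
  have hr3 : 3 ≤ r := by omega
  have hs3 : 3 ≤ s := by omega
  let c : Fin r ⊕ Fin s → Bool := Sum.isLeft
  have hcfg : Cfg c (Sum.inl ⟨r - 1, by omega⟩) (Sum.inl ⟨0, by omega⟩)
      (Sum.inr ⟨s - 1, by omega⟩) (Sum.inr ⟨0, by omega⟩) := by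
    refine ⟨rfl, rfl, by simp [c], ?_, ?_⟩
    · simp; omega
    · simp; omega
  have c1 : sz c (Sum.inl ⟨r - 1, by omega⟩) = r := by
    unfold sz
    have : (Finset.univ.filter fun b : Fin r ⊕ Fin s => c b = c (Sum.inl ⟨r - 1, by omega⟩)) =
        Finset.univ.map ⟨Sum.inl, Sum.inl_injective⟩ := by
      ext b; rw [Finset.mem_filter]; cases b <;> simp [c]
    rw [this]; simp
  have c2 : sz c (Sum.inr ⟨s - 1, by omega⟩) = s := by
    unfold sz
    have : (Finset.univ.filter fun b : Fin r ⊕ Fin s => c b = c (Sum.inr ⟨s - 1, by omega⟩)) =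
        Finset.univ.map ⟨Sum.inr, Sum.inr_injective⟩ := by
      ext b; rw [Finset.mem_filter]; cases b <;> simp [c]
    rw [this]; simp
  obtain ⟨x, hx0, hx⟩ := eig_exists hcfg (bnd n) ((r - 2 : ℕ) : ℝ) ((s - 2 : ℕ) : ℝ)
    (by rw [c1, Nat.cast_sub (by omega : 2 ≤ r)]; push_cast; ring)
    (by rw [c2, Nat.cast_sub (by omega : 2 ≤ s)]; push_cast; ring)
    α β hne k1 k2
  obtain ⟨e, hee⟩ := star_iso hcfg r s c1 c2
  refine ⟨fun v => x (e.symm v), ?_, ?_⟩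
  · intro h
    apply hx0
    funext v
    have := congrFun h (e v)
    simpa using this
  · intro a
    rw [← hx, ← Equiv.sum_comp e]
    refine Finset.sum_congr rfl fun b _ => ?_
    rw [hee]; simp

end Main

section Glue

variable {V : Type*}

lemma SignedGraph.adj_of_ne (Γ : SignedGraph V) {u v : V} (h : Γ.sign u v ≠ 0) : Γ.G.Adj u v := by
  by_contra hh
  exact h (Γ.sign_nonedge u v hh)

lemma SignedGraph.good (Γ : SignedGraph V) (c : V → Bool)
    (hc : ∀ u v, Γ.G.Adj u v → c u ≠ c v)
    (hC4 : ∀ (u : V) (w : Γ.G.Walk u u), Γ.IsNegCycle w → w.length ≠ 4) :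
    Good c Γ.sign := by
  refine ⟨Γ.sign_symm, ?_, ?_, ?_⟩
  · intro a b
    by_cases h : Γ.G.Adj a b
    · exact Or.inr (Γ.sign_edge a b h)
    · exact Or.inl (Γ.sign_nonedge a b h)
  · intro a b h
    exact hc a b (Γ.adj_of_ne h)
  · intro u u' v v' huu hvv _ _ hp
    have n1 : Γ.sign u v ≠ 0 := by intro e; rw [e] at hp; norm_num at hp
    have n2 : Γ.sign u' v ≠ 0 := by intro e; rw [e] at hp; norm_num at hp
    have n3 : Γ.sign u v' ≠ 0 := by intro e; rw [e] at hp; norm_num at hp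
    have n4 : Γ.sign u' v' ≠ 0 := by intro e; rw [e] at hp; norm_num at hp
    have a1 := Γ.adj_of_ne n1
    have a2 := (Γ.adj_of_ne n2).symm
    have a3 := (Γ.adj_of_ne n3).symm
    have a4 := Γ.adj_of_ne n4
    let w : Γ.G.Walk u u := .cons a1 (.cons a2 (.cons a4 (.cons a3 .nil)))
    refine hC4 u w ⟨?_, ?_⟩ rfl
    · have h1 := a1.ne
      have h2 := a2.ne
      have h3 := a3.ne
      have h4 := a4.ne
      rw [SimpleGraph.Walk.cons_isCycle_iff]
      constructor
      · simp only [SimpleGraph.Walk.isPath_def, SimpleGraph.Walk.support_cons,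
          SimpleGraph.Walk.support_nil, List.nodup_cons, List.mem_cons, List.not_mem_nil,
          List.nodup_nil]
        grind
      · simp only [SimpleGraph.Walk.edges_cons, SimpleGraph.Walk.edges_nil, List.mem_cons,
          List.not_mem_nil, Sym2.eq_iff]
        grind
    · simp only [w, SimpleGraph.Walk.edges_cons, SimpleGraph.Walk.edges_nil, List.map_cons,
        List.map_nil, List.prod_cons, List.prod_nil, SignedGraph.edgeSign, Sym2.lift_mk]
      rw [Γ.sign_symm v u', Γ.sign_symm v' u]
      linarith

lemma SignedGraph.unb (Γ : SignedGraph V) (hU : Γ.Unbalanced) : Unb Γ.sign := by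
  intro ε hε
  by_contra hno
  push Not at hno
  have hsq : ∀ w, ε w * ε w = 1 := by
    intro w; rcases hε w with e | e <;> rw [e] <;> norm_num
  have hs : ∀ u v, Γ.G.Adj u v → Γ.sign u v = ε u * ε v := by
    intro u v h
    have h1 := hno u v
    rcases Γ.sign_edge u v h with e | e <;> rcases hε u with e1 | e1 <;>
      rcases hε v with e2 | e2 <;> rw [e, e1, e2] at h1 <;> rw [e, e1, e2] <;>
      first | (norm_num; done) | exact absurd (by norm_num) h1
  have hw : ∀ (u v : V) (w : Γ.G.Walk u v), (w.edges.map Γ.edgeSign).prod = ε u * ε v := by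
    intro u v w
    induction w with
    | nil => simp [hsq]
    | @cons a b d h p ih =>
      rw [SimpleGraph.Walk.edges_cons, List.map_cons, List.prod_cons, ih]
      have : Γ.edgeSign s(a, b) = ε a * ε b := hs a b h
      rw [this]
      calc _ = (ε b * ε b) * (ε a * ε d) := by ring
        _ = _ := by rw [hsq, one_mul]
  obtain ⟨u, w, -, hneg⟩ := hU
  rw [hw, hsq] at hneg
  norm_num at hneg

variable [Fintype V] [DecidableEq V]

lemma SignedGraph.exists_eigvec (Γ : SignedGraph V) (hA : Γ.adjMatrix.IsHermitian) (i : V)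
    (c : V → Bool) (hc : ∀ u v, Γ.G.Adj u v → c u ≠ c v) :
    ∃ x : V → ℝ, x ≠ 0 ∧ ∀ a, ∑ b, Γ.sign a b * x b = |hA.eigenvalues i| * x a := by
  obtain ⟨y, hy0, hy⟩ : ∃ y : V → ℝ, y ≠ 0 ∧
      ∀ a, ∑ b, Γ.sign a b * y b = hA.eigenvalues i * y a := by
    refine ⟨fun v => hA.eigenvectorBasis i v, ?_, ?_⟩
    · intro h
      apply hA.eigenvectorBasis.orthonormal.ne_zero i
      ext v
      exact congrFun h v
    · intro a
      have := congrFun (hA.mulVec_eigenvectorBasis i) a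
      simpa [Matrix.mulVec, dotProduct, SignedGraph.adjMatrix] using this
  rcases abs_cases (hA.eigenvalues i) with ⟨e, -⟩ | ⟨e, -⟩
  · rw [e]; exact ⟨y, hy0, hy⟩
  · rw [e]
    let δ : V → ℝ := fun v => if c v then 1 else -1
    have hδ : ∀ v, δ v * δ v = 1 := by
      intro v; simp only [δ]; split_ifs <;> norm_num
    refine ⟨fun v => δ v * y v, ?_, ?_⟩
    · intro h
      apply hy0
      funext v
      have h1 : δ v * y v = 0 := congrFun h v
      calc y v = (δ v * δ v) * y v := by rw [hδ, one_mul]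
        _ = δ v * (δ v * y v) := by ring
        _ = 0 := by rw [h1, mul_zero]
    · intro a
      have h1 : ∀ b, Γ.sign a b * (δ b * y b) = -δ a * (Γ.sign a b * y b) := by
        intro b
        by_cases h : Γ.G.Adj a b
        · have h2 : δ b = -δ a := by
            have := hc a b h
            simp only [δ]
            revert this
            cases c a <;> cases c b <;> simp
          rw [h2]; ring
        · rw [Γ.sign_nonedge a b h]; ring
      simp only [h1, ← Finset.mul_sum, hy]
      ring

lemma SignedGraph.eig_mem (Γ : SignedGraph V) (hA : Γ.adjMatrix.IsHermitian)
    (x : V → ℝ) (hx0 : x ≠ 0) (t : ℝ) (hx : ∀ a, ∑ b, Γ.sign a b * x b = t * x a) :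
    ∃ i, hA.eigenvalues i = t := by
  have h1 : Module.End.HasEigenvalue (Matrix.toLin' Γ.adjMatrix) t := by
    refine Module.End.hasEigenvalue_of_hasEigenvector (x := x) ⟨?_, hx0⟩
    rw [Module.End.mem_eigenspace_iff]
    funext a
    simpa [Matrix.mulVec, dotProduct, SignedGraph.adjMatrix] using hx a
  have h2 := h1.mem_spectrum
  rw [Matrix.spectrum_toLin', hA.spectrum_real_eq_range_eigenvalues] at h2
  exact h2

end Glue

/-- Spectral Turán theorem by order: an unbalanced signed bipartite graph of order
`n ≥ 6` with no negative 4-cycle has spectral radius at most the stated bound, with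
equality iff it is switching isomorphic to `Γ_{⌊n/2⌋, ⌈n/2⌉}`. -/
theorem spectral_turan_order {V : Type*} [Fintype V] [DecidableEq V] [Nonempty V]
    (Γ : SignedGraph V) (n : ℕ) (hn : 6 ≤ n) (hcard : Fintype.card V = n)
    (c : V → Bool) (hc : ∀ u v, Γ.G.Adj u v → c u ≠ c v)
    (hU : Γ.Unbalanced)
    (hC4 : ∀ (u : V) (w : Γ.G.Walk u u), Γ.IsNegCycle w → w.length ≠ 4)
    (hA : Γ.adjMatrix.IsHermitian) :
    Finset.univ.sup' Finset.univ_nonempty (fun i => |hA.eigenvalues i|) ≤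
      (if Even n then ((n : ℝ) - 6 + Real.sqrt (((n : ℝ) - 2) * ((n : ℝ) + 6))) / 4
      else Real.sqrt ((((n : ℝ) ^ 2 - 4 * (n : ℝ) + 11) +
        Real.sqrt (((n : ℝ) ^ 2 - 4 * (n : ℝ) + 11) ^ 2 -
          64 * ((n : ℝ) - 2) * ((n : ℝ) - 4))) / 8)) ∧
    (Finset.univ.sup' Finset.univ_nonempty (fun i => |hA.eigenvalues i|) =
      (if Even n then ((n : ℝ) - 6 + Real.sqrt (((n : ℝ) - 2) * ((n : ℝ) + 6))) / 4
      else Real.sqrt ((((n : ℝ) ^ 2 - 4 * (n : ℝ) + 11) +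
        Real.sqrt (((n : ℝ) ^ 2 - 4 * (n : ℝ) + 11) ^ 2 -
          64 * ((n : ℝ) - 2) * ((n : ℝ) - 4))) / 8)) ↔
      ∃ (e : V ≃ (Fin (n / 2) ⊕ Fin (n - n / 2))) (ε : V → ℝ),
        (∀ v, ε v = 1 ∨ ε v = -1) ∧
        ∀ a b, Γ.sign a b = ε a * gammaMatrix (n / 2) (n - n / 2) (e a) (e b) * ε b) := by
  have hG := Γ.good c hc hC4
  have hUnb := Γ.unb hU
  change _ ≤ bnd n ∧ (_ = bnd n ↔ _)
  obtain ⟨i, -, hi⟩ := Finset.exists_mem_eq_sup' (Finset.univ_nonempty (α := V))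
    (fun i => |hA.eigenvalues i|)
  obtain ⟨x, hx0, hx⟩ := Γ.exists_eigvec hA i c hc
  have hone : 1 ≤ bnd n := (bnd_props n hn).one
  have hmain : |hA.eigenvalues i| ≤ bnd n ∧ (|hA.eigenvalues i| = bnd n →
      ∃ (ε : V → ℝ) (u1 u0 v1 v0 : V), (∀ v, ε v = 1 ∨ ε v = -1) ∧
      Cfg c u1 u0 v1 v0 ∧ sz c u1 = n / 2 ∧ sz c v1 = n - n / 2 ∧
      ∀ a b, ε a * Γ.sign a b * ε b = starMat c u1 u0 v1 v0 a b) := by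
    by_cases h1 : 1 ≤ |hA.eigenvalues i|
    · exact main_bound hG hUnb n hn hcard x hx0 _ h1 hx
    · push Not at h1
      exact ⟨by linarith, fun h => by linarith⟩
  have hle : Finset.univ.sup' Finset.univ_nonempty (fun i => |hA.eigenvalues i|) ≤ bnd n := by
    rw [hi]; exact hmain.1
  refine ⟨hle, ?_, ?_⟩
  · intro h
    rw [hi] at h
    obtain ⟨ε, u1, u0, v1, v0, hε, hcfg, hr, hs, hst⟩ := hmain.2 h
    obtain ⟨e, he⟩ := star_iso hcfg _ _ hr hs
    have hsq : ∀ w, ε w * ε w = 1 := by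
      intro w; rcases hε w with e | e <;> rw [e] <;> norm_num
    refine ⟨e, ε, hε, fun a b => ?_⟩
    rw [← he, ← hst]
    calc Γ.sign a b = (ε a * ε a) * (ε b * ε b) * Γ.sign a b := by rw [hsq, hsq]; ring
      _ = _ := by ring
  · rintro ⟨e, ε, hε, hs⟩
    have hsq : ∀ w, ε w * ε w = 1 := by
      intro w; rcases hε w with e | e <;> rw [e] <;> norm_num
    obtain ⟨w, hw0, hw⟩ := gamma_eig n hn
    obtain ⟨j, hj⟩ := Γ.eig_mem hA (fun v => ε v * w (e v)) (by
      intro h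
      apply hw0
      funext z
      have h1 : ε (e.symm z) * w (e (e.symm z)) = 0 := congrFun h (e.symm z)
      rw [e.apply_symm_apply] at h1
      calc w z = (ε (e.symm z) * ε (e.symm z)) * w z := by rw [hsq, one_mul]
        _ = ε (e.symm z) * (ε (e.symm z) * w z) := by ring
        _ = 0 := by rw [h1, mul_zero]) (bnd n) (by
      intro a
      have h1 : ∀ b, Γ.sign a b * (ε b * w (e b)) =
          ε a * (gammaMatrix (n / 2) (n - n / 2) (e a) (e b) * w (e b)) := by
        intro b
        rw [hs a b]
        calc _ = (ε b * ε b) * (ε a *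
              (gammaMatrix (n / 2) (n - n / 2) (e a) (e b) * w (e b))) := by ring
          _ = _ := by rw [hsq, one_mul]
      simp only [h1, ← Finset.mul_sum]
      rw [Equiv.sum_comp e (fun b => gammaMatrix (n / 2) (n - n / 2) (e a) b * w b), hw]
      ring)
    refine le_antisymm hle ?_
    calc bnd n = |hA.eigenvalues j| := by rw [hj, abs_of_nonneg (by linarith)]
      _ ≤ _ := Finset.le_sup' (fun i => |hA.eigenvalues i|) (Finset.mem_univ j)
end
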